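/- arXiv:math/0702033 — 4 statements merged into one kernel-verified Lean document; each statement's English description precedes it below -/
import Mathlib

section
/- The operator 𝓛 has exactly one negative eigenvalue, and it is simple: there exists a unique ξ_d < 0 for which the problem −φ'' − 5(1 + R²/3)^{−2} φ = ξ_d φ on (0,∞), φ(0) = 0, φ ∈ L²(0,∞), admits a nonzero solution; the space of such solutions is one-dimensional, spanned by a smooth function φ_d which is strictly positive on (0,∞) and decays exponentially, i.e. |φ_d(R)| ≤ C e^{−√|ξ_d| R/2} for all R ≥ 0. For every other ξ < 0 with ξ ≠ ξ_d, the only solution of −φ'' − 5(1+R²/3)^{−2} φ = ξ φ with φ(0) = 0 and φ ∈ L²(0,∞) is φ ≡ 0. -/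
noncomputable section

namespace NegativeEigenvalue

/-- `φ` is a Dirichlet eigenfunction of `𝓛 f = -f'' - 5(1+R²/3)^{-2} f` on `(0,∞)` with
eigenvalue `ξ`: it vanishes at `0`, is continuous on `[0,∞)`, twice differentiable on `(0,∞)`,
solves the eigenvalue equation there, and is square integrable on `(0,∞)`. -/
def IsDirichletEigenfunction (ξ : ℝ) (φ : ℝ → ℝ) : Prop :=
  φ 0 = 0 ∧ ContinuousOn φ (Set.Ici 0) ∧
  (∀ R ∈ Set.Ioi (0 : ℝ), HasDerivAt φ (deriv φ R) R) ∧
  (∀ R ∈ Set.Ioi (0 : ℝ), HasDerivAt (deriv φ) (deriv (deriv φ) R) R) ∧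
  (∀ R ∈ Set.Ioi (0 : ℝ),
    - deriv (deriv φ) R - (5 / (1 + R ^ 2 / 3) ^ 2) * φ R = ξ * φ R) ∧
  MeasureTheory.IntegrableOn (fun R => (φ R) ^ 2) (Set.Ioi 0)


def pot (R : ℝ) : ℝ := 5 / (1 + R ^ 2 / 3) ^ 2

structure Sol (κ : ℝ) (u v : ℝ → ℝ) : Prop where
  du : ∀ t, HasDerivAt u (v t) t
  dv : ∀ t, HasDerivAt v ((κ - pot t) * u t) t

lemma one_add_pos (R : ℝ) : 0 < 1 + R ^ 2 / 3 := by positivity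

lemma pot_pos (R : ℝ) : 0 < pot R := by unfold pot; positivity

lemma pot_le (R : ℝ) : pot R ≤ 5 := by
  unfold pot
  rw [div_le_iff₀ (by positivity)]
  nlinarith [sq_nonneg R, sq_nonneg (R ^ 2)]

lemma pot_le_inv {R : ℝ} (hR : 1 ≤ R) : pot R ≤ 45 / R := by
  unfold pot
  rw [div_le_div_iff₀ (by positivity) (by positivity)]
  nlinarith [sq_nonneg R, sq_nonneg (R ^ 2), mul_nonneg (by linarith : 0 ≤ R - 1) (by linarith : 0 ≤ R - 1),
    pow_le_pow_left₀ (by norm_num) hR 3, mul_nonneg (by linarith : 0 ≤ R - 1) (by positivity : 0 ≤ R^3)]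

lemma pot_contDiff : ContDiff ℝ (⊤ : ℕ∞) pot := by
  unfold pot
  apply ContDiff.div contDiff_const (by fun_prop)
  intro x; have := one_add_pos x; positivity

lemma pot_cont : Continuous pot := pot_contDiff.continuous

/-- vector field -/
def fld (κ t : ℝ) (x : ℝ × ℝ) : ℝ × ℝ := (x.2, (κ - pot t) * x.1)

lemma fld_bound (κ t : ℝ) (x y : ℝ × ℝ) : ‖fld κ t x - fld κ t y‖ ≤ (|κ| + 6) * ‖x - y‖ := by
  have h1 := norm_fst_le (x - y)
  have h2 := norm_snd_le (x - y)
  have hk : |κ - pot t| ≤ |κ| + 6 := by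
    have := abs_sub κ (pot t)
    rw [abs_of_pos (pot_pos t)] at this
    linarith [pot_le t]
  have hn := norm_nonneg (x - y)
  have hk0 := abs_nonneg κ
  unfold fld
  rw [Prod.norm_def]
  apply max_le
  · simp only [Prod.fst_sub]
    have : ‖x.2 - y.2‖ ≤ ‖x - y‖ := h2
    nlinarith
  · simp only [Prod.snd_sub]
    rw [← mul_sub, norm_mul]
    have h3 : ‖x.1 - y.1‖ ≤ ‖x - y‖ := h1
    rw [Real.norm_eq_abs (κ - pot t)]
    exact mul_le_mul hk h3 (norm_nonneg _) (by positivity)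

lemma fld_cont (κ : ℝ) {y : ℝ → ℝ × ℝ} (hy : Continuous y) : Continuous (fun t => fld κ t (y t)) := by
  unfold fld
  have := pot_cont
  fun_prop

open BoundedContinuousFunction in
lemma exists_sol (κ a b : ℝ) : ∃ u v : ℝ → ℝ, Sol κ u v ∧ u 0 = a ∧ v 0 = b := by
  set M := |κ| + 6 with hM
  have hMpos : 0 < M := by positivity
  set l := 2 * M with hl
  have hlpos : 0 < l := by positivity
  set c : ℝ → ℝ := fun t => Real.cosh (l * t) with hc
  have hcpos : ∀ t, 0 < c t := fun t => Real.cosh_pos _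
  have hc1 : ∀ t, 1 ≤ c t := fun t => Real.one_le_cosh _
  have hcc : Continuous c := by rw [hc]; fun_prop
  have hcint : ∀ t, |∫ s in (0:ℝ)..t, c s| ≤ c t / l := by
    intro t
    have hI : ∫ s in (0:ℝ)..t, c s = Real.sinh (l * t) / l := by
      have : ∀ x ∈ Set.uIcc 0 t, HasDerivAt (fun s => Real.sinh (l * s) / l) (c x) x := by
        intro x _
        have := (((hasDerivAt_id x).const_mul l).sinh).div_const l
        convert! this using 1
        simp [hc]; field_simp
      rw [intervalIntegral.integral_eq_sub_of_hasDerivAt this (hcc.intervalIntegrable _ _)]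
      simp
    rw [hI, abs_div, abs_of_pos hlpos]
    gcongr
    have h := Real.cosh_sq (l * t)
    have h2 := hcpos t
    show |Real.sinh (l*t)| ≤ Real.cosh (l * t)
    apply abs_le_of_sq_le_sq _ h2.le
    rw [h]; linarith
  let y0 : ℝ × ℝ := (a, b)
  have hcont : ∀ w : ℝ →ᵇ ℝ × ℝ, Continuous (fun s => fld κ s (c s • w s)) := fun w =>
    fld_cont κ (hcc.smul w.continuous)
  -- difference bound
  have hdiff : ∀ (w w' : ℝ →ᵇ ℝ × ℝ) (t : ℝ),
      ‖(∫ s in (0:ℝ)..t, fld κ s (c s • w s)) - ∫ s in (0:ℝ)..t, fld κ s (c s • w' s)‖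
        ≤ c t * (‖w - w'‖ / 2) := by
    intro w w' t
    rw [← intervalIntegral.integral_sub ((hcont w).intervalIntegrable _ _)
      ((hcont w').intervalIntegrable _ _)]
    have h1 := intervalIntegral.norm_integral_le_abs_of_norm_le (μ := MeasureTheory.volume)
      (f := fun s => fld κ s (c s • w s) - fld κ s (c s • w' s))
      (g := fun s => M * ‖w - w'‖ * c s) (a := 0) (b := t)
      (Filter.Eventually.of_forall (fun s => by
        refine (fld_bound κ s _ _).trans ?_
        rw [← smul_sub, norm_smul, Real.norm_eq_abs, abs_of_pos (hcpos s)]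
        have h3 : ‖w s - w' s‖ ≤ ‖w - w'‖ := (w - w').norm_coe_le_norm s
        have := hcpos s
        calc (|κ| + 6) * (c s * ‖w s - w' s‖) ≤ (|κ| + 6) * (c s * ‖w - w'‖) := by gcongr
          _ = M * ‖w - w'‖ * c s := by rw [hM]; ring))
      ((continuous_const.mul hcc).intervalIntegrable _ _)
    refine h1.trans ?_
    rw [intervalIntegral.integral_const_mul, abs_mul, abs_of_nonneg (by positivity)]
    calc M * ‖w - w'‖ * |∫ s in (0:ℝ)..t, c s| ≤ M * ‖w - w'‖ * (c t / l) := by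
          gcongr; exact hcint t
      _ = c t * (‖w - w'‖ / 2) := by rw [hl]; field_simp
  have hprim : ∀ w : ℝ →ᵇ ℝ × ℝ, ∀ t,
      HasDerivAt (fun t => ∫ s in (0:ℝ)..t, fld κ s (c s • w s)) (fld κ t (c t • w t)) t :=
    fun w t => intervalIntegral.integral_hasDerivAt_right ((hcont w).intervalIntegrable _ _)
      ((hcont w).stronglyMeasurableAtFilter _ _) (hcont w).continuousAt
  have hfz : ∀ s, fld κ s 0 = 0 := by intro s; simp [fld]
  let T : (ℝ →ᵇ ℝ × ℝ) → (ℝ →ᵇ ℝ × ℝ) := fun w =>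
    BoundedContinuousFunction.ofNormedAddCommGroup
      (fun t => (c t)⁻¹ • (y0 + ∫ s in (0:ℝ)..t, fld κ s (c s • w s)))
      ((hcc.inv₀ (fun t => (hcpos t).ne')).smul (continuous_const.add
        (continuous_iff_continuousAt.2 fun t => (hprim w t).continuousAt)))
      (‖y0‖ + ‖w‖ / 2)
      (by
        intro t
        have h := hdiff w 0 t
        simp [hfz] at h
        rw [norm_smul, norm_inv, Real.norm_eq_abs, abs_of_pos (hcpos t),
          inv_mul_le_iff₀ (hcpos t)]
        refine (norm_add_le _ _).trans ?_
        rw [mul_add]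
        gcongr
        have := hc1 t
        nlinarith [norm_nonneg y0])
  have hT : ContractingWith (1/2) T := by
    refine ⟨by norm_num, LipschitzWith.of_dist_le_mul fun w w' => ?_⟩
    rw [dist_eq_norm, dist_eq_norm]
    rw [BoundedContinuousFunction.norm_le (by positivity)]
    intro t
    have h := hdiff w w' t
    simp only [T, BoundedContinuousFunction.coe_sub, Pi.sub_apply,
      BoundedContinuousFunction.coe_ofNormedAddCommGroup]
    rw [← smul_sub, norm_smul, norm_inv, Real.norm_eq_abs, abs_of_pos (hcpos t),
          inv_mul_le_iff₀ (hcpos t), add_sub_add_left_eq_sub]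
    refine h.trans (le_of_eq ?_)
    push_cast; ring
  let w := ContractingWith.fixedPoint T hT
  have hw : T w = w := hT.fixedPoint_isFixedPt
  have hy : ∀ t, c t • w t = y0 + ∫ s in (0:ℝ)..t, fld κ s (c s • w s) := by
    intro t
    have : w t = (c t)⁻¹ • (y0 + ∫ s in (0:ℝ)..t, fld κ s (c s • w s)) := by
      conv_lhs => rw [← hw]
      rfl
    conv_lhs => rw [this]
    rw [smul_inv_smul₀ (hcpos t).ne']
  have hd : ∀ t, HasDerivAt (fun t => c t • w t) (fld κ t (c t • w t)) t := by
    intro t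
    have := (hprim w t).const_add y0
    refine this.congr_of_eventuallyEq (Filter.Eventually.of_forall fun s => hy s)
  refine ⟨fun t => (c t • w t).1, fun t => (c t • w t).2, ⟨fun t => ?_, fun t => ?_⟩, ?_, ?_⟩
  · have := (hd t).hasFDerivAt.fst.hasDerivAt
    simpa [fld] using this
  · have := (hd t).hasFDerivAt.snd.hasDerivAt
    simpa [fld] using this
  · show (c 0 • w 0).1 = a
    rw [hy]; simp [y0]
  · show (c 0 • w 0).2 = b
    rw [hy]; simp [y0]

lemma pair_deriv {κ t : ℝ} {u v : ℝ → ℝ} (h1 : HasDerivAt u (v t) t)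
    (h2 : HasDerivAt v ((κ - pot t) * u t) t) :
    HasDerivAt (fun t => (u t, v t)) (fld κ t (u t, v t)) t := by
  simpa [fld] using h1.prodMk h2

lemma uniq {κ p q a : ℝ} {u v u' v' : ℝ → ℝ} (ha : a ∈ Set.Ioo p q)
    (h1 : ∀ t ∈ Set.Ioo p q, HasDerivAt u (v t) t)
    (h2 : ∀ t ∈ Set.Ioo p q, HasDerivAt v ((κ - pot t) * u t) t)
    (h1' : ∀ t ∈ Set.Ioo p q, HasDerivAt u' (v' t) t)
    (h2' : ∀ t ∈ Set.Ioo p q, HasDerivAt v' ((κ - pot t) * u' t) t)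
    (e1 : u a = u' a) (e2 : v a = v' a) : ∀ t ∈ Set.Ioo p q, u t = u' t ∧ v t = v' t := by
  have := ODE_solution_unique_of_mem_Ioo (v := fld κ) (s := fun _ => Set.univ)
    (K := (|κ| + 6).toNNReal) (f := fun t => (u t, v t)) (g := fun t => (u' t, v' t))
    (a := p) (b := q) (t₀ := a)
    (fun t _ => (LipschitzWith.of_dist_le_mul fun x y => by
      rw [dist_eq_norm, dist_eq_norm, Real.coe_toNNReal _ (by positivity)]
      exact fld_bound κ t x y).lipschitzOnWith)
    ha (fun t ht => ⟨pair_deriv (h1 t ht) (h2 t ht), trivial⟩)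
    (fun t ht => ⟨pair_deriv (h1' t ht) (h2' t ht), trivial⟩)
    (by simp [e1, e2])
  intro t ht
  have := this ht
  simpa [Prod.ext_iff] using this

lemma Sol.cu {κ : ℝ} {u v : ℝ → ℝ} (h : Sol κ u v) : Continuous u :=
  continuous_iff_continuousAt.2 fun t => (h.du t).continuousAt
lemma Sol.cv {κ : ℝ} {u v : ℝ → ℝ} (h : Sol κ u v) : Continuous v :=
  continuous_iff_continuousAt.2 fun t => (h.dv t).continuousAt

lemma Sol.ne {κ : ℝ} {u v : ℝ → ℝ} (h : Sol κ u v) (h1 : v 0 = 1) (a : ℝ) (hu : u a = 0) :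
    v a ≠ 0 := by
  intro hv
  have := uniq (κ := κ) (p := -|a| - 1) (q := |a| + 1) (a := a) (u := u) (v := v) (u' := fun _ => 0)
    (v' := fun _ => 0) ⟨by linarith [neg_abs_le a], by linarith [le_abs_self a]⟩
    (fun t _ => h.du t) (fun t _ => h.dv t) (fun t _ => hasDerivAt_const t _)
    (fun t _ => by simpa using hasDerivAt_const t (0:ℝ)) hu hv 0
    ⟨by linarith [abs_nonneg a], by linarith [abs_nonneg a]⟩
  rw [h1] at this
  exact one_ne_zero this.2

lemma Sol.contDiff {κ : ℝ} {u v : ℝ → ℝ} (h : Sol κ u v) : ContDiff ℝ (⊤ : ℕ∞) u := by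
  have hdu : deriv u = v := funext fun t => (h.du t).deriv
  have hdv : deriv v = fun t => (κ - pot t) * u t := funext fun t => (h.dv t).deriv
  have key : ∀ n : ℕ, ContDiff ℝ n u ∧ ContDiff ℝ n v := by
    intro n
    induction n with
    | zero => exact ⟨contDiff_zero.2 h.cu, contDiff_zero.2 h.cv⟩
    | succ n ih =>
      have hp : ContDiff ℝ n pot := pot_contDiff.of_le (by exact_mod_cast le_top)
      constructor
      · push_cast
        rw [contDiff_succ_iff_deriv, hdu]
        exact ⟨fun t => (h.du t).differentiableAt, by simp, ih.2⟩
      · push_cast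
        rw [contDiff_succ_iff_deriv, hdv]
        exact ⟨fun t => (h.dv t).differentiableAt, by simp, (contDiff_const.sub hp).mul ih.1⟩
  exact contDiff_infty.2 fun n => (key n).1

lemma param_cont {κ₀ : ℝ} {u₀ v₀ : ℝ → ℝ} (h0 : Sol κ₀ u₀ v₀) (T ε : ℝ) (hε : 0 < ε) :
    ∃ δ > 0, ∀ κ u v, |κ - κ₀| < δ → Sol κ u v → u 0 = u₀ 0 → v 0 = v₀ 0 →
      ∀ t ∈ Set.Icc 0 T, |u t - u₀ t| < ε ∧ |v t - v₀ t| < ε := by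
  obtain ⟨B, hB⟩ := (isCompact_Icc (a := (0:ℝ)) (b := T)).exists_bound_of_continuousOn h0.cu.continuousOn
  set K := |κ₀| + 1 + 6 with hK
  have hK0 : 0 < K := by positivity
  have hlim : Filter.Tendsto (fun e => gronwallBound 0 K e T) (nhds 0) (nhds 0) := by
    have := (gronwallBound_continuous_ε 0 K T).tendsto 0
    rwa [gronwallBound_ε0_δ0] at this
  obtain ⟨e, he, hlim⟩ := Metric.eventually_nhds_iff.1 (hlim.eventually (gt_mem_nhds hε))
  have hB' : 0 < |B| + 1 := by positivity
  refine ⟨min 1 (e / 2 / (|B| + 1)), by positivity, ?_⟩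
  intro κ u v hκ hs hu hv t ht
  have hk1 : |κ - κ₀| < 1 := hκ.trans_le (min_le_left _ _)
  have hk2 : |κ - κ₀| < e / 2 / (|B| + 1) := hκ.trans_le (min_le_right _ _)
  have hkk : |κ| ≤ |κ₀| + 1 := by
    have := abs_sub_abs_le_abs_sub κ κ₀; linarith
  have key := norm_le_gronwallBound_of_norm_deriv_right_le
    (f := fun t => (u t - u₀ t, v t - v₀ t))
    (f' := fun t => (v t - v₀ t, (κ - pot t) * u t - (κ₀ - pot t) * u₀ t))
    (δ := 0) (K := K) (ε := e / 2) (a := 0) (b := T)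
    (by have := h0.cu; have := h0.cv; have := hs.cu; have := hs.cv; fun_prop)
    (fun x _ => (((hs.du x).sub (h0.du x)).prodMk ((hs.dv x).sub (h0.dv x))).hasDerivWithinAt)
    (by simp [hu, hv])
    (by
      intro x hx
      have hb := hB x ⟨hx.1, hx.2.le⟩
      have hf := fld_bound κ x (u x - u₀ x, v x - v₀ x) 0
      simp only [sub_zero] at hf
      have : (v x - v₀ x, (κ - pot x) * u x - (κ₀ - pot x) * u₀ x) =
        (fld κ x (u x - u₀ x, v x - v₀ x) - fld κ x 0) + (0, (κ - κ₀) * u₀ x) := by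
        simp [fld]; ring
      rw [this]
      refine (norm_add_le _ _).trans ?_
      apply add_le_add
      · refine hf.trans ?_
        gcongr
        linarith
      · rw [Prod.norm_def]
        apply max_le
        · simp; linarith
        · simp only [norm_mul, Real.norm_eq_abs] at hb ⊢
          rw [lt_div_iff₀ hB'] at hk2
          have h1 : |u₀ x| ≤ |B| + 1 := by linarith [le_abs_self B]
          nlinarith [abs_nonneg (κ - κ₀), mul_le_mul_of_nonneg_left h1 (abs_nonneg (κ - κ₀))])
    t ht
  have hm : gronwallBound 0 K (e/2) (t - 0) ≤ gronwallBound 0 K (e/2) T := by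
    apply gronwallBound_mono le_rfl (by positivity) hK0.le
    linarith [ht.2]
  have hl := @hlim (e/2) (by rw [Real.dist_eq]; rw [sub_zero, abs_of_pos (by positivity)]; linarith)
  have hn := lt_of_le_of_lt (key.trans hm) hl
  rw [Prod.norm_def] at hn
  exact ⟨(le_max_left _ _).trans_lt hn, (le_max_right _ _).trans_lt hn⟩

/-- zero energy solution and its derivative -/
def z (R : ℝ) : ℝ := R * (1 - R ^ 2 / 3) / Real.sqrt (1 + R ^ 2 / 3) ^ 3
def z' (R : ℝ) : ℝ := (1 - 5 * R ^ 2 / 3) / Real.sqrt (1 + R ^ 2 / 3) ^ 5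

lemma sqrt_deriv (R : ℝ) : HasDerivAt (fun R : ℝ => Real.sqrt (1 + R ^ 2 / 3))
    (R / (3 * Real.sqrt (1 + R ^ 2 / 3))) R := by
  have h := (((hasDerivAt_pow 2 R).div_const 3).const_add 1).sqrt (one_add_pos R).ne'
  convert! h using 1
  have := Real.sqrt_pos.2 (one_add_pos R)
  field_simp
  norm_num
  ring

lemma z_sol : Sol 0 z z' := by
  constructor
  · intro t
    have hs := Real.sqrt_pos.2 (one_add_pos t)
    have hsq := Real.sq_sqrt (one_add_pos t).le
    have h := (((hasDerivAt_id t).mul (((hasDerivAt_pow 2 t).div_const 3).const_sub 1))).div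
      ((sqrt_deriv t).pow 3) (by simp; exact hs.ne')
    convert! h using 1
    unfold z'
    simp
    set s := Real.sqrt (1 + t ^ 2 / 3)
    have ht : t ^ 2 = 3 * s ^ 2 - 3 := by linarith
    field_simp
    ring_nf
    have ht4 : t ^ 4 = (3 * s ^ 2 - 3) ^ 2 := by rw [← ht]; ring
    simp only [ht, ht4]
    ring
  · intro t
    have hs := Real.sqrt_pos.2 (one_add_pos t)
    have hsq := Real.sq_sqrt (one_add_pos t).le
    have h := (((((hasDerivAt_pow 2 t).const_mul 5).div_const 3).const_sub 1)).div
      ((sqrt_deriv t).pow 5) (by simp; exact hs.ne')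
    convert! h using 1
    unfold z pot
    rw [← hsq]
    simp
    set s := Real.sqrt (1 + t ^ 2 / 3)
    have ht : t ^ 2 = 3 * s ^ 2 - 3 := by linarith
    rw [hsq, show 1 + t^2/3 = s^2 by linarith]
    field_simp
    ring_nf
    have ht4 : t ^ 3 = t * (3 * s ^ 2 - 3) := by rw [← ht]; ring
    simp only [ht4]
    ring

section
open Filter Topology MeasureTheory

lemma ev_pot (ε : ℝ) (hε : 0 < ε) : ∃ R₁ ≥ (1:ℝ), ∀ R ≥ R₁, pot R ≤ ε := by
  refine ⟨max 1 (45 / ε), le_max_left _ _, fun R hR => ?_⟩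
  have h1 : 1 ≤ R := (le_max_left _ _).trans hR
  have h2 : 45 / ε ≤ R := (le_max_right _ _).trans hR
  refine (pot_le_inv h1).trans ?_
  rw [div_le_iff₀ (by linarith)]
  rw [div_le_iff₀ hε] at h2
  linarith

lemma mono_of {f f' : ℝ → ℝ} {x y : ℝ} (h : ∀ t ∈ Set.Icc x y, HasDerivAt f (f' t) t)
    (h0 : ∀ t ∈ Set.Ioo x y, 0 ≤ f' t) (hxy : x ≤ y) : f x ≤ f y := by
  refine monotoneOn_of_hasDerivWithinAt_nonneg (convex_Icc x y) (f' := f')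
    (fun t ht => (h t ht).continuousAt.continuousWithinAt) (fun t ht => ?_) (fun t ht => ?_)
    ⟨le_rfl, hxy⟩ ⟨hxy, le_rfl⟩ hxy
  · exact (h t (interior_subset ht)).hasDerivWithinAt
  · rw [interior_Icc] at ht; exact h0 t ht

lemma smono_of {f f' : ℝ → ℝ} {x y : ℝ} (h : ∀ t ∈ Set.Icc x y, HasDerivAt f (f' t) t)
    (h0 : ∀ t ∈ Set.Ioo x y, 0 < f' t) (hxy : x < y) : f x < f y := by
  refine strictMonoOn_of_hasDerivWithinAt_pos (convex_Icc x y) (f' := f')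
    (fun t ht => (h t ht).continuousAt.continuousWithinAt) (fun t ht => ?_) (fun t ht => ?_)
    ⟨le_rfl, hxy.le⟩ ⟨hxy.le, le_rfl⟩ hxy
  · exact (h t (interior_subset ht)).hasDerivWithinAt
  · rw [interior_Icc] at ht; exact h0 t ht

lemma near_pos {v : ℝ → ℝ} (hv : Continuous v) {a c : ℝ} (h : c < v a) :
    ∃ η > 0, ∀ t, |t - a| ≤ η → c < v t := by
  obtain ⟨η, h1, h2⟩ := Metric.eventually_nhds_iff.1 ((hv.tendsto a).eventually (lt_mem_nhds h))
  refine ⟨η / 2, by positivity, fun t ht => h2 ?_⟩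
  rw [Real.dist_eq]; linarith

lemma pos_or_zero {κ : ℝ} {u v : ℝ → ℝ} (h : Sol κ u v) (h0 : u 0 = 0) (h1 : v 0 = 1) :
    (∀ R > 0, 0 < u R) ∨ ∃ a > 0, u a = 0 ∧ ∀ R ∈ Set.Ioo 0 a, 0 < u R := by
  by_cases hp : ∀ R > 0, 0 < u R
  · exact Or.inl hp
  right
  push Not at hp
  obtain ⟨R, hR, hRu⟩ := hp
  obtain ⟨ε, hε, hv⟩ := near_pos h.cv (a := 0) (c := 0) (by rw [h1]; norm_num)
  have hpos : ∀ t, 0 < t → t ≤ ε → 0 < u t := by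
    intro t ht hte
    rw [← h0]
    refine smono_of (fun s _ => h.du s) (fun s hs => hv s ?_) ht
    rw [sub_zero, abs_of_pos hs.1]; linarith [hs.2]
  have hεR : ε ≤ R := by
    by_contra hc
    exact absurd (hpos R hR (not_le.1 hc).le) (not_lt.2 hRu)
  have hcomp : IsCompact (Set.Icc ε R ∩ {t | u t ≤ 0}) :=
    isCompact_Icc.inter_right (isClosed_le h.cu continuous_const)
  obtain ⟨a, ⟨⟨ha1, ha2⟩, ha3⟩, hal⟩ := hcomp.exists_isLeast ⟨R, ⟨hεR, le_rfl⟩, hRu⟩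
  have ha0 : 0 < a := hε.trans_le ha1
  have hpa : ∀ t ∈ Set.Ioo 0 a, 0 < u t := by
    intro t ht
    by_contra hc
    have hte : ε ≤ t := by
      by_contra hh
      exact hc (hpos t ht.1 (not_le.1 hh).le)
    have := hal ⟨⟨hte, ht.2.le.trans ha2⟩, not_lt.1 hc⟩
    linarith [ht.2]
  refine ⟨a, ha0, le_antisymm ha3 ?_, hpa⟩
  by_contra hc
  have hc := not_le.1 hc
  have h2 : (0:ℝ) ∈ Set.Icc (u a) (u (a / 2)) := ⟨hc.le, (hpa _ ⟨by linarith, by linarith⟩).le⟩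
  obtain ⟨c, hc1, hc2⟩ := intermediate_value_Icc' (by linarith : a / 2 ≤ a) h.cu.continuousOn h2
  rcases eq_or_lt_of_le hc1.2 with e | e
  · rw [e] at hc2; linarith
  · have := hpa c ⟨by linarith [hc1.1], e⟩
    linarith

lemma pos_of_five {κ : ℝ} (hκ : 5 ≤ κ) {u v : ℝ → ℝ} (h : Sol κ u v) (h0 : u 0 = 0)
    (h1 : v 0 = 1) : ∀ R > 0, 0 < u R := by
  rcases pos_or_zero h h0 h1 with hp | ⟨a, ha, hua, hp⟩
  · exact hp
  exfalso
  have hv : ∀ t ∈ Set.Icc 0 a, 1 ≤ v t := by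
    intro t ht
    rw [← h1]
    refine mono_of (fun s _ => h.dv s) (fun s hs => ?_) ht.1
    exact mul_nonneg (by linarith [pot_le s]) (hp s ⟨hs.1, hs.2.trans_le ht.2⟩).le
  have := smono_of (f := u) (fun s _ => h.du s)
    (fun s hs => by linarith [hv s ⟨hs.1.le, hs.2.le⟩]) ha
  linarith

lemma tail_pos {κ R₂ : ℝ} {u v : ℝ → ℝ} (h : Sol κ u v) (hu : 0 < u R₂) (hv : 0 < v R₂)
    (hp : ∀ R ≥ R₂, pot R ≤ κ) : ∀ R ≥ R₂, 0 < u R := by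
  have huv : ∀ R ≥ R₂, 0 < u R * v R := by
    intro R hR
    refine (mul_pos hu hv).trans_le ?_
    refine mono_of (f := fun t => u t * v t) (fun s _ => (h.du s).mul (h.dv s)) (fun s hs => ?_) hR
    have := hp s hs.1.le
    have e : v s * v s + u s * ((κ - pot s) * u s) = v s ^ 2 + (κ - pot s) * u s ^ 2 := by ring
    rw [e]
    have : 0 ≤ κ - pot s := by linarith
    positivity
  intro R hR
  by_contra hc
  obtain ⟨c, hc1, hc2⟩ := intermediate_value_Icc' hR h.cu.continuousOn
    (show (0:ℝ) ∈ Set.Icc (u R) (u R₂) from ⟨not_lt.1 hc, hu.le⟩)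
  have := huv c hc1.1
  rw [hc2] at this
  linarith

lemma noint {u : ℝ → ℝ} (hi : IntegrableOn (fun R => u R ^ 2) (Set.Ioi 0)) {a c : ℝ} (ha : 0 ≤ a)
    (hc : 0 < c) (h : ∀ R ≥ a, c ≤ u R ^ 2) : False := by
  have h1 : IntegrableOn (fun R => u R ^ 2) (Set.Ioi a) := hi.mono_set (Set.Ioi_subset_Ioi ha)
  have h2 : IntegrableOn (fun _ : ℝ => c) (Set.Ioi a) := by
    refine Integrable.mono' h1 aestronglyMeasurable_const ?_
    refine (ae_restrict_mem measurableSet_Ioi).mono fun R hR => ?_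
    rw [Real.norm_eq_abs, abs_of_pos hc]
    exact h R (le_of_lt hR)
  rw [integrableOn_const_iff] at h2
  simp [hc.ne'] at h2

lemma decay_gen {κ : ℝ} (hκ : 0 < κ) {u v : ℝ → ℝ} (h : Sol κ u v)
    (hi : IntegrableOn (fun R => u R ^ 2) (Set.Ioi 0)) :
    Tendsto u atTop (𝓝 0) ∧ Tendsto v atTop (𝓝 0) := by
  obtain ⟨R₁, hR1, hp⟩ := ev_pot (κ / 2) (by positivity)
  have hq : ∀ s ≥ R₁, 0 ≤ κ - pot s := fun s hs => by linarith [hp s hs]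
  have dh : ∀ s, HasDerivAt (fun t => u t * v t) (v s ^ 2 + (κ - pot s) * u s ^ 2) s := fun s => by
    convert! (h.du s).mul (h.dv s) using 1; ring
  have du2 : ∀ s, HasDerivAt (fun t => u t ^ 2) (2 * (u s * v s)) s := fun s => by
    convert! (h.du s).pow 2 using 1; simp; ring
  have dv2 : ∀ s, HasDerivAt (fun t => v t ^ 2) (2 * (κ - pot s) * (u s * v s)) s := fun s => by
    convert! (h.dv s).pow 2 using 1; simp; ring
  have hmono : ∀ x y, R₁ ≤ x → x ≤ y → u x * v x ≤ u y * v y := by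
    intro x y hx hxy
    refine mono_of (f := fun t => u t * v t) (fun s _ => dh s) (fun s hs => ?_) hxy
    have := hq s (hx.trans hs.1.le)
    positivity
  have hneg : ∀ x, R₁ ≤ x → u x * v x ≤ 0 := by
    intro x hx
    by_contra hc
    have hc := not_le.1 hc
    have hux : u x ≠ 0 := by rintro e; simp [e] at hc
    refine noint hi (a := x) (c := u x ^ 2) (by linarith) (by positivity) fun R hR => ?_
    refine mono_of (f := fun t => u t ^ 2) (fun s _ => du2 s) (fun s hs => ?_) hR
    have := hmono x s hx hs.1.le
    linarith
  have hu2 : ∀ x y, R₁ ≤ x → x ≤ y → u y ^ 2 ≤ u x ^ 2 := by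
    intro x y hx hxy
    have := mono_of (f := fun t => - u t ^ 2) (fun s _ => (du2 s).neg) (fun s hs => by
      have := hneg s (hx.trans hs.1.le); linarith) hxy
    linarith
  have hv2 : ∀ x y, R₁ ≤ x → x ≤ y → v y ^ 2 ≤ v x ^ 2 := by
    intro x y hx hxy
    have := mono_of (f := fun t => - v t ^ 2) (fun s _ => (dv2 s).neg) (fun s hs => by
      have h1 := hneg s (hx.trans hs.1.le); have h2 := hq s (hx.trans hs.1.le); nlinarith) hxy
    linarith
  constructor
  · rw [Metric.tendsto_atTop]
    intro ε hε
    have : ∃ R ≥ R₁, u R ^ 2 < ε ^ 2 := by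
      by_contra hc
      push Not at hc
      exact noint hi (by linarith : 0 ≤ R₁) (by positivity : 0 < ε ^ 2) hc
    obtain ⟨R, hR, hlt⟩ := this
    refine ⟨R, fun n hn => ?_⟩
    rw [Real.dist_eq, sub_zero]
    exact abs_lt_of_sq_lt_sq ((hu2 R n hR hn).trans_lt hlt) hε.le
  · rw [Metric.tendsto_atTop]
    intro ε hε
    have : ∃ R ≥ R₁, v R ^ 2 < ε ^ 2 := by
      by_contra hc
      push Not at hc
      set D := -(u R₁ * v R₁) + 1 with hD
      have hDp : 0 < D := by linarith [hneg R₁ le_rfl]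
      have hle : R₁ ≤ R₁ + D / ε ^ 2 := by have : 0 < D / ε ^ 2 := by positivity
                                           linarith
      have := mono_of (f := fun t => u t * v t - ε ^ 2 * t)
        (fun s _ => (dh s).sub ((hasDerivAt_id s).const_mul (ε ^ 2))) (fun s hs => by
        have h1 := hq s hs.1.le
        have h2 := hc s hs.1.le
        have : 0 ≤ (κ - pot s) * u s ^ 2 := by positivity
        linarith) hle
      have h3 := hneg _ hle
      have h4 : ε ^ 2 * (R₁ + D / ε ^ 2) = ε ^ 2 * R₁ + D := by field_simp
      simp only [h4] at this
      linarith
    obtain ⟨R, hR, hlt⟩ := this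
    refine ⟨R, fun n hn => ?_⟩
    rw [Real.dist_eq, sub_zero]
    exact abs_lt_of_sq_lt_sq ((hv2 R n hR hn).trans_lt hlt) hε.le

lemma z_zero : z 0 = 0 := by simp [z]
lemma z'_zero : z' 0 = 1 := by simp [z']
lemma z_pos {R : ℝ} (h : 0 < R) (h3 : R ^ 2 < 3) : 0 < z R := by
  unfold z
  have := Real.sqrt_pos.2 (one_add_pos R)
  have : 0 < 1 - R ^ 2 / 3 := by linarith
  positivity
lemma z_nonneg {R : ℝ} (h : 0 < R) (h3 : R ^ 2 ≤ 3) : 0 ≤ z R := by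
  unfold z
  have := Real.sqrt_pos.2 (one_add_pos R)
  have : 0 ≤ 1 - R ^ 2 / 3 := by linarith
  positivity
lemma z_neg {R : ℝ} (h : 0 < R) (h3 : 3 < R ^ 2) : z R < 0 := by
  unfold z
  have := Real.sqrt_pos.2 (one_add_pos R)
  apply div_neg_of_neg_of_pos _ (by positivity)
  apply mul_neg_of_pos_of_neg h
  linarith
lemma z_ratio {R : ℝ} (h : 3 ≤ R) : |z' R / z R| ≤ 1 := by
  have hs := Real.sqrt_pos.2 (one_add_pos R)
  have hsq := Real.sq_sqrt (one_add_pos R).le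
  have e : z' R / z R = (5 * R ^ 2 / 3 - 1) / ((1 + R ^ 2 / 3) * (R * (R ^ 2 / 3 - 1))) := by
    unfold z z'
    set s := Real.sqrt (1 + R ^ 2 / 3)
    have h1 : 1 - R ^ 2 / 3 ≠ 0 := by nlinarith
    have h2 : R ^ 2 / 3 - 1 ≠ 0 := by nlinarith
    have hR0 : 0 < R := by linarith
    rw [div_div_div_eq, div_eq_div_iff (by positivity) (by positivity), ← hsq]
    ring
  have h2 : 2 ≤ R ^ 2 / 3 - 1 := by nlinarith
  have h6 : 6 ≤ R * (R ^ 2 / 3 - 1) := by nlinarith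
  have hden : (0:ℝ) < (1 + R ^ 2 / 3) * (R * (R ^ 2 / 3 - 1)) := by
    have : 0 < 1 + R ^ 2 / 3 := by positivity
    nlinarith
  rw [e, abs_of_nonneg (div_nonneg (by linarith) hden.le), div_le_one hden]
  nlinarith [sq_nonneg R]

lemma zero_free {κ : ℝ} (hκ : 0 < κ) {u v : ℝ → ℝ} (h : Sol κ u v) (h0 : u 0 = 0) (h1 : v 0 = 1)
    (hi : IntegrableOn (fun R => u R ^ 2) (Set.Ioi 0)) : ∀ R > 0, 0 < u R := by
  rcases pos_or_zero h h0 h1 with hp | ⟨a, ha, hua, hp⟩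
  · exact hp
  exfalso
  rcases le_or_gt (a ^ 2) 3 with h3 | h3
  · have hW := smono_of (f := fun t => v t * z t - u t * z' t) (f' := fun t => κ * (u t * z t))
      (x := 0) (y := a)
      (fun s _ => by
        convert! ((h.dv s).mul (z_sol.du s)).sub ((h.du s).mul (z_sol.dv s)) using 1
        ring)
      (fun s hs => mul_pos hκ (mul_pos (hp s hs) (z_pos hs.1 (by nlinarith [hs.1, hs.2])))) ha
    simp only [z_zero, h0, hua] at hW
    have hz := z_nonneg ha h3
    have hva : 0 < v a := by
      by_contra hc
      nlinarith
    obtain ⟨η, hη, hv⟩ := near_pos h.cv hva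
    have hx : max (a / 2) (a - η) < a := max_lt (by linarith) (by linarith)
    have := smono_of (f := u) (fun s _ => h.du s) (fun s hs => hv s (by
      rw [abs_le]; constructor
      · linarith [hs.1, le_max_right (a / 2) (a - η)]
      · linarith [hs.2])) hx
    have h5 := hp (max (a / 2) (a - η)) ⟨by linarith [le_max_left (a / 2) (a - η)], hx⟩
    linarith
  · have hz : ∀ t ≥ a, z t < 0 := fun t ht => z_neg (by linarith) (by nlinarith)
    set P : ℝ → ℝ := fun t => u t * v t - u t ^ 2 * (z' t / z t) with hP
    have dP : ∀ t ≥ a, HasDerivAt P ((v t - u t * (z' t / z t)) ^ 2 + κ * u t ^ 2) t := by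
      intro t ht
      have hzt := (hz t ht).ne
      convert! ((h.du t).mul (h.dv t)).sub
        (((h.du t).pow 2).mul ((z_sol.dv t).div (z_sol.du t) hzt)) using 1
      simp
      field_simp
      ring
    have hPa : P a = 0 := by simp [hP, hua]
    have hmono : ∀ x y, a ≤ x → x ≤ y → P x ≤ P y := fun x y hx hxy =>
      mono_of (fun s hs => dP s (hx.trans hs.1)) (fun s _ => by positivity) hxy
    obtain ⟨tu, tv⟩ := decay_gen hκ h hi
    have tP : Tendsto P atTop (𝓝 0) := by
      have t1 : Tendsto (fun t => u t * v t) atTop (𝓝 0) := by simpa using tu.mul tv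
      have t2 : Tendsto (fun t => u t ^ 2 * (z' t / z t)) atTop (𝓝 0) := by
        have t3 : Tendsto (fun t => u t ^ 2) atTop (𝓝 0) := by simpa using tu.pow 2
        refine squeeze_zero_norm' ?_ t3
        filter_upwards [eventually_ge_atTop 3] with t ht
        rw [norm_mul, Real.norm_eq_abs, Real.norm_eq_abs, abs_of_nonneg (sq_nonneg _)]
        nlinarith [z_ratio ht, sq_nonneg (u t)]
      simpa using t1.sub t2
    have hPz : ∀ t ≥ a, P t = 0 := by
      intro t ht
      apply le_antisymm
      · exact ge_of_tendsto tP (by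
          filter_upwards [eventually_ge_atTop t] with s hs
          exact hmono t s ht hs)
      · rw [← hPa]; exact hmono a t le_rfl ht
    have hd := dP (a + 1) (by linarith)
    have hd0 : HasDerivAt P 0 (a + 1) := by
      refine (hasDerivAt_const (a + 1) (0:ℝ)).congr_of_eventuallyEq ?_
      filter_upwards [lt_mem_nhds (show a < a + 1 by linarith)] with t ht
      exact hPz t ht.le
    have he := hd.unique hd0
    have hu : u (a + 1) = 0 := by
      by_contra hne
      have : 0 < κ * u (a + 1) ^ 2 := by positivity
      nlinarith [sq_nonneg (v (a+1) - u (a+1) * (z' (a+1) / z (a+1)))]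
    have hv : v (a + 1) = 0 := by
      rw [hu] at he
      simpa using he
    exact h.ne h1 _ hu hv

lemma wronski_lt {κ₁ κ₂ : ℝ} (hlt : κ₂ < κ₁) {u₁ v₁ u₂ v₂ : ℝ → ℝ} (h : Sol κ₁ u₁ v₁)
    (h' : Sol κ₂ u₂ v₂) (h0 : u₁ 0 = 0) (h0' : u₂ 0 = 0) (hp : ∀ R > 0, 0 < u₁ R)
    (hp' : ∀ R > 0, 0 < u₂ R) (t1 : Tendsto u₁ atTop (𝓝 0)) (t2 : Tendsto v₁ atTop (𝓝 0))
    (t3 : Tendsto u₂ atTop (𝓝 0)) (t4 : Tendsto v₂ atTop (𝓝 0)) : False := by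
  set W : ℝ → ℝ := fun t => v₁ t * u₂ t - u₁ t * v₂ t with hW
  have dW : ∀ t, HasDerivAt W ((κ₁ - κ₂) * (u₁ t * u₂ t)) t := fun s => by
    convert! ((h.dv s).mul (h'.du s)).sub ((h.du s).mul (h'.dv s)) using 1
    ring
  have hW1 : W 0 < W 1 := smono_of (fun s _ => dW s) (fun s hs =>
    mul_pos (by linarith) (mul_pos (hp s hs.1) (hp' s hs.1))) one_pos
  have hW0 : W 0 = 0 := by simp [hW, h0, h0']
  have tW : Tendsto W atTop (𝓝 0) := by simpa using (t2.mul t3).sub (t1.mul t4)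
  have : W 1 ≤ 0 := ge_of_tendsto tW (by
    filter_upwards [eventually_ge_atTop 1] with s hs
    refine mono_of (fun s _ => dW s) (fun r hr => ?_) hs
    have hr0 : 0 < r := by linarith [hr.1]
    exact mul_nonneg (by linarith) (mul_pos (hp r hr0) (hp' r hr0)).le)
  linarith

lemma exists_ground : ∃ (κ : ℝ) (u v : ℝ → ℝ) (C : ℝ), 0 < κ ∧ 0 < C ∧ Sol κ u v ∧ u 0 = 0 ∧ v 0 = 1 ∧
    (∀ R > 0, 0 < u R) ∧ ∀ R ≥ 0, |u R| ≤ C * Real.exp (-(Real.sqrt κ * R) / 2) := by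
  have hex := fun κ => exists_sol κ 0 1
  choose U Vf hS hU hV using hex
  set S : Set ℝ := {κ | 0 < κ ∧ ∀ R > 0, 0 < U κ R} with hSdef
  have h5 : (5:ℝ) ∈ S := ⟨by norm_num, pos_of_five le_rfl (hS 5) (hU 5) (hV 5)⟩
  have hz2 : z 2 < 0 := z_neg (by norm_num) (by norm_num)
  obtain ⟨δ, hδ, hδ'⟩ := param_cont z_sol 2 (-z 2) (by linarith)
  have hlow : ∀ κ ∈ S, δ ≤ κ := by
    intro κ hκ
    by_contra hc
    have := (hδ' κ (U κ) (Vf κ) (by rw [sub_zero, abs_of_pos hκ.1]; exact not_le.1 hc) (hS κ)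
      (by rw [hU, z_zero]) (by rw [hV, z'_zero]) 2 ⟨by norm_num, le_rfl⟩).1
    have h2 := hκ.2 2 (by norm_num)
    rw [abs_lt] at this
    linarith [this.2]
  have hbdd : BddBelow S := ⟨δ, hlow⟩
  set k := sInf S with hk
  have hk0 : 0 < k := hδ.trans_le (le_csInf ⟨5, h5⟩ hlow)
  have hnn : ∀ R > 0, 0 ≤ U k R := by
    intro R hR
    by_contra hc
    have hc := not_le.1 hc
    obtain ⟨d, hd, hd'⟩ := param_cont (hS k) R (-U k R) (by linarith)
    obtain ⟨κ, hκ, hlt⟩ := exists_lt_of_csInf_lt ⟨5, h5⟩ (show sInf S < k + d by linarith)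
    have hge : k ≤ κ := csInf_le hbdd hκ
    have := (hd' κ (U κ) (Vf κ) (by rw [abs_of_nonneg (by linarith)]; linarith) (hS κ)
      (by rw [hU, hU]) (by rw [hV, hV]) R ⟨hR.le, le_rfl⟩).1
    have h2 := hκ.2 R hR
    rw [abs_lt] at this
    linarith [this.2]
  have hpos : ∀ R > 0, 0 < U k R := by
    intro R hR
    refine lt_of_le_of_ne (hnn R hR) fun e => ?_
    refine (hS k).ne (hV k) R e.symm ?_
    refine IsLocalMin.hasDerivAt_eq_zero (f := U k) ?_ ((hS k).du R)
    filter_upwards [lt_mem_nhds hR] with t ht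
    rw [← e]; exact hnn t ht
  obtain ⟨R₁, hR1, hpot⟩ := ev_pot (k / 2) (by positivity)
  have hvneg : ∀ R ≥ R₁, Vf k R ≤ 0 := by
    intro R₂ hR2
    by_contra hc
    have hc := not_le.1 hc
    obtain ⟨η, hη, hη'⟩ := near_pos (hS k).cv (a := 0) (c := 1/2) (by rw [hV]; norm_num)
    have hne : (Set.Icc (min η R₂) R₂).Nonempty := ⟨R₂, min_le_right _ _, le_rfl⟩
    obtain ⟨m, hm, hmin⟩ := isCompact_Icc.exists_isMinOn hne (hS k).cu.continuousOn
    have hη0 : 0 < min η R₂ := lt_min hη (by linarith)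
    have hmpos : 0 < U k m := hpos m (hη0.trans_le hm.1)
    set ε := min (U k m) (min (1/2) (Vf k R₂)) with hε
    have hε0 : 0 < ε := lt_min hmpos (lt_min (by norm_num) hc)
    have hε1 : ε ≤ U k m := min_le_left _ _
    have hε2 : ε ≤ 1/2 := (min_le_right _ _).trans (min_le_left _ _)
    have hε3 : ε ≤ Vf k R₂ := (min_le_right _ _).trans (min_le_right _ _)
    obtain ⟨d, hd, hd'⟩ := param_cont (hS k) R₂ ε hε0
    set κ := max (k / 2) (k - d / 2) with hκ
    have hκ1 : k / 2 ≤ κ := le_max_left _ _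
    have hκ2 : k - d / 2 ≤ κ := le_max_right _ _
    have hκ3 : κ < k := max_lt (by linarith) (by linarith)
    have cl := hd' κ (U κ) (Vf κ) (by rw [abs_lt]; constructor <;> linarith) (hS κ)
      (by rw [hU, hU]) (by rw [hV, hV])
    have hlast : 0 < U κ R₂ ∧ 0 < Vf κ R₂ := by
      have hc2 := cl R₂ ⟨by linarith, le_rfl⟩
      rw [abs_lt, abs_lt] at hc2
      have := hmin (show R₂ ∈ Set.Icc (min η R₂) R₂ from ⟨min_le_right _ _, le_rfl⟩)
      have : U k m ≤ U k R₂ := this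
      constructor <;> linarith [hc2.1.1, hc2.2.1]
    have hmem : κ ∈ S := by
      refine ⟨by linarith, fun R hR => ?_⟩
      rcases le_or_gt R₂ R with hR' | hR'
      · exact tail_pos (hS κ) hlast.1 hlast.2 (fun r hr => (hpot r (hR2.trans hr)).trans hκ1) R hR'
      rcases le_or_gt (min η R₂) R with hR3 | hR3
      · have hc2 := (cl R ⟨hR.le, hR'.le⟩).1
        rw [abs_lt] at hc2
        have : U k m ≤ U k R := hmin (show R ∈ Set.Icc (min η R₂) R₂ from ⟨hR3, hR'.le⟩)
        linarith [hc2.1]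
      · rw [← hU κ]
        refine smono_of (fun s _ => (hS κ).du s) (fun s hs => ?_) hR
        have hc2 := (cl s ⟨hs.1.le, by linarith [hs.2]⟩).2
        rw [abs_lt] at hc2
        have hRη : R ≤ η := hR3.le.trans (min_le_left _ _)
        have := hη' s (by rw [sub_zero, abs_of_pos hs.1]; linarith [hs.2])
        linarith [hc2.1]
    linarith [csInf_le hbdd hmem]
  -- decay
  set u := U k
  set v := Vf k
  have h : Sol k u v := hS k
  set r := Real.sqrt k / 2 with hr
  have hrpos : 0 < r := by have := Real.sqrt_pos.2 hk0; positivity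
  have hr2 : r ^ 2 = k / 4 := by rw [hr, div_pow, Real.sq_sqrt hk0.le]; norm_num
  have dexp : ∀ c t : ℝ, HasDerivAt (fun t => Real.exp (c * t)) (c * Real.exp (c * t)) t := by
    intro c t
    convert! ((hasDerivAt_id t).const_mul c).exp using 1
    simp; ring
  have hudec : ∀ R ≥ R₁, u R ≤ u R₁ := by
    intro R hR
    have := mono_of (f := fun t => - u t) (fun s _ => (h.du s).neg) (fun s hs => by
      have := hvneg s hs.1.le; linarith) hR
    linarith
  have hw : ∀ R ≥ R₁, v R + r * u R ≤ 0 := by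
    intro R hR
    by_contra hc
    have hc := not_le.1 hc
    have hgrow : ∀ t ≥ R, (v R + r * u R) * Real.exp (-r * R) ≤ (v t + r * u t) * Real.exp (-r * t) := by
      intro t ht
      refine mono_of (f := fun t => (v t + r * u t) * Real.exp (-r * t))
        (fun s _ => (((h.dv s).add ((h.du s).const_mul r)).mul (dexp (-r) s))) (fun s hs => ?_) ht
      have hs0 : R₁ ≤ s := hR.trans hs.1.le
      have hus := hpos s (by linarith)
      have hps := hpot s hs0
      have he := Real.exp_pos (-r * s)
      have : ((k - pot s) * u s + r * v s) * Real.exp (-r * s) +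
        (v s + r * u s) * (-r * Real.exp (-r * s)) = ((k - pot s - r ^ 2) * u s) * Real.exp (-r * s) := by
        ring
      show 0 ≤ ((k - pot s) * u s + r * v s) * Real.exp (-r * s) +
        (v s + r * u s) * (-r * Real.exp (-r * s))
      rw [this, hr2]
      have h4 : 0 ≤ k - pot s - k / 4 := by linarith
      have h5 : 0 ≤ u s := hus.le
      positivity
    have tl : Tendsto (fun t : ℝ => r * u R₁ * Real.exp (-r * t)) atTop (𝓝 0) := by
      have : Tendsto (fun t : ℝ => Real.exp (-r * t)) atTop (𝓝 0) := by
        apply Real.tendsto_exp_atBot.comp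
        exact tendsto_id.const_mul_atTop_of_neg (by linarith)
      simpa using this.const_mul (r * u R₁)
    have hle : (v R + r * u R) * Real.exp (-r * R) ≤ 0 := ge_of_tendsto tl (by
      filter_upwards [eventually_ge_atTop R] with t ht
      refine (hgrow t ht).trans ?_
      have h1 := hvneg t (hR.trans ht)
      have h2 := hudec t (hR.trans ht)
      have he := Real.exp_pos (-r * t)
      have : v t + r * u t ≤ r * u R₁ := by nlinarith
      gcongr)
    have := mul_pos hc (Real.exp_pos (-r * R))
    linarith
  have hcont : Continuous (fun t => u t * Real.exp (r * t)) := by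
    have := h.cu
    fun_prop
  obtain ⟨B, hB⟩ := (isCompact_Icc (a := (0:ℝ)) (b := R₁)).exists_bound_of_continuousOn hcont.continuousOn
  have hbound : ∀ R ≥ 0, u R * Real.exp (r * R) ≤ B := by
    intro R hR
    rcases le_or_gt R R₁ with hle | hgt
    · exact (le_abs_self _).trans (hB R ⟨hR, hle⟩)
    · have := mono_of (f := fun t => - (u t * Real.exp (r * t)))
        (fun s _ => ((h.du s).mul (dexp r s)).neg) (fun s hs => by
          have h1 := hw s hs.1.le
          have he := Real.exp_pos (r * s)
          have e : -(v s * Real.exp (r * s) + u s * (r * Real.exp (r * s))) =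
            (-(v s + r * u s)) * Real.exp (r * s) := by ring
          rw [e]
          exact mul_nonneg (by linarith) he.le) hgt.le
      have h2 := (le_abs_self _).trans (hB R₁ ⟨by linarith, le_rfl⟩)
      linarith
  refine ⟨k, u, v, |B| + 1, hk0, by positivity, h, hU k, hV k, hpos, fun R hR => ?_⟩
  have hu0 : 0 ≤ u R := by
    rcases eq_or_lt_of_le hR with e | e
    · rw [← e]; exact (hU k).ge
    · exact (hpos R e).le
  rw [abs_of_nonneg hu0]
  have e1 : -(Real.sqrt k * R) / 2 = -(r * R) := by rw [hr]; ring
  rw [e1, Real.exp_neg, ← div_eq_mul_inv, le_div_iff₀ (Real.exp_pos _)]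
  linarith [hbound R hR, le_abs_self B]

lemma integrable_of_decay {u : ℝ → ℝ} (hu : Continuous u) {k C : ℝ} (hk : 0 < k)
    (hb : ∀ R ≥ 0, |u R| ≤ C * Real.exp (-(Real.sqrt k * R) / 2)) :
    IntegrableOn (fun R => u R ^ 2) (Set.Ioi 0) := by
  have hr := Real.sqrt_pos.2 hk
  have h1 : IntegrableOn (fun R => C ^ 2 * Real.exp (-Real.sqrt k * R)) (Set.Ioi 0) :=
    (exp_neg_integrableOn_Ioi 0 hr).const_mul _
  refine Integrable.mono' h1 (hu.pow 2).aestronglyMeasurable ?_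
  refine (ae_restrict_mem measurableSet_Ioi).mono fun R hR => ?_
  have := hb R (le_of_lt hR)
  rw [Real.norm_eq_abs, abs_of_nonneg (sq_nonneg _), ← sq_abs (u R)]
  calc |u R| ^ 2 ≤ (C * Real.exp (-(Real.sqrt k * R) / 2)) ^ 2 := by gcongr
    _ = C ^ 2 * Real.exp (-Real.sqrt k * R) := by
      rw [mul_pow, ← Real.exp_nat_mul]; congr 2; push_cast; ring

end

lemma reduce {ξ : ℝ} {φ : ℝ → ℝ} (hφ : IsDirichletEigenfunction ξ φ) {u v : ℝ → ℝ}
    (h : Sol (-ξ) u v) (h0 : u 0 = 0) (h1 : v 0 = 1) : ∃ c : ℝ, ∀ R ≥ (0:ℝ), φ R = c * u R := by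
  obtain ⟨p0, pc, pd, pdd, pe, -⟩ := hφ
  obtain ⟨w, w', hw, w0, w1⟩ := exists_sol (-ξ) 1 0
  have hD : v 1 * w 1 - u 1 * w' 1 = 1 := by
    have d : ∀ t, HasDerivAt (fun t => v t * w t - u t * w' t) 0 t := fun s => by
      convert! ((h.dv s).mul (hw.du s)).sub ((h.du s).mul (hw.dv s)) using 1
      ring
    have := is_const_of_deriv_eq_zero (fun t => (d t).differentiableAt) (fun t => (d t).deriv) 1 0
    simpa [h0, h1, w0, w1] using this
  set α := deriv φ 1 * w 1 - φ 1 * w' 1 with hα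
  set β := φ 1 * v 1 - deriv φ 1 * u 1 with hβ
  have key : ∀ R > 0, φ R = α * u R + β * w R := by
    intro R hR
    refine (uniq (κ := -ξ) (p := 0) (q := R + 2) (a := 1) (u := φ) (v := deriv φ)
      (u' := fun t => α * u t + β * w t) (v' := fun t => α * v t + β * w' t)
      ⟨one_pos, by linarith⟩ (fun t ht => pd t ht.1) (fun t ht => ?_)
      (fun t _ => ((h.du t).const_mul α).add ((hw.du t).const_mul β))
      (fun t _ => ?_) ?_ ?_ R ⟨hR, by linarith⟩).1
    · have e := pe t ht.1
      have d := pdd t ht.1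
      convert! d using 1
      unfold pot
      linarith
    · convert! ((h.dv t).const_mul α).add ((hw.dv t).const_mul β) using 1
      ring
    · linear_combination (-φ 1) * hD
    · linear_combination (-deriv φ 1) * hD
  have hβ0 : β = 0 := by
    have t1 : Filter.Tendsto φ (nhdsWithin 0 (Set.Ioi 0)) (nhds 0) := by
      have := (pc 0 (by simp)).mono (Set.Ioi_subset_Ici_self)
      rw [ContinuousWithinAt, p0] at this
      exact this
    have t2 : Filter.Tendsto φ (nhdsWithin 0 (Set.Ioi 0)) (nhds β) := by
      have hc : Continuous (fun t => α * u t + β * w t) :=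
        (continuous_const.mul h.cu).add (continuous_const.mul hw.cu)
      have := (hc.tendsto 0).mono_left (nhdsWithin_le_nhds (s := Set.Ioi 0))
      simp only [h0, w0, mul_zero, mul_one, zero_add] at this
      refine this.congr' ?_
      filter_upwards [self_mem_nhdsWithin] with t ht
      exact (key t ht).symm
    exact tendsto_nhds_unique t2 t1
  refine ⟨α, fun R hR => ?_⟩
  rcases eq_or_lt_of_le hR with e | e
  · rw [← e, p0, h0, mul_zero]
  · rw [key R e, hβ0]; ring

/-- `𝓛` has exactly one negative eigenvalue `ξ_d`, which is simple, with a smooth, strictly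
positive, exponentially decaying eigenfunction `φ_d`; for every other `ξ < 0` the only
Dirichlet `L²` solution is trivial. -/
theorem unique_simple_negative_eigenvalue :
    ∃ (ξd : ℝ) (φd : ℝ → ℝ) (C : ℝ), ξd < 0 ∧ 0 < C ∧
      -- φd is a smooth nonzero eigenfunction, positive on (0,∞)
      ContDiffOn ℝ (⊤ : ℕ∞) φd (Set.Ici 0) ∧
      IsDirichletEigenfunction ξd φd ∧
      (∀ R > (0 : ℝ), 0 < φd R) ∧
      -- exponential decay
      (∀ R ≥ (0 : ℝ), |φd R| ≤ C * Real.exp (-(Real.sqrt |ξd| * R) / 2)) ∧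
      -- the eigenvalue ξd is simple
      (∀ φ : ℝ → ℝ, IsDirichletEigenfunction ξd φ →
        ∃ c : ℝ, ∀ R ≥ (0 : ℝ), φ R = c * φd R) ∧
      -- no other negative eigenvalue
      (∀ ξ : ℝ, ξ < 0 → ξ ≠ ξd → ∀ φ : ℝ → ℝ, IsDirichletEigenfunction ξ φ →
        ∀ R ≥ (0 : ℝ), φ R = 0) := by
  obtain ⟨k, u, v, C, hk, hC, h, h0, h1, hpos, hb⟩ := exists_ground
  have hi := integrable_of_decay h.cu hk hb
  have hdu : deriv u = v := funext fun t => (h.du t).deriv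
  have hdv : deriv v = fun t => (k - pot t) * u t := funext fun t => (h.dv t).deriv
  refine ⟨-k, u, C, by linarith, hC, h.contDiff.contDiffOn, ?_, hpos, ?_, ?_, ?_⟩
  · refine ⟨h0, h.cu.continuousOn, fun R _ => by rw [hdu]; exact h.du R,
      fun R _ => by rw [hdu, hdv]; exact h.dv R, fun R _ => ?_, hi⟩
    rw [hdu, hdv]
    unfold pot
    ring
  · rw [abs_neg, abs_of_pos hk]
    exact hb
  · intro φ hφ
    exact reduce hφ (by rw [neg_neg]; exact h) h0 h1
  · intro ξ hξ hne φ hφ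
    obtain ⟨a, b, hs, a0, b1⟩ := exists_sol (-ξ) 0 1
    obtain ⟨c, hc⟩ := reduce hφ hs a0 b1
    by_cases hc0 : c = 0
    · intro R hR
      rw [hc R hR, hc0, zero_mul]
    exfalso
    have hia : MeasureTheory.IntegrableOn (fun R => a R ^ 2) (Set.Ioi 0) := by
      have := hφ.2.2.2.2.2.const_mul ((c ^ 2)⁻¹)
      refine MeasureTheory.IntegrableOn.congr_fun this (fun R hR => ?_) measurableSet_Ioi
      have e := hc R (le_of_lt hR)
      simp only [e]
      field_simp
    have hκ : 0 < -ξ := by linarith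
    have hposa := zero_free hκ hs a0 b1 hia
    obtain ⟨t1, t2⟩ := decay_gen hκ hs hia
    obtain ⟨t3, t4⟩ := decay_gen hk h hi
    rcases lt_or_gt_of_ne (show -ξ ≠ k by intro e; apply hne; linarith) with hlt | hlt
    · exact wronski_lt hlt h hs h0 a0 hpos hposa t3 t4 t1 t2
    · exact wronski_lt hlt hs h a0 h0 hposa hpos t1 t2 t3 t4

end NegativeEigenvalue
end
end

section
/- Let β > −1/2 and γ > 0 be such that β − γ is not a nonnegative integer, and let f(a) = (1 − a)^γ g(a) where g is analytic on a neighborhood of a = 1. Then there exist ε > 0 and a function h analytic on a neighborhood of a = 1 such that w(a) := (1 − a)^{γ+1} h(a) solves L_β w = f on (1 − ε, 1). If instead β − γ is a nonnegative integer, there is a solution of the modified form w(a) = (1 − a)^{γ+1} h(a) + c φ₂(a) ln(1 − a) with h analytic near 1, a suitable constant c, and φ₂(a) = (1−a)^{β+1}(1 + O(1−a)) a solution of L_β φ₂ = 0. -/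
noncomputable section

namespace LBetaInhomogeneous

/-- The operator `L_β = (1-a²)∂²_a + 2(a⁻¹ + aβ - a)∂_a - β² + β`. -/
def Lbeta (β : ℝ) (w : ℝ → ℝ) (a : ℝ) : ℝ :=
  (1 - a ^ 2) * deriv (deriv w) a + 2 * (a⁻¹ + a * β - a) * deriv w a + (-β ^ 2 + β) * w a

/-- local power series at zero -/
def PS (f : ℝ → ℝ) (c : ℕ → ℝ) : Prop :=
  ∀ᶠ x in nhds (0:ℝ), HasSum (fun n => c n * x ^ n) (f x)

lemma PS.hasF {f : ℝ → ℝ} {c : ℕ → ℝ} (h : PS f c) :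
    HasFPowerSeriesAt f (FormalMultilinearSeries.ofScalars ℝ c) 0 := by
  rw [hasFPowerSeriesAt_iff]
  filter_upwards [h] with x hx
  simpa [FormalMultilinearSeries.coeff_ofScalars, mul_comm] using hx

lemma PS.analyticAt {f : ℝ → ℝ} {c : ℕ → ℝ} (h : PS f c) : AnalyticAt ℝ f 0 :=
  h.hasF.analyticAt

lemma exists_PS {f : ℝ → ℝ} (h : AnalyticAt ℝ f 0) : ∃ c, PS f c := by
  obtain ⟨p, hp⟩ := h
  refine ⟨p.coeff, ?_⟩
  rw [hasFPowerSeriesAt_iff] at hp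
  filter_upwards [hp] with x hx
  simpa [mul_comm] using hx

lemma PS.zero_eq {f : ℝ → ℝ} {c : ℕ → ℝ} (h : PS f c) : f 0 = c 0 := by
  have h0 := h.self_of_nhds
  have h1 := hasSum_single (f := fun n => c n * (0:ℝ) ^ n) 0 (fun n hn => by simp [hn])
  simpa using h0.unique h1

lemma PS.deriv {f : ℝ → ℝ} {c : ℕ → ℝ} (h : PS f c) :
    PS (deriv f) (fun n => (n + 1) * c (n + 1)) := by
  obtain ⟨r, hr⟩ := h.hasF
  have h1 : HasFPowerSeriesAt (fderiv ℝ f) _ 0 := ⟨r, hr.fderiv⟩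
  rw [hasFPowerSeriesAt_iff] at h1
  filter_upwards [h1] with x hx
  have h2 := hx.mapL (ContinuousLinearMap.apply ℝ ℝ (1:ℝ))
  simp only [zero_add, ContinuousLinearMap.apply_apply, _root_.smul_apply,
    FormalMultilinearSeries.derivSeries_coeff_one, FormalMultilinearSeries.coeff_ofScalars,
    fderiv_apply_one_eq_deriv] at h2
  convert! h2 using 1
  funext n
  simp only [nsmul_eq_mul, smul_eq_mul]; push_cast; ring

lemma PS.add {f g : ℝ → ℝ} {c d : ℕ → ℝ} (hf : PS f c) (hg : PS g d) :
    PS (fun x => f x + g x) (fun n => c n + d n) := by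
  filter_upwards [hf, hg] with x h1 h2
  simpa [add_mul] using h1.add h2

lemma PS.smul {f : ℝ → ℝ} {c : ℕ → ℝ} (t : ℝ) (hf : PS f c) :
    PS (fun x => t * f x) (fun n => t * c n) := by
  filter_upwards [hf] with x h1
  simpa [mul_assoc] using h1.mul_left t

lemma PS.shift {f : ℝ → ℝ} {c : ℕ → ℝ} (h0 : c 0 = 0) (hf : PS f (fun n => c (n + 1))) :
    PS (fun x => x * f x) c := by
  filter_upwards [hf] with x h1
  have := h1.mul_left x
  rw [← hasSum_nat_add_iff' 1]
  simp only [Finset.sum_range_one, h0, zero_mul, sub_zero]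
  convert! this using 1
  funext n
  ring

lemma PS.congr {f g : ℝ → ℝ} {c d : ℕ → ℝ} (hf : PS f c) (h1 : ∀ x, g x = f x)
    (h2 : ∀ n, d n = c n) : PS g d := by
  rw [funext h1, funext h2]; exact hf

lemma PS.unique {f g : ℝ → ℝ} {c : ℕ → ℝ} (hf : PS f c) (hg : PS g c) :
    ∀ᶠ x in nhds (0:ℝ), f x = g x := by
  filter_upwards [hf, hg] with x h1 h2 using h1.unique h2

lemma PS.bound {f : ℝ → ℝ} {c : ℕ → ℝ} (h : PS f c) :
    ∃ M ρ : ℝ, 0 < ρ ∧ 0 ≤ M ∧ ∀ n, |c n| ≤ M * ρ ^ n := by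
  obtain ⟨δ, hδ, hb⟩ := Metric.eventually_nhds_iff.1 h
  have hs := (hb (y := δ / 2) (by rw [Real.dist_eq, sub_zero, abs_of_pos] <;> linarith)).summable
  have hb := hs.tendsto_atTop_zero.norm.bddAbove_range
  obtain ⟨M, hM⟩ := hb
  have hM' : ∀ n, |c n * (δ / 2) ^ n| ≤ M := fun n => hM ⟨n, rfl⟩
  refine ⟨M, (δ/2)⁻¹, by positivity, (abs_nonneg _).trans (hM' 0), fun n => ?_⟩
  have := hM' n
  rw [abs_mul, abs_of_pos (by positivity : 0 < (δ / 2) ^ n)] at this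
  rw [inv_pow, ← div_eq_mul_inv, le_div_iff₀ (by positivity)]
  exact this

lemma PS_of_bound {c : ℕ → ℝ} {M ρ : ℝ} (hρ : 0 < ρ) (h : ∀ n, |c n| ≤ M * ρ ^ n) :
    PS (fun x => ∑' n, c n * x ^ n) c := by
  have : ∀ᶠ x in nhds (0:ℝ), |x| < ρ⁻¹ := by
    have : ContinuousAt (fun x : ℝ => |x|) 0 := by fun_prop
    exact this.eventually_lt_const (by simpa using hρ)
  filter_upwards [this] with x hx
  apply Summable.hasSum
  have hlt : ρ * |x| < 1 := by
    have := mul_lt_mul_of_pos_left hx hρ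
    rwa [mul_inv_cancel₀ hρ.ne'] at this
  refine Summable.of_norm_bounded (g := fun n => M * (ρ * |x|) ^ n)
    ((summable_geometric_of_lt_one (by positivity) hlt).mul_left M) (fun n => ?_)
  rw [Real.norm_eq_abs, abs_mul, abs_pow, mul_pow, ← mul_assoc]
  exact mul_le_mul_of_nonneg_right (h n) (by positivity)

lemma geom_bound (k : ℕ → ℝ) (n₀ : ℕ) (K M ρ : ℝ) (hK : 0 ≤ K) (hM : 0 ≤ M) (hρ : 0 < ρ)
    (h : ∀ n ≥ n₀, |k (n + 2)| ≤ K * (|k (n + 1)| + |k n| + M * ρ ^ n)) :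
    ∃ A R : ℝ, 0 < R ∧ 0 ≤ A ∧ ∀ n, |k n| ≤ A * R ^ n := by
  set R := 1 + ρ + 3 * K with hR
  set A := M + ∑ i ∈ Finset.range (n₀ + 2), |k i| with hA
  have hA0 : 0 ≤ A := by positivity
  have hMA : M ≤ A := by
    have : 0 ≤ ∑ i ∈ Finset.range (n₀ + 2), |k i| := by positivity
    linarith
  have hR1 : 1 ≤ R := by linarith
  have hbase : ∀ n < n₀ + 2, |k n| ≤ A * R ^ n := by
    intro n hn
    have h1 : |k n| ≤ ∑ i ∈ Finset.range (n₀ + 2), |k i| :=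
      Finset.single_le_sum (f := fun i => |k i|) (fun i _ => abs_nonneg _) (Finset.mem_range.2 hn)
    have h2 : 1 ≤ R ^ n := one_le_pow₀ hR1
    nlinarith
  refine ⟨A, R, by linarith, hA0, fun n => ?_⟩
  induction n using Nat.strong_induction_on with
  | _ n ih =>
    by_cases hn : n < n₀ + 2
    · exact hbase n hn
    · obtain ⟨m, rfl⟩ : ∃ m, n = m + 2 := ⟨n - 2, by omega⟩
      have h1 := ih (m + 1) (by omega)
      have h2 := ih m (by omega)
      have h3 := h m (by omega)
      have hp : 0 < R ^ m := by positivity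
      have h4 : R ^ m ≤ R ^ (m + 1) := pow_le_pow_right₀ hR1 (by omega)
      have h5 : ρ ^ m ≤ R ^ m := pow_le_pow_left₀ hρ.le (by linarith) m
      have h6 : M * ρ ^ m ≤ A * R ^ (m + 1) := mul_le_mul hMA (h5.trans h4) (by positivity) hA0
      have h7 : A * R ^ m ≤ A * R ^ (m + 1) := mul_le_mul_of_nonneg_left h4 hA0
      calc |k (m + 2)| ≤ K * (3 * (A * R ^ (m + 1))) :=
            h3.trans (mul_le_mul_of_nonneg_left (by linarith) hK)
        _ = 3 * K * (A * R ^ (m + 1)) := by ring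
        _ ≤ R * (A * R ^ (m + 1)) := mul_le_mul_of_nonneg_right (by linarith) (by positivity)
        _ = A * R ^ (m + 2) := by ring

/-- recursion for the coefficients; the coefficient of `x^n` is `ks (n+2)` -/
def ks (I P Q G : ℕ → ℝ) : ℕ → ℝ
  | 0 => 0
  | 1 => 0
  | (n + 2) => if I n = 0 then 1 else
      (G n - P n * ks I P Q G (n + 1) - Q n * ks I P Q G n) / I n

lemma ks_spec (I P Q G : ℕ → ℝ) (n : ℕ) (h : I n ≠ 0) :
    I n * ks I P Q G (n + 2) + P n * ks I P Q G (n + 1) + Q n * ks I P Q G n = G n := by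
  rw [ks, if_neg h]; field_simp; ring

lemma ks_prefix (I P Q G G' : ℕ → ℝ) (N : ℕ) (h : ∀ n < N, G n = G' n) (n : ℕ) (hn : n < N + 2) :
    ks I P Q G n = ks I P Q G' n := by
  induction n using Nat.strong_induction_on with
  | _ n ih =>
    match n with
    | 0 => rfl
    | 1 => rfl
    | n + 2 => rw [ks, ks, ih (n + 1) (by omega) (by omega), ih n (by omega) (by omega),
        h n (by omega)]

/-- indicial coefficient -/
def cI (β σ : ℝ) (n : ℕ) : ℝ := 2 * (σ + 1 + n) * (σ + n - β)
/-- first coefficient -/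
def cP (β σ : ℝ) (n : ℕ) : ℝ :=
  -3 * ((σ + n) * (σ + n - 1)) + 4 * (β - 1) * (σ + n) + (β - β ^ 2)
/-- second coefficient -/
def cQ (β σ : ℝ) (n : ℕ) : ℝ :=
  (σ + n - 1) * (σ + n - 2) - 2 * (β - 1) * (σ + n - 1) - (β - β ^ 2)

lemma coef_bound (β σ : ℝ) : ∃ K : ℝ, 0 ≤ K ∧ ∃ n₀ : ℕ, ∀ n ≥ n₀,
    1 ≤ cI β σ n ∧ |cP β σ n| ≤ K * cI β σ n ∧ |cQ β σ n| ≤ K * cI β σ n := by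
  set u := |β - 1| with hu
  set v := |β - β ^ 2| with hv
  have hu0 : 0 ≤ u := abs_nonneg _
  have hv0 : 0 ≤ v := abs_nonneg _
  refine ⟨3 + 4 * u + v, by positivity, ⌈|σ| + 2 * |β| + 4⌉₊, fun n hn => ?_⟩
  have hn' : |σ| + 2 * |β| + 4 ≤ n := (Nat.le_ceil _).trans (by exact_mod_cast hn)
  obtain ⟨t, ht⟩ : ∃ t : ℝ, t = σ + n := ⟨_, rfl⟩
  have h1 : 2 * |β| + 4 ≤ t := by have := neg_abs_le σ; linarith
  have hb : 0 ≤ |β| := abs_nonneg _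
  have hI : t ^ 2 ≤ cI β σ n := by
    have : cI β σ n = 2 * (t + 1) * (t - β) := by rw [cI, ht]; ring
    rw [this]
    have := le_abs_self β
    nlinarith
  have hu1 := abs_le.1 hu.ge
  have hv1 := abs_le.1 hv.ge
  refine ⟨by nlinarith, ?_, ?_⟩
  · refine le_trans ?_ (mul_le_mul_of_nonneg_left hI (by positivity))
    have : cP β σ n = -(3 * (t * (t - 1))) + 4 * ((β - 1) * t) + (β - β ^ 2) := by rw [cP, ht]; ring
    rw [this]
    have e1 : |(β - 1) * t| ≤ u * t ^ 2 := by
      rw [abs_mul, abs_of_nonneg (by linarith : 0 ≤ t)]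
      exact mul_le_mul_of_nonneg_left (by nlinarith) hu0
    have e2 : v ≤ v * t ^ 2 := by nlinarith [mul_nonneg hv0 (by nlinarith : 0 ≤ t ^ 2 - 1)]
    have e3 := abs_le.1 e1
    rw [abs_le]; constructor <;> nlinarith
  · refine le_trans ?_ (mul_le_mul_of_nonneg_left hI (by positivity))
    have : cQ β σ n = (t - 1) * (t - 2) - 2 * ((β - 1) * (t - 1)) - (β - β ^ 2) := by
      rw [cQ, ht]; ring
    rw [this]
    have e1 : |(β - 1) * (t - 1)| ≤ u * t ^ 2 := by
      rw [abs_mul, abs_of_nonneg (by linarith : 0 ≤ t - 1)]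
      exact mul_le_mul_of_nonneg_left (by nlinarith) hu0
    have e2 : v ≤ v * t ^ 2 := by nlinarith [mul_nonneg hv0 (by nlinarith : 0 ≤ t ^ 2 - 1)]
    have e3 := abs_le.1 e1
    have e4 : 0 ≤ u * t ^ 2 := by positivity
    rw [abs_le]; constructor <;> nlinarith

/-- first derived function -/
def E1 (σ : ℝ) (H : ℝ → ℝ) (x : ℝ) : ℝ := (σ + 1) * H x + x * deriv H x
/-- second derived function -/
def E2 (σ : ℝ) (H : ℝ → ℝ) (x : ℝ) : ℝ :=
  (σ + 1) * σ * H x + 2 * (σ + 1) * (x * deriv H x) + x * (x * deriv (deriv H) x)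
/-- reduced operator -/
def Red (β σ : ℝ) (H : ℝ → ℝ) (x : ℝ) : ℝ :=
  (2 - 3 * x + x ^ 2) * E2 σ H x + (-2 * β + 4 * (β - 1) * x - 2 * (β - 1) * x ^ 2) * E1 σ H x
    + (β - β ^ 2) * (x - x ^ 2) * H x

lemma core (β σ : ℝ) (G : ℝ → ℝ) (c k : ℕ → ℝ) (hG : PS G c) (h0 : k 0 = 0) (h1 : k 1 = 0)
    (hk : ∀ n, cI β σ n * k (n + 2) + cP β σ n * k (n + 1) + cQ β σ n * k n = c n) :
    ∃ H : ℝ → ℝ, AnalyticAt ℝ H 0 ∧ H 0 = k 2 ∧ ∀ᶠ x in nhds (0:ℝ), Red β σ H x = G x := by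
  obtain ⟨M, ρ, hρ, hM, hMc⟩ := hG.bound
  obtain ⟨K, hK, n₀, hn⟩ := coef_bound β σ
  obtain ⟨A, R, hR, hA, hb⟩ : ∃ A R : ℝ, 0 < R ∧ 0 ≤ A ∧ ∀ n, |k n| ≤ A * R ^ n := by
    refine geom_bound k n₀ (K + 1) M ρ (by positivity) hM hρ fun n hn' => ?_
    obtain ⟨a1, a2, a3⟩ := hn n hn'
    have e1 : cI β σ n * |k (n + 2)| = |c n - cP β σ n * k (n + 1) - cQ β σ n * k n| := by
      rw [← hk n, ← abs_of_pos (by linarith : 0 < cI β σ n), ← abs_mul,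
        abs_of_pos (by linarith : 0 < cI β σ n)]
      congr 1; ring
    have e2 : |c n - cP β σ n * k (n + 1) - cQ β σ n * k n| ≤
        |c n| + |cP β σ n| * |k (n + 1)| + |cQ β σ n| * |k n| := by
      rw [← abs_mul, ← abs_mul]
      exact (abs_sub _ _).trans (add_le_add_left (abs_sub _ _) _)
    have e3 := mul_le_mul_of_nonneg_right a2 (abs_nonneg (k (n + 1)))
    have e4 := mul_le_mul_of_nonneg_right a3 (abs_nonneg (k n))
    have e5 := hMc n
    have hk1 := abs_nonneg (k (n + 1))
    have hk2 := abs_nonneg (k n)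
    have e6 : M * ρ ^ n ≤ cI β σ n * (M * ρ ^ n) := le_mul_of_one_le_left (by positivity) a1
    have e7 : 0 ≤ M * ρ ^ n := by positivity
    refine le_of_mul_le_mul_left ?_ (by linarith : 0 < cI β σ n)
    have e8 : 0 ≤ cI β σ n * (K * (M * ρ ^ n)) := by
      have : 0 ≤ cI β σ n := by linarith
      positivity
    have e9 : 0 ≤ cI β σ n * (|k (n + 1)| + |k n|) := by
      have : 0 ≤ cI β σ n := by linarith
      positivity
    nlinarith
  have hb' : ∀ n, |k (n + 2)| ≤ (A * R ^ 2) * R ^ n := fun n => (hb (n + 2)).trans_eq (by ring)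
  have hH := PS_of_bound (c := fun n => k (n + 2)) hR hb'
  set H : ℝ → ℝ := fun x => ∑' n, k (n + 2) * x ^ n with hHdef
  refine ⟨H, hH.analyticAt, hH.zero_eq, ?_⟩
  have hD1 : PS (fun x => x * deriv H x) (fun n => n * k (n + 2)) :=
    PS.shift (by simp) (hH.deriv.congr (fun _ => rfl) (fun n => by push_cast; ring))
  have hD2 : PS (fun x => x * (x * deriv (deriv H) x)) (fun n => n * (n - 1) * k (n + 2)) := by
    refine PS.shift (by simp) (PS.shift (by simp)
      (hH.deriv.deriv.congr (fun _ => rfl) (fun n => by push_cast; ring)))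
  have hE1 : PS (E1 σ H) (fun n => (σ + 1 + n) * k (n + 2)) :=
    ((hH.smul (σ + 1)).add hD1).congr (fun _ => rfl) (fun n => by ring)
  have hE2 : PS (E2 σ H) (fun n => (σ + 1 + n) * (σ + n) * k (n + 2)) :=
    (((hH.smul ((σ + 1) * σ)).add (hD1.smul (2 * (σ + 1)))).add hD2).congr (fun _ => rfl)
      (fun n => by ring)
  have hI : PS (fun x => 2 * E2 σ H x + -2 * β * E1 σ H x) (fun n => cI β σ n * k (n + 2)) :=
    ((hE2.smul 2).add (hE1.smul (-2 * β))).congr (fun _ => rfl) (fun n => by rw [cI]; ring)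
  have hP : PS (fun x => x * (-3 * E2 σ H x + 4 * (β - 1) * E1 σ H x + (β - β ^ 2) * H x))
      (fun n => cP β σ n * k (n + 1)) := by
    refine PS.shift (by simp [h1]) ?_
    exact (((hE2.smul (-3)).add (hE1.smul (4 * (β - 1)))).add (hH.smul (β - β ^ 2))).congr
      (fun _ => rfl) (fun n => by rw [cP]; push_cast; ring)
  have hQ : PS (fun x => x * (x * (1 * E2 σ H x + -2 * (β - 1) * E1 σ H x + -(β - β ^ 2) * H x)))
      (fun n => cQ β σ n * k n) := by
    refine PS.shift (by simp [h0]) (PS.shift (by simp [h1]) ?_)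
    exact (((hE2.smul 1).add (hE1.smul (-2 * (β - 1)))).add (hH.smul (-(β - β ^ 2)))).congr
      (fun _ => rfl) (fun n => by rw [cQ]; push_cast; ring)
  have hT : PS (Red β σ H) c :=
    ((hI.add hP).add hQ).congr (fun x => by rw [Red]; ring) (fun n => (hk n).symm)
  exact hT.unique hG

lemma PS.powShift {f : ℝ → ℝ} {d : ℕ → ℝ} (hf : PS f d) (N : ℕ) :
    PS (fun x => x ^ N * f x) (fun n => if n < N then 0 else d (n - N)) := by
  induction N with
  | zero => exact hf.congr (fun x => by simp) (fun n => by simp)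
  | succ N ih =>
    have := PS.shift (c := fun n => if n < N + 1 then 0 else d (n - (N + 1))) (by simp)
      (ih.congr (fun _ => rfl) (fun n => by simp))
    exact this.congr (fun x => by ring) (fun _ => rfl)

lemma Lbeta_eval (β a : ℝ) (F F1 : ℝ → ℝ) (F2 : ℝ)
    (h1 : ∀ᶠ x in nhds (1 - a), HasDerivAt F (F1 x) x) (h2 : HasDerivAt F1 F2 (1 - a)) :
    Lbeta β (fun y => F (1 - y)) a =
      (1 - a ^ 2) * F2 - 2 * (a⁻¹ + a * β - a) * F1 (1 - a) + (-β ^ 2 + β) * F (1 - a) := by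
  have hs : ∀ y : ℝ, HasDerivAt (fun y : ℝ => 1 - y) (-1) y := fun y => by
    simpa using (hasDerivAt_id y).const_sub 1
  have e1 : ∀ᶠ y in nhds a, deriv (fun y => F (1 - y)) y = -F1 (1 - y) := by
    have : Filter.Tendsto (fun y : ℝ => 1 - y) (nhds a) (nhds (1 - a)) :=
      (hs a).continuousAt
    filter_upwards [this.eventually h1] with y hy
    have := (HasDerivAt.comp y hy (hs y)).deriv
    simpa [Function.comp_def] using this
  have e2 : deriv (deriv (fun y => F (1 - y))) a = F2 := by
    rw [Filter.EventuallyEq.deriv_eq e1]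
    have := (HasDerivAt.comp a h2 (hs a)).neg.deriv
    simpa [Function.comp_def, Pi.neg_def] using this
  rw [Lbeta, e2, e1.self_of_nhds]; ring

lemma hd1 (σ : ℝ) (H : ℝ → ℝ) (x : ℝ) (hx : 0 < x) (hH : AnalyticAt ℝ H x) :
    HasDerivAt (fun x => x ^ (σ + 1) * H x) (x ^ σ * E1 σ H x) x := by
  have h1 := Real.hasDerivAt_rpow_const (x := x) (p := σ + 1) (Or.inl hx.ne')
  convert! h1.mul hH.differentiableAt.hasDerivAt using 1
  rw [E1, add_sub_cancel_right, Real.rpow_add_one hx.ne']; ring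

lemma hd2 (σ : ℝ) (H : ℝ → ℝ) (x : ℝ) (hx : 0 < x) (hH : AnalyticAt ℝ H x) :
    HasDerivAt (fun x => x ^ σ * E1 σ H x) (x ^ (σ - 1) * E2 σ H x) x := by
  have h1 := Real.hasDerivAt_rpow_const (x := x) (p := σ) (Or.inl hx.ne')
  have d1 := hH.differentiableAt.hasDerivAt
  have d2 := hH.deriv.differentiableAt.hasDerivAt
  have d3 := (d1.const_mul (σ + 1)).add ((hasDerivAt_id x).mul d2)
  convert! h1.mul d3 using 1
  have e : x ^ σ = x ^ (σ - 1) * x := by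
    rw [← Real.rpow_add_one hx.ne']; ring_nf
  simp only [E1, E2, id, e, Pi.add_apply, Pi.mul_apply]; ring

lemma Lbeta_pow (β σ a : ℝ) (ha : 0 < a) (ha1 : a < 1) (H : ℝ → ℝ) (hH : AnalyticAt ℝ H (1 - a)) :
    a * Lbeta β (fun y => (1 - y) ^ (σ + 1) * H (1 - y)) a = (1 - a) ^ σ * Red β σ H (1 - a) := by
  have hx : 0 < 1 - a := by linarith
  have h1 : ∀ᶠ x in nhds (1 - a), HasDerivAt (fun x => x ^ (σ + 1) * H x) (x ^ σ * E1 σ H x) x := by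
    filter_upwards [hH.eventually_analyticAt, lt_mem_nhds hx] with x h h' using hd1 σ H x h' h
  rw [Lbeta_eval β a _ _ _ h1 (hd2 σ H _ hx hH)]
  obtain ⟨x, rfl⟩ : ∃ x, a = 1 - x := ⟨1 - a, by ring⟩
  simp only [sub_sub_cancel] at *
  have e : x ^ σ = x ^ (σ - 1) * x := by
    rw [← Real.rpow_add_one hx.ne']; ring_nf
  rw [Red, Real.rpow_add_one hx.ne', e]
  field_simp
  ring

/-- remainder from the logarithm -/
def qf (β : ℝ) (p : ℝ → ℝ) (x : ℝ) : ℝ :=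
  (2 - 3 * x + x ^ 2) * (2 * E1 β p x - p x)
    + (-2 * β + 4 * (β - 1) * x - 2 * (β - 1) * x ^ 2) * p x

lemma Lbeta_log (β σ c a : ℝ) (ha : 0 < a) (ha1 : a < 1) (H p : ℝ → ℝ)
    (hH : AnalyticAt ℝ H (1 - a)) (hp : AnalyticAt ℝ p (1 - a)) :
    a * Lbeta β (fun y => (1 - y) ^ (σ + 1) * H (1 - y) +
      c * ((1 - y) ^ (β + 1) * p (1 - y)) * Real.log (1 - y)) a
      = (1 - a) ^ σ * Red β σ H (1 - a) + c * (1 - a) ^ β *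
        (Red β β p (1 - a) * Real.log (1 - a) + qf β p (1 - a)) := by
  have hx : 0 < 1 - a := by linarith
  have h1 : ∀ᶠ x in nhds (1 - a), HasDerivAt
      (fun x => x ^ (σ + 1) * H x + c * (x ^ (β + 1) * p x) * Real.log x)
      (x ^ σ * E1 σ H x + c * (x ^ β * E1 β p x * Real.log x + x ^ (β - 1 + 1) * p x)) x := by
    filter_upwards [hH.eventually_analyticAt, hp.eventually_analyticAt, lt_mem_nhds hx]
      with x h h' hx
    convert! (hd1 σ H x hx h).add (((hd1 β p x hx h').const_mul c).mul (Real.hasDerivAt_log hx.ne'))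
      using 1
    rw [sub_add_cancel, Real.rpow_add_one hx.ne']
    field_simp
  have h2 := (hd2 σ H _ hx hH).add ((((hd2 β p _ hx hp).mul (Real.hasDerivAt_log hx.ne')).add
    (hd1 (β - 1) p _ hx hp)).const_mul c)
  have := Lbeta_eval β a _ _ _ h1 h2
  rw [this]
  clear this h1 h2
  obtain ⟨x, rfl⟩ : ∃ x, a = 1 - x := ⟨1 - a, by ring⟩
  simp only [sub_sub_cancel] at *
  have e : ∀ σ : ℝ, x ^ σ = x ^ (σ - 1) * x := fun σ => by
    rw [← Real.rpow_add_one hx.ne']; ring_nf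
  have e' : E1 (β - 1) p x = E1 β p x - p x := by rw [E1, E1]; ring
  rw [Red, Red, qf, e', sub_add_cancel, Real.rpow_add_one hx.ne', Real.rpow_add_one hx.ne',
    e σ, e β]
  field_simp
  ring

lemma cI_ne (β σ : ℝ) (hσ : -1 < σ) (n : ℕ) (h : β - σ ≠ n) : cI β σ n ≠ 0 := by
  rw [cI]
  have h1 : 0 < σ + 1 + n := by
    have : (0:ℝ) ≤ n := Nat.cast_nonneg n
    linarith
  have h2 : σ + n - β ≠ 0 := fun h' => h (by linarith)
  positivity

/-- Solving `L_β w = f` near `a = 1` for `f(a) = (1-a)^γ g(a)` with `g` analytic near `1`: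
if `β - γ` is not a nonnegative integer there is a solution `w = (1-a)^{γ+1} h(a)` with `h`
analytic near `1`; if `β - γ` is a nonnegative integer there is a solution of the modified
form `w = (1-a)^{γ+1} h(a) + c φ₂(a) ln(1-a)`, where `φ₂ = (1-a)^{β+1}(1 + O(1-a))` solves
`L_β φ₂ = 0`. -/
theorem inhomogeneous_solution_near_one (β γ : ℝ) (hβ : -(1 : ℝ) / 2 < β) (hγ : 0 < γ)
    (g : ℝ → ℝ) (ε₀ : ℝ) (hε₀ : 0 < ε₀)
    (hg : ∀ a ∈ Metric.ball (1 : ℝ) ε₀, AnalyticAt ℝ g a) :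
    ((¬ ∃ n : ℕ, β - γ = (n : ℝ)) →
      ∃ ε > (0 : ℝ), ∃ h : ℝ → ℝ,
        (∀ a ∈ Metric.ball (1 : ℝ) ε, AnalyticAt ℝ h a) ∧
        (∀ a ∈ Set.Ioo (1 - ε) 1,
          Lbeta β (fun x => (1 - x) ^ (γ + 1) * h x) a = (1 - a) ^ γ * g a)) ∧
    ((∃ n : ℕ, β - γ = (n : ℝ)) →
      ∃ ε > (0 : ℝ), ∃ (h φ₂ : ℝ → ℝ) (c C : ℝ),
        (∀ a ∈ Metric.ball (1 : ℝ) ε, AnalyticAt ℝ h a) ∧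
        (∀ a ∈ Set.Ioo (1 - ε) 1, Lbeta β φ₂ a = 0) ∧
        (∀ a ∈ Set.Ioo (1 - ε) 1, |φ₂ a - (1 - a) ^ (β + 1)| ≤ C * (1 - a) ^ (β + 2)) ∧
        (∀ a ∈ Set.Ioo (1 - ε) 1,
          Lbeta β (fun x => (1 - x) ^ (γ + 1) * h x + c * φ₂ x * Real.log (1 - x)) a
            = (1 - a) ^ γ * g a)) := by
  have hsub : ∀ y : ℝ, AnalyticAt ℝ (fun y : ℝ => 1 - y) y := fun y => by fun_prop
  have hcomp : ∀ (f : ℝ → ℝ) (y : ℝ), AnalyticAt ℝ f (1 - y) →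
      AnalyticAt ℝ (fun y => f (1 - y)) y := fun f y hf =>
    AnalyticAt.comp (g := f) (f := fun y : ℝ => 1 - y) hf (hsub y)
  have hGa : AnalyticAt ℝ (fun x => (1 - x) * g (1 - x)) 0 :=
    (hsub 0).mul (hcomp g 0 (by simpa using hg 1 (by simpa using hε₀)))
  obtain ⟨cG, hcG⟩ := exists_PS hGa
  constructor
  · intro hno
    push Not at hno
    obtain ⟨H, hH, -, hR⟩ := core β γ _ cG (ks (cI β γ) (cP β γ) (cQ β γ) cG) hcG (by rw [ks])
      (by rw [ks]) (fun n => ks_spec _ _ _ _ n (cI_ne β γ (by linarith) n (hno n)))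
    obtain ⟨δ, hδ, hall⟩ := Metric.eventually_nhds_iff.1
      (hH.eventually_analyticAt.and (hR.and (gt_mem_nhds (zero_lt_one' ℝ))))
    have key : ∀ a, |a - 1| < δ → _ := fun a ha => hall (y := 1 - a)
      (by rw [Real.dist_eq, sub_zero, abs_sub_comm]; exact ha)
    refine ⟨δ, hδ, fun a => H (1 - a), fun a ha => hcomp H a (key a ha).1, fun a ha => ?_⟩
    obtain ⟨k1, k2, k3⟩ := key a (by rw [abs_lt]; constructor <;> linarith [ha.1, ha.2])
    have ha0 : 0 < a := by linarith
    apply mul_left_cancel₀ ha0.ne'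
    rw [Lbeta_pow β γ a ha0 ha.2 H k1, k2]
    simp only [sub_sub_cancel]; ring
  · rintro ⟨N, hN⟩
    have hzero : PS (fun _ => 0) (fun _ => 0) := by
      refine Filter.Eventually.of_forall fun x => ?_
      simpa using hasSum_zero
    have hI0 : cI β β 0 = 0 := by simp [cI]
    obtain ⟨p, hp, hp0, hpR⟩ := core β β _ _ (ks (cI β β) (cP β β) (cQ β β) (fun _ => 0)) hzero
      (by rw [ks]) (by rw [ks]) (fun n => by
        rcases Nat.eq_zero_or_pos n with rfl | hn
        · simp [hI0, ks]
        · exact ks_spec _ _ _ _ n (cI_ne β β (by linarith) n (by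
            rw [sub_self]; exact_mod_cast hn.ne)))
    have hp1 : p 0 = 1 := by rw [hp0, ks, if_pos hI0]
    have hq : AnalyticAt ℝ (qf β p) 0 := by
      have := hp.deriv
      unfold qf E1
      fun_prop
    obtain ⟨d, hd⟩ := exists_PS hq
    have hd0 : d 0 ≠ 0 := by
      rw [← hd.zero_eq, qf, E1, hp1]
      have : 0 < β + 1 := by linarith
      intro h
      nlinarith
    have hIN : cI β γ N = 0 := by rw [cI, ← hN]; ring
    set u := ks (cI β γ) (cP β γ) (cQ β γ) cG with hu
    set c := (cG N - cP β γ N * u (N + 1) - cQ β γ N * u N) / d 0 with hc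
    have hG' := hcG.add ((hd.powShift N).smul (-c))
    set G' : ℕ → ℝ := fun n => cG n + -c * (if n < N then 0 else d (n - N)) with hG'def
    have hpre := ks_prefix (cI β γ) (cP β γ) (cQ β γ) cG G' N
      (fun n hn => by simp [hG'def, hn])
    obtain ⟨H, hH, -, hR⟩ := core β γ _ G' (ks (cI β γ) (cP β γ) (cQ β γ) G') hG' (by rw [ks])
      (by rw [ks]) (fun n => by
        rcases eq_or_ne n N with rfl | hn
        · rw [hIN, ← hpre (n + 1) (by omega), ← hpre n (by omega), ← hu]
          simp only [hG'def, lt_irrefl, if_false, Nat.sub_self, hc]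
          field_simp
          ring
        · exact ks_spec _ _ _ _ n (cI_ne β γ (by linarith) n (by
            rw [hN]; exact_mod_cast hn.symm)))
    obtain ⟨C, hC⟩ := hp.differentiableAt.isBigO_sub.bound
    obtain ⟨δ, hδ, hall⟩ := Metric.eventually_nhds_iff.1
      (hH.eventually_analyticAt.and (hR.and ((gt_mem_nhds (zero_lt_one' ℝ)).and
        (hp.eventually_analyticAt.and (hpR.and hC)))))
    have key : ∀ a, |a - 1| < δ → _ := fun a ha => hall (y := 1 - a)
      (by rw [Real.dist_eq, sub_zero, abs_sub_comm]; exact ha)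
    refine ⟨δ, hδ, fun a => H (1 - a), fun a => (1 - a) ^ (β + 1) * p (1 - a), c, C,
      fun a ha => hcomp H a (key a ha).1, fun a ha => ?_, fun a ha => ?_, fun a ha => ?_⟩
    all_goals
      obtain ⟨k1, k2, k3, k4, k5, k6⟩ :=
        key a (by rw [abs_lt]; constructor <;> linarith [ha.1, ha.2])
      have ha0 : 0 < a := by linarith
      have hx : 0 < 1 - a := by linarith [ha.2]
    · apply mul_left_cancel₀ ha0.ne'
      rw [Lbeta_pow β β a ha0 ha.2 p k4, k5]; simp
    · have e : (1 - a) ^ (β + 2) = (1 - a) ^ (β + 1) * (1 - a) := by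
        rw [← Real.rpow_add_one hx.ne']; ring_nf
      have e2 : (1 - a) ^ (β + 1) * p (1 - a) - (1 - a) ^ (β + 1)
        = (1 - a) ^ (β + 1) * (p (1 - a) - 1) := by ring
      have hpos : 0 < (1 - a) ^ (β + 1) := Real.rpow_pos_of_pos hx _
      rw [e, e2, abs_mul, abs_of_pos hpos]
      rw [hp1, sub_zero, Real.norm_eq_abs, Real.norm_eq_abs, abs_of_pos hx] at k6
      calc _ ≤ (1 - a) ^ (β + 1) * (C * (1 - a)) := mul_le_mul_of_nonneg_left k6 hpos.le
        _ = _ := by ring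
    · apply mul_left_cancel₀ ha0.ne'
      rw [Lbeta_log β γ c a ha0 ha.2 H p k1 k4, k2, k5]
      have e : (1 - a) ^ β = (1 - a) ^ γ * (1 - a) ^ N := by
        rw [← Real.rpow_add_natCast hx.ne', ← hN]; ring_nf
      rw [e]
      simp only [sub_sub_cancel]; ring

end LBetaInhomogeneous
end
end

section
/- Let φ(·,z) and θ(·,z) be the fundamental system for 𝓛 y = z y with φ(0,z) = 0, ∂_Rφ(0,z) = 1, θ(0,z) = 1, ∂_Rθ(0,z) = 0, and let φ₀(R) = R(1−R²/3)(1+R²/3)^{−3/2}, θ₀(R) = (1−2R²+R⁴/9)(1+R²/3)^{−3/2}. Then there exist a constant C and functions φ_j, θ_j (j ≥ 1), holomorphic on the half-plane Ω = {u ∈ ℂ : Re u > −1/2}, with |φ_j(u)| ≤ (C^j/(j−1)!) |u| (1+|u|)^{−1/2} and |θ_j(u)| ≤ (C^j/(j−1)!) (1+|u|)^{1/2} on Ω, such that for every z ∈ ℂ and R > 0 the absolutely convergent expansions φ(R,z) = φ₀(R) + R^{−1} Σ_{j≥1} (R²z)^j φ_j(R²) and θ(R,z) = θ₀(R) + Σ_{j≥1}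 (R²z)^j θ_j(R²) hold. Moreover φ₁(u) = −(u/6)(1+o(1)) as u → 0 and φ₁(u) = (√3/2) u^{1/2} (1+o(1)) as u → +∞. -/
open Filter Topology

noncomputable section

namespace SmallEnergyExpansion

/-- `φ₀(R) = R(1 - R²/3)(1 + R²/3)^{-3/2}`. -/
def φ₀ (R : ℝ) : ℝ := R * (1 - R ^ 2 / 3) * (1 + R ^ 2 / 3) ^ (-(3 : ℝ) / 2)

/-- `θ₀(R) = (1 - 2R² + R⁴/9)(1 + R²/3)^{-3/2}`. -/
def θ₀ (R : ℝ) : ℝ := (1 - 2 * R ^ 2 + R ^ 4 / 9) * (1 + R ^ 2 / 3) ^ (-(3 : ℝ) / 2)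

def Om : Set ℂ := {u : ℂ | -(1 : ℝ) / 2 < u.re}

def cq (u : ℂ) : ℂ := (1 + u / 3) ^ (((-(3 : ℝ) / 2 : ℝ)) : ℂ)
def ca (u : ℂ) : ℂ := (1 - u / 3) * cq u
def cb (u : ℂ) : ℂ := (1 - 2 * u + u ^ 2 / 9) * cq u

def JJ (m : ℕ) (F : ℂ → ℂ) (u : ℂ) : ℂ := ∫ t in (0 : ℝ)..1, (t : ℂ) ^ m * F ((t : ℂ) ^ 2 * u)

def gg (p : ℕ) (F : ℂ → ℂ) : ℕ → ℂ → ℂ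
  | 0 => F
  | n + 1 => fun u => -(ca u * JJ (2 * n + p) (fun v => cb v * gg p F n v) u
      - cb u * JJ (2 * n + p + 1) (fun v => ca v * gg p F n v) u)

lemma Om_open : IsOpen Om := isOpen_lt continuous_const Complex.continuous_re

lemma Om_star {u : ℂ} (hu : u ∈ Om) {t : ℝ} (ht : t ∈ Set.Icc (0 : ℝ) 1) : (t : ℂ) ^ 2 * u ∈ Om := by
  have h : -(1 : ℝ) / 2 < u.re := hu
  show -(1 : ℝ) / 2 < ((t : ℂ) ^ 2 * u).re
  rw [← Complex.ofReal_pow, Complex.re_ofReal_mul]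
  have h0 : 0 ≤ t ^ 2 := by positivity
  have h1 : t ^ 2 ≤ 1 := pow_le_one₀ ht.1 ht.2
  rcases h0.eq_or_lt with h2 | h2
  · rw [← h2]; norm_num
  · have := mul_pos h2 (by linarith : 0 < u.re + 1 / 2)
    nlinarith

lemma Om_ofReal {r : ℝ} (hr : 0 ≤ r) : (r : ℂ) ∈ Om := by
  show -(1 : ℝ) / 2 < (r : ℂ).re
  rw [Complex.ofReal_re]; linarith

lemma Om_slit {u : ℂ} (hu : u ∈ Om) : 1 + u / 3 ∈ Complex.slitPlane := by
  have h : -(1 : ℝ) / 2 < u.re := hu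
  left
  have : (u / 3).re = u.re / 3 := by
    rw [show u / 3 = ((1 / 3 : ℝ) : ℂ) * u by push_cast; ring, Complex.re_ofReal_mul]; ring
  rw [Complex.add_re, this, Complex.one_re]; linarith

lemma cq_hasDeriv {u : ℂ} (hu : u ∈ Om) : HasDerivAt cq (-(1 / 2) * cq u / (1 + u / 3)) u := by
  have h1 : HasDerivAt (fun u : ℂ => 1 + u / 3) (1 / 3) u := ((hasDerivAt_id u).div_const 3).const_add 1
  have := h1.cpow_const (c := (((-(3 : ℝ) / 2 : ℝ)) : ℂ)) (Om_slit hu)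
  refine this.congr_deriv ?_
  unfold cq
  rw [Complex.cpow_sub _ _ (Complex.slitPlane_ne_zero (Om_slit hu)), Complex.cpow_one]
  push_cast
  ring

lemma cq_diff : DifferentiableOn ℂ cq Om := fun _ hu => (cq_hasDeriv hu).differentiableAt.differentiableWithinAt

lemma ca_diff : DifferentiableOn ℂ ca Om := by
  unfold ca
  exact DifferentiableOn.mul (by fun_prop) cq_diff
lemma cb_diff : DifferentiableOn ℂ cb Om := by
  unfold cb
  exact DifferentiableOn.mul (by fun_prop) cq_diff

lemma cont_aux (m : ℕ) {F : ℂ → ℂ} (hF : ContinuousOn F Om) {u : ℂ} (hu : u ∈ Om) :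
    ContinuousOn (fun t : ℝ => (t : ℂ) ^ m * F ((t : ℂ) ^ 2 * u)) (Set.Icc 0 1) := by
  refine ContinuousOn.mul (by fun_prop) (hF.comp (by fun_prop) fun t ht => Om_star hu ht)

lemma meas_aux (m : ℕ) {F : ℂ → ℂ} (hF : ContinuousOn F Om) {u : ℂ} (hu : u ∈ Om) :
    MeasureTheory.AEStronglyMeasurable (fun t : ℝ => (t : ℂ) ^ m * F ((t : ℂ) ^ 2 * u))
      (MeasureTheory.volume.restrict (Set.uIoc 0 1)) := by
  rw [Set.uIoc_of_le zero_le_one]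
  exact ((cont_aux m hF hu).mono Set.Ioc_subset_Icc_self).aestronglyMeasurable measurableSet_Ioc

lemma int_aux (m : ℕ) {F : ℂ → ℂ} (hF : ContinuousOn F Om) {u : ℂ} (hu : u ∈ Om) :
    IntervalIntegrable (fun t : ℝ => (t : ℂ) ^ m * F ((t : ℂ) ^ 2 * u)) MeasureTheory.volume 0 1 := by
  apply ContinuousOn.intervalIntegrable
  rw [Set.uIcc_of_le zero_le_one]
  exact cont_aux m hF hu

lemma JJ_diff (m : ℕ) {F : ℂ → ℂ} (hF : DifferentiableOn ℂ F Om) : DifferentiableOn ℂ (JJ m F) Om := by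
  intro u hu
  obtain ⟨ε, hε, hball⟩ := Metric.nhds_basis_closedBall.mem_iff.1 (Om_open.mem_nhds hu)
  have hF' : ContinuousOn (deriv F) Om := (hF.deriv Om_open).continuousOn
  have hK : IsCompact ((fun q : ℝ × ℂ => (q.1 : ℂ) ^ 2 * q.2) '' (Set.Icc (0 : ℝ) 1 ×ˢ Metric.closedBall u ε)) :=
    (isCompact_Icc.prod (isCompact_closedBall u ε)).image (by fun_prop)
  obtain ⟨M, hM⟩ := hK.exists_bound_of_continuousOn (hF'.mono (by
    rintro _ ⟨⟨t, v⟩, ⟨ht, hv⟩, rfl⟩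
    exact Om_star (hball hv) ht))
  have key := intervalIntegral.hasDerivAt_integral_of_dominated_loc_of_deriv_le
    (μ := MeasureTheory.volume) (a := (0 : ℝ)) (b := 1)
    (F := fun (v : ℂ) (t : ℝ) => (t : ℂ) ^ m * F ((t : ℂ) ^ 2 * v))
    (F' := fun (v : ℂ) (t : ℝ) => (t : ℂ) ^ (m + 2) * deriv F ((t : ℂ) ^ 2 * v))
    (x₀ := u) (s := Metric.closedBall u ε) (bound := fun _ => M)
    (Metric.closedBall_mem_nhds u hε)
    (by filter_upwards [Om_open.mem_nhds hu] with v hv using meas_aux m hF.continuousOn hv)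
    (int_aux m hF.continuousOn hu)
    (meas_aux (m + 2) hF' hu)
    (by
      refine Eventually.of_forall fun t ht v hv => ?_
      rw [Set.uIoc_of_le zero_le_one] at ht
      have h1 := hM _ ⟨(t, v), ⟨⟨ht.1.le, ht.2⟩, hv⟩, rfl⟩
      rw [norm_mul, norm_pow, Complex.norm_real, Real.norm_of_nonneg ht.1.le]
      have : t ^ (m + 2) ≤ 1 := pow_le_one₀ ht.1.le ht.2
      calc _ ≤ 1 * ‖deriv F ((t : ℂ) ^ 2 * v)‖ := by gcongr
        _ ≤ M := by simpa using h1)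
    (by simp)
    (by
      refine Eventually.of_forall fun t ht v hv => ?_
      rw [Set.uIoc_of_le zero_le_one] at ht
      have h1 := (hF.differentiableAt (Om_open.mem_nhds (Om_star (hball hv) ⟨ht.1.le, ht.2⟩))).hasDerivAt
      have h2 : HasDerivAt (fun v : ℂ => (t : ℂ) ^ 2 * v) ((t : ℂ) ^ 2) v := by
        simpa using (hasDerivAt_id v).const_mul ((t : ℂ) ^ 2)
      refine ((h1.comp v h2).const_mul ((t : ℂ) ^ m)).congr_deriv ?_
      ring)
  exact key.2.differentiableAt.differentiableWithinAt

lemma gg_diff (p : ℕ) {F : ℂ → ℂ} (hF : DifferentiableOn ℂ F Om) (n : ℕ) :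
    DifferentiableOn ℂ (gg p F n) Om := by
  induction n with
  | zero => exact hF
  | succ n ih =>
    exact ((ca_diff.mul (JJ_diff _ (cb_diff.mul ih))).sub (cb_diff.mul (JJ_diff _ (ca_diff.mul ih)))).neg

/-- bound for JJ -/
lemma JJ_bound (m n : ℕ) (F : ℂ → ℂ) (u : ℂ) (K : ℝ)
    (h : ∀ t : ℝ, 0 < t → t ≤ 1 → t ^ m * ‖F ((t : ℂ) ^ 2 * u)‖ ≤ K * t ^ (2 * n)) :
    ‖JJ m F u‖ ≤ K / (n + 1) := by
  have hK : 0 ≤ K := by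
    have := h 1 one_pos le_rfl
    simp at this
    exact (norm_nonneg _).trans this
  have h1 : ‖JJ m F u‖ ≤ ∫ t in (0 : ℝ)..1, K * t ^ (2 * n) := by
    refine intervalIntegral.norm_integral_le_of_norm_le zero_le_one ?_ ?_
    · refine Eventually.of_forall fun t ht => ?_
      rw [norm_mul, norm_pow, Complex.norm_real, Real.norm_of_nonneg ht.1.le]
      exact h t ht.1 ht.2
    · apply Continuous.intervalIntegrable
      fun_prop
  refine h1.trans ?_
  rw [intervalIntegral.integral_const_mul, integral_pow]
  simp only [one_pow, ne_eq, Nat.add_eq_zero_iff, one_ne_zero, and_false, not_false_eq_true, zero_pow, sub_zero]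
  rw [mul_one_div]
  push_cast
  gcongr
  linarith [(Nat.cast_nonneg n : (0 : ℝ) ≤ n)]

def ww (u : ℂ) : ℝ := Real.sqrt (1 + ‖u‖)
lemma ww_pos (u : ℂ) : 0 < ww u := Real.sqrt_pos.2 (by positivity)
lemma ww_sq (u : ℂ) : ww u ^ 2 = 1 + ‖u‖ := Real.sq_sqrt (by positivity)

lemma cq_ne {u : ℂ} (hu : u ∈ Om) : 1 + u / 3 ≠ 0 := Complex.slitPlane_ne_zero (Om_slit hu)

lemma cq_sq {u : ℂ} (hu : u ∈ Om) : cq u ^ 2 * (1 + u / 3) ^ 3 = 1 := by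
  unfold cq
  rw [← Complex.cpow_nat_mul, ← Complex.cpow_natCast (1 + u / 3) 3, ← Complex.cpow_add _ _ (cq_ne hu)]
  have : ((2 : ℕ) : ℂ) * ((-(3 : ℝ) / 2 : ℝ) : ℂ) + ((3 : ℕ) : ℂ) = 0 := by push_cast; ring
  rw [this, Complex.cpow_zero]

lemma base_lower {u : ℂ} (hu : u ∈ Om) : 1 + ‖u‖ ≤ 8 * ‖1 + u / 3‖ := by
  have h : -(1 : ℝ) / 2 < u.re := hu
  have h1 : 5 / 6 ≤ ‖1 + u / 3‖ := by
    refine le_trans ?_ (Complex.re_le_norm _)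
    have : (u / 3).re = u.re / 3 := by
      rw [show u / 3 = ((1 / 3 : ℝ) : ℂ) * u by push_cast; ring, Complex.re_ofReal_mul]; ring
    rw [Complex.add_re, this, Complex.one_re]; linarith
  have h2 : ‖u‖ ≤ 3 * (‖1 + u / 3‖ + 1) := by
    have : u = 3 * ((1 + u / 3) - 1) := by ring
    calc ‖u‖ = ‖3 * ((1 + u / 3) - 1)‖ := by rw [← this]
      _ = 3 * ‖(1 + u / 3) - 1‖ := by rw [norm_mul]; norm_num
      _ ≤ 3 * (‖1 + u / 3‖ + ‖(1 : ℂ)‖) := by gcongr; exact norm_sub_le _ _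
      _ = _ := by simp
  linarith

lemma cq_bound {u : ℂ} (hu : u ∈ Om) : ‖cq u‖ ≤ 32 / ww u ^ 3 := by
  have hw := ww_pos u
  rw [le_div_iff₀ (by positivity)]
  have h1 : ‖cq u‖ ^ 2 * ‖1 + u / 3‖ ^ 3 = 1 := by
    rw [← norm_pow, ← norm_pow, ← norm_mul, cq_sq hu, norm_one]
  have h2 : (ww u ^ 2) ^ 3 ≤ (8 * ‖1 + u / 3‖) ^ 3 := by
    rw [ww_sq]; gcongr; exact base_lower hu
  have : (‖cq u‖ * ww u ^ 3) ^ 2 ≤ 32 ^ 2 := by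
    calc (‖cq u‖ * ww u ^ 3) ^ 2 = ‖cq u‖ ^ 2 * (ww u ^ 2) ^ 3 := by ring
      _ ≤ ‖cq u‖ ^ 2 * (8 * ‖1 + u / 3‖) ^ 3 := by gcongr
      _ = 512 * (‖cq u‖ ^ 2 * ‖1 + u / 3‖ ^ 3) := by ring
      _ ≤ 32 ^ 2 := by rw [h1]; norm_num
  exact le_of_sq_le_sq this (by norm_num) 

lemma ca_bound {u : ℂ} (hu : u ∈ Om) : ‖ca u‖ ≤ 32 / ww u := by
  have hw := ww_pos u
  have h1 : ‖1 - u / 3‖ ≤ ww u ^ 2 := by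
    rw [ww_sq]
    refine (norm_sub_le _ _).trans ?_
    rw [norm_div]; norm_num
    linarith [norm_nonneg u]
  unfold ca
  rw [norm_mul]
  calc _ ≤ ww u ^ 2 * (32 / ww u ^ 3) := by gcongr; exact cq_bound hu
    _ = _ := by field_simp

lemma cb_bound {u : ℂ} (hu : u ∈ Om) : ‖cb u‖ ≤ 32 * ww u := by
  have hw := ww_pos u
  have h1 : ‖1 - 2 * u + u ^ 2 / 9‖ ≤ (ww u ^ 2) ^ 2 := by
    rw [ww_sq]
    refine (norm_add_le _ _).trans ?_
    have := norm_sub_le (1 : ℂ) (2 * u)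
    rw [norm_div, norm_pow]
    rw [norm_mul] at this
    norm_num at this ⊢
    nlinarith [norm_nonneg u]
  unfold cb
  rw [norm_mul]
  calc _ ≤ (ww u ^ 2) ^ 2 * (32 / ww u ^ 3) := by gcongr; exact cq_bound hu
    _ = _ := by field_simp

lemma ww_t_le (u : ℂ) {t : ℝ} (h0 : 0 < t) (h1 : t ≤ 1) : ww ((t : ℂ) ^ 2 * u) ≤ ww u := by
  unfold ww
  apply Real.sqrt_le_sqrt
  rw [norm_mul, norm_pow, Complex.norm_real, Real.norm_of_nonneg h0.le]
  have : t ^ 2 ≤ 1 := pow_le_one₀ h0.le h1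
  nlinarith [norm_nonneg u]

lemma ww_t_ge (u : ℂ) {t : ℝ} (h0 : 0 < t) (h1 : t ≤ 1) : t ^ 2 * ww u ^ 2 ≤ ww ((t : ℂ) ^ 2 * u) ^ 2 := by
  rw [ww_sq, ww_sq]
  rw [norm_mul, norm_pow, Complex.norm_real, Real.norm_of_nonneg h0.le]
  have : t ^ 2 ≤ 1 := pow_le_one₀ h0.le h1
  nlinarith [norm_nonneg u]

def KK (n : ℕ) : ℝ := 32 * 2048 ^ n / (n.factorial : ℝ)
lemma KK_nonneg (n : ℕ) : 0 ≤ KK n := by unfold KK; positivity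
lemma KK_succ (n : ℕ) : KK (n + 1) = 2048 * KK n / (n + 1) := by
  unfold KK
  rw [Nat.factorial_succ]
  push_cast
  field_simp
  ring
lemma KK_le (n : ℕ) : KK (n + 1) ≤ 65536 ^ (n + 1) / (n.factorial : ℝ) := by
  unfold KK
  have h1 : (n.factorial : ℝ) ≤ ((n + 1).factorial : ℝ) := by
    exact_mod_cast Nat.factorial_le (Nat.le_succ n)
  have h2 : (32 : ℝ) * 2048 ^ (n + 1) ≤ 65536 ^ (n + 1) := by
    rw [show (65536 : ℝ) = 32 * 2048 by norm_num, mul_pow]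
    gcongr
    exact le_self_pow₀ (by norm_num) (by omega)
  gcongr

lemma ga_bound (n : ℕ) : ∀ u ∈ Om, ‖gg 1 ca n u‖ ≤ KK n / ww u := by
  induction n with
  | zero => intro u hu; simpa [gg, KK] using ca_bound hu
  | succ n ih =>
    intro u hu
    have hw := ww_pos u
    have hK := KK_nonneg n
    have h1 : ‖JJ (2 * n + 1) (fun v => cb v * gg 1 ca n v) u‖ ≤ (32 * KK n) / (n + 1) := by
      apply JJ_bound
      intro t h0 h1
      have hv := Om_star hu ⟨h0.le, h1⟩
      have hwt := ww_pos ((t : ℂ) ^ 2 * u)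
      rw [norm_mul]
      calc _ ≤ t ^ (2 * n) * ((32 * ww ((t : ℂ) ^ 2 * u)) * (KK n / ww ((t : ℂ) ^ 2 * u))) := by
            gcongr ?_ * (?_ * ?_)
            · exact pow_le_pow_of_le_one h0.le h1 (by omega)
            · exact cb_bound hv
            · exact ih _ hv
        _ = _ := by field_simp
    have h2 : ‖JJ (2 * n + 1 + 1) (fun v => ca v * gg 1 ca n v) u‖ ≤ (32 * KK n / ww u ^ 2) / (n + 1) := by
      apply JJ_bound
      intro t h0 h1
      have hv := Om_star hu ⟨h0.le, h1⟩
      have hwt := ww_pos ((t : ℂ) ^ 2 * u)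
      rw [norm_mul]
      calc _ ≤ t ^ (2 * n + 1 + 1) * ((32 / ww ((t : ℂ) ^ 2 * u)) * (KK n / ww ((t : ℂ) ^ 2 * u))) := by
            gcongr ?_ * (?_ * ?_)
            · exact ca_bound hv
            · exact ih _ hv
        _ = 32 * KK n * t ^ (2 * n) * (t ^ 2 / ww ((t : ℂ) ^ 2 * u) ^ 2) := by field_simp; ring
        _ ≤ 32 * KK n * t ^ (2 * n) * (1 / ww u ^ 2) := by
            gcongr ?_ * ?_
            rw [div_le_div_iff₀ (by positivity) (by positivity)]
            linarith [ww_t_ge u h0 h1]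
        _ = _ := by ring
    show ‖-(_ - _)‖ ≤ _
    rw [norm_neg]
    refine (norm_sub_le _ _).trans ?_
    rw [norm_mul, norm_mul]
    calc _ ≤ (32 / ww u) * ((32 * KK n) / (n + 1)) + (32 * ww u) * ((32 * KK n / ww u ^ 2) / (n + 1)) := by
          gcongr
          · exact ca_bound hu
          · exact cb_bound hu
      _ = _ := by rw [KK_succ]; field_simp; ring

lemma gb_bound (n : ℕ) : ∀ u ∈ Om, ‖gg 0 cb n u‖ ≤ KK n * ww u := by
  induction n with
  | zero => intro u hu; simpa [gg, KK] using cb_bound hu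
  | succ n ih =>
    intro u hu
    have hw := ww_pos u
    have hK := KK_nonneg n
    have h1 : ‖JJ (2 * n + 0) (fun v => cb v * gg 0 cb n v) u‖ ≤ (32 * KK n * ww u ^ 2) / (n + 1) := by
      apply JJ_bound
      intro t h0 h1
      have hv := Om_star hu ⟨h0.le, h1⟩
      have hwt := ww_pos ((t : ℂ) ^ 2 * u)
      have hwl := ww_t_le u h0 h1
      rw [norm_mul]
      calc _ ≤ t ^ (2 * n) * ((32 * ww u) * (KK n * ww u)) := by
            gcongr ?_ * (?_ * ?_)
            · exact le_rfl
            · exact (cb_bound hv).trans (by gcongr)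
            · exact (ih _ hv).trans (by gcongr)
        _ = _ := by ring
    have h2 : ‖JJ (2 * n + 0 + 1) (fun v => ca v * gg 0 cb n v) u‖ ≤ (32 * KK n) / (n + 1) := by
      apply JJ_bound
      intro t h0 h1
      have hv := Om_star hu ⟨h0.le, h1⟩
      have hwt := ww_pos ((t : ℂ) ^ 2 * u)
      rw [norm_mul]
      calc _ ≤ t ^ (2 * n) * ((32 / ww ((t : ℂ) ^ 2 * u)) * (KK n * ww ((t : ℂ) ^ 2 * u))) := by
            gcongr ?_ * (?_ * ?_)
            · exact pow_le_pow_of_le_one h0.le h1 (by omega)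
            · exact ca_bound hv
            · exact ih _ hv
        _ = _ := by field_simp
    show ‖-(_ - _)‖ ≤ _
    rw [norm_neg]
    refine (norm_sub_le _ _).trans ?_
    rw [norm_mul, norm_mul]
    calc _ ≤ (32 / ww u) * ((32 * KK n * ww u ^ 2) / (n + 1)) + (32 * ww u) * ((32 * KK n) / (n + 1)) := by
          gcongr
          · exact ca_bound hu
          · exact cb_bound hu
      _ = _ := by rw [KK_succ]; field_simp; ring

def A1 (x : ℂ) : ℂ := (1 - 5 * x ^ 2 / 3) * (cq (x ^ 2) / (1 + x ^ 2 / 3))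
def B1 (x : ℂ) : ℂ := (x * (-5 + 10 * x ^ 2 / 9 + x ^ 4 / 27)) * (cq (x ^ 2) / (1 + x ^ 2 / 3))

lemma cq_ne3 {x : ℂ} (hx : x ^ 2 ∈ Om) : 3 + x ^ 2 ≠ 0 := by
  intro h
  apply cq_ne hx
  linear_combination h / 3

lemma q_deriv {x : ℂ} (hx : x ^ 2 ∈ Om) :
    HasDerivAt (fun x : ℂ => cq (x ^ 2)) (-x * (cq (x ^ 2) / (1 + x ^ 2 / 3))) x := by
  have h1 : HasDerivAt (fun x : ℂ => x ^ 2) (2 * x) x := by simpa using hasDerivAt_pow 2 x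
  refine ((cq_hasDeriv hx).comp x h1).congr_deriv ?_
  ring

lemma qp_deriv {x : ℂ} (hx : x ^ 2 ∈ Om) :
    HasDerivAt (fun x : ℂ => cq (x ^ 2) / (1 + x ^ 2 / 3)) (-(5 * x / 3) * (cq (x ^ 2) / (1 + x ^ 2 / 3) ^ 2)) x := by
  have h1 : HasDerivAt (fun x : ℂ => 1 + x ^ 2 / 3) (2 * x / 3) x := by
    simpa using ((hasDerivAt_pow 2 x).div_const 3).const_add 1
  refine ((q_deriv hx).div h1 (cq_ne hx)).congr_deriv ?_
  have := cq_ne hx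
  have hx3 := cq_ne3 hx
  field_simp
  ring

lemma fa_deriv {x : ℂ} (hx : x ^ 2 ∈ Om) :
    HasDerivAt (fun x : ℂ => x * ca (x ^ 2)) (A1 x) x := by
  have h1 : HasDerivAt (fun x : ℂ => x - x ^ 3 / 3) (1 - x ^ 2) x := by
    refine ((hasDerivAt_id x).sub ((hasDerivAt_pow 3 x).div_const 3)).congr_deriv ?_
    push_cast; ring
  have h2 := h1.mul (q_deriv hx)
  have h3 := h2.congr_of_eventuallyEq (f₁ := fun x : ℂ => x * ca (x ^ 2))
    (Eventually.of_forall fun y => by simp only [ca, Pi.mul_apply]; ring)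
  refine h3.congr_deriv ?_
  have := cq_ne hx
  have hx3 := cq_ne3 hx
  unfold A1
  field_simp
  ring

lemma fb_deriv {x : ℂ} (hx : x ^ 2 ∈ Om) :
    HasDerivAt (fun x : ℂ => cb (x ^ 2)) (B1 x) x := by
  have h1 : HasDerivAt (fun x : ℂ => 1 - 2 * x ^ 2 + x ^ 4 / 9) (-4 * x + 4 * x ^ 3 / 9) x := by
    refine ((((hasDerivAt_pow 2 x).const_mul 2).const_sub 1).add ((hasDerivAt_pow 4 x).div_const 9)).congr_deriv ?_
    push_cast; ring
  have h2 := h1.mul (q_deriv hx)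
  have h3 := h2.congr_of_eventuallyEq (f₁ := fun x : ℂ => cb (x ^ 2))
    (Eventually.of_forall fun y => by simp only [cb, Pi.mul_apply]; ring)
  refine h3.congr_deriv ?_
  have := cq_ne hx
  have hx3 := cq_ne3 hx
  unfold B1
  field_simp
  ring

lemma A1_deriv {x : ℂ} (hx : x ^ 2 ∈ Om) :
    HasDerivAt A1 (-(5 / (1 + x ^ 2 / 3) ^ 2) * (x * ca (x ^ 2))) x := by
  have h1 : HasDerivAt (fun x : ℂ => 1 - 5 * x ^ 2 / 3) (-10 * x / 3) x := by
    refine ((((hasDerivAt_pow 2 x).const_mul 5).div_const 3).const_sub 1).congr_deriv ?_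
    push_cast; ring
  refine (h1.mul (qp_deriv hx)).congr_deriv ?_
  have := cq_ne hx
  have hx3 := cq_ne3 hx
  unfold ca
  field_simp
  ring

lemma B1_deriv {x : ℂ} (hx : x ^ 2 ∈ Om) :
    HasDerivAt B1 (-(5 / (1 + x ^ 2 / 3) ^ 2) * cb (x ^ 2)) x := by
  have h1 : HasDerivAt (fun x : ℂ => x * (-5 + 10 * x ^ 2 / 9 + x ^ 4 / 27)) (-5 + 10 * x ^ 2 / 3 + 5 * x ^ 4 / 27) x := by
    refine ((hasDerivAt_id x).mul (((((hasDerivAt_pow 2 x).const_mul 10).div_const 9).const_add (-5)).add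
      ((hasDerivAt_pow 4 x).div_const 27))).congr_deriv ?_
    simp only [id, Pi.add_apply]
    push_cast; ring
  refine (h1.mul (qp_deriv hx)).congr_deriv ?_
  have := cq_ne hx
  have hx3 := cq_ne3 hx
  unfold cb
  field_simp
  ring

lemma wronsk {x : ℂ} (hx : x ^ 2 ∈ Om) : A1 x * cb (x ^ 2) - x * ca (x ^ 2) * B1 x = 1 := by
  have h := cq_sq hx
  have := cq_ne hx
  have hx3 := cq_ne3 hx
  rw [← h]
  unfold A1 B1 ca cb
  field_simp
  ring

lemma sq_Om (r : ℝ) : (r : ℂ) ^ 2 ∈ Om := by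
  rw [← Complex.ofReal_pow]; exact Om_ofReal (by positivity)

def GG (R s : ℝ) : ℂ := R * ca ((R : ℂ) ^ 2) * cb ((s : ℂ) ^ 2) - cb ((R : ℂ) ^ 2) * (s * ca ((s : ℂ) ^ 2))

lemma cont_sq {F : ℂ → ℂ} (hF : DifferentiableOn ℂ F Om) : Continuous (fun r : ℝ => F ((r : ℂ) ^ 2)) :=
  hF.continuousOn.comp_continuous (by fun_prop) sq_Om

lemma GG_cont : Continuous (fun x : ℝ × ℝ => GG x.1 x.2) := by
  have h1 := cont_sq ca_diff
  have h2 := cont_sq cb_diff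
  have h3 := h1.comp (continuous_fst (X := ℝ) (Y := ℝ))
  have h4 := h1.comp (continuous_snd (X := ℝ) (Y := ℝ))
  have h5 := h2.comp (continuous_fst (X := ℝ) (Y := ℝ))
  have h6 := h2.comp (continuous_snd (X := ℝ) (Y := ℝ))
  unfold GG
  simp only [Function.comp_def] at h3 h4 h5 h6
  fun_prop

lemma GG_cont' (R : ℝ) : Continuous (GG R) := GG_cont.comp (by fun_prop : Continuous fun s : ℝ => (R, s))

lemma volterra (y : ℝ → ℂ) (z : ℂ)
    (hd : ∀ R, HasDerivAt y (deriv y R) R)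
    (hdd : ∀ R, HasDerivAt (deriv y) (deriv (deriv y) R) R)
    (heq : ∀ R : ℝ, - deriv (deriv y) R - (5 / (1 + (R : ℂ) ^ 2 / 3) ^ 2) * y R = z * y R) (R : ℝ) :
    y R = (deriv y 0 * (R * ca ((R : ℂ) ^ 2)) + y 0 * cb ((R : ℂ) ^ 2)) - z * ∫ s in (0 : ℝ)..R, GG R s * y s := by
  have hyc : Continuous y := continuous_iff_continuousAt.2 fun R => (hd R).continuousAt
  have key : ∀ s : ℝ, HasDerivAt (fun s : ℝ => deriv y s * GG R s
      - y s * (R * ca ((R : ℂ) ^ 2) * B1 s - cb ((R : ℂ) ^ 2) * A1 s)) (-z * (GG R s * y s)) s := by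
    intro s
    have hs := sq_Om s
    have ha := (fa_deriv hs).comp_ofReal
    have hb := (fb_deriv hs).comp_ofReal
    have hA := (A1_deriv hs).comp_ofReal
    have hB := (B1_deriv hs).comp_ofReal
    have hG : HasDerivAt (GG R) (R * ca ((R : ℂ) ^ 2) * B1 s - cb ((R : ℂ) ^ 2) * A1 s) s :=
      (hb.const_mul (R * ca ((R : ℂ) ^ 2))).sub (ha.const_mul (cb ((R : ℂ) ^ 2)))
    refine (((hdd s).mul hG).sub ((hd s).mul ((hB.const_mul (R * ca ((R : ℂ) ^ 2))).sub
      (hA.const_mul (cb ((R : ℂ) ^ 2)))))).congr_deriv ?_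
    have h2 : deriv (deriv y) s = - (5 / (1 + (s : ℂ) ^ 2 / 3) ^ 2) * y s - z * y s := by
      linear_combination -(heq s)
    rw [h2]
    simp only [GG, Pi.sub_apply]
    ring
  have hint := intervalIntegral.integral_eq_sub_of_hasDerivAt (a := 0) (b := R) (fun s _ => key s)
    (Continuous.intervalIntegrable (by have := GG_cont' R; fun_prop) _ _)
  rw [intervalIntegral.integral_const_mul] at hint
  have hw := wronsk (sq_Om R)
  have e1 : GG R R = 0 := by unfold GG; ring
  have e2 : GG R 0 = R * ca ((R : ℂ) ^ 2) := by simp [GG, cb, cq]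
  have e3 : A1 0 = 1 := by simp [A1, cq]
  have e4 : B1 0 = 0 := by simp [B1]
  rw [e1, e2, Complex.ofReal_zero, e3, e4] at hint
  linear_combination -hint - y R * hw

lemma volterra_gg (p : ℕ) {F : ℂ → ℂ} (hF : DifferentiableOn ℂ F Om) (n : ℕ) (R : ℝ) :
    (R : ℂ) ^ (2 * (n + 1) + p) * gg p F (n + 1) ((R : ℂ) ^ 2)
      = -∫ s in (0 : ℝ)..R, GG R s * ((s : ℂ) ^ (2 * n + p) * gg p F n ((s : ℂ) ^ 2)) := by
  have hg := gg_diff p hF n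
  have h := intervalIntegral.smul_integral_comp_mul_left (a := 0) (b := 1)
    (fun s : ℝ => GG R s * ((s : ℂ) ^ (2 * n + p) * gg p F n ((s : ℂ) ^ 2))) R
  rw [mul_zero, mul_one] at h
  rw [← h]
  have e : ∀ t : ℝ, GG R (R * t) * (((R * t : ℝ) : ℂ) ^ (2 * n + p) * gg p F n (((R * t : ℝ) : ℂ) ^ 2))
      = (R : ℂ) ^ (2 * n + p + 1) * (ca ((R : ℂ) ^ 2) *
        ((t : ℂ) ^ (2 * n + p) * (cb ((t : ℂ) ^ 2 * (R : ℂ) ^ 2) * gg p F n ((t : ℂ) ^ 2 * (R : ℂ) ^ 2)))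
        - cb ((R : ℂ) ^ 2) *
        ((t : ℂ) ^ (2 * n + p + 1) * (ca ((t : ℂ) ^ 2 * (R : ℂ) ^ 2) * gg p F n ((t : ℂ) ^ 2 * (R : ℂ) ^ 2)))) := by
    intro t
    have : ((R * t : ℝ) : ℂ) ^ 2 = (t : ℂ) ^ 2 * (R : ℂ) ^ 2 := by push_cast; ring
    unfold GG
    rw [this]
    push_cast
    rw [mul_pow]
    ring
  simp only [e]
  rw [intervalIntegral.integral_const_mul, intervalIntegral.integral_sub, intervalIntegral.integral_const_mul,
    intervalIntegral.integral_const_mul]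
  · simp only [gg, JJ, Complex.real_smul]
    ring
  · exact (int_aux _ (cb_diff.mul hg).continuousOn (sq_Om R)).const_mul _
  · exact (int_aux _ (ca_diff.mul hg).continuousOn (sq_Om R)).const_mul _

lemma remainder (G : ℝ → ℝ → ℂ) (f : ℕ → ℝ → ℂ) (y : ℝ → ℂ) (z : ℂ) (R0 M B : ℝ)
    (hG : ∀ R, Continuous (G R)) (hfc : ∀ n, Continuous (f n)) (hyc : Continuous y)
    (hM : ∀ R ∈ Set.Icc 0 R0, ∀ s ∈ Set.Icc 0 R0, ‖G R s‖ ≤ M)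
    (hB : ∀ s ∈ Set.Icc 0 R0, ‖y s‖ ≤ B)
    (hy : ∀ R, y R = f 0 R - z * ∫ s in (0 : ℝ)..R, G R s * y s)
    (hf : ∀ n R, f (n + 1) R = - ∫ s in (0 : ℝ)..R, G R s * f n s) (n : ℕ) :
    ∀ R ∈ Set.Icc 0 R0, ‖y R - ∑ j ∈ Finset.range n, z ^ j * f j R‖ ≤ B * (‖z‖ * M * R) ^ n / n.factorial := by
  induction n with
  | zero => intro R hR; simpa using hB R hR
  | succ n ih =>
    intro R hR
    have hM0 : 0 ≤ M := (norm_nonneg _).trans (hM R hR R hR)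
    have hB0 : 0 ≤ B := (norm_nonneg _).trans (hB R hR)
    have e : y R - ∑ j ∈ Finset.range (n + 1), z ^ j * f j R
        = -z * ∫ s in (0 : ℝ)..R, G R s * (y s - ∑ j ∈ Finset.range n, z ^ j * f j s) := by
      have h1 : ∀ s, G R s * (y s - ∑ j ∈ Finset.range n, z ^ j * f j s)
          = G R s * y s - ∑ j ∈ Finset.range n, z ^ j * (G R s * f j s) := by
        intro s
        rw [mul_sub, Finset.mul_sum]
        congr 1
        exact Finset.sum_congr rfl fun j _ => by ring
      have hc : Continuous (G R) := hG R
      simp only [h1]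
      rw [intervalIntegral.integral_sub, intervalIntegral.integral_finsetSum]
      · simp only [intervalIntegral.integral_const_mul]
        rw [Finset.sum_range_succ', hy R, mul_sub, Finset.mul_sum]
        simp only [hf]
        have : ∑ k ∈ Finset.range n, z ^ (k + 1) * -∫ s in (0 : ℝ)..R, G R s * f k s
            = ∑ i ∈ Finset.range n, -z * (z ^ i * ∫ s in (0 : ℝ)..R, G R s * f i s) :=
          Finset.sum_congr rfl fun j _ => by ring
        rw [this]
        ring
      · intro j _
        have := hfc j
        exact Continuous.intervalIntegrable (by fun_prop) _ _
      · exact Continuous.intervalIntegrable (by fun_prop) _ _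
      · exact Continuous.intervalIntegrable (by fun_prop) _ _
    rw [e, norm_mul, norm_neg]
    have h2 : ‖∫ s in (0 : ℝ)..R, G R s * (y s - ∑ j ∈ Finset.range n, z ^ j * f j s)‖
        ≤ ∫ s in (0 : ℝ)..R, M * (B * (‖z‖ * M) ^ n / n.factorial) * s ^ n := by
      refine intervalIntegral.norm_integral_le_of_norm_le hR.1 ?_ (Continuous.intervalIntegrable (by fun_prop) _ _)
      refine Eventually.of_forall fun s hs => ?_
      have hs' : s ∈ Set.Icc 0 R0 := ⟨hs.1.le, hs.2.trans hR.2⟩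
      rw [norm_mul]
      calc _ ≤ M * (B * (‖z‖ * M * s) ^ n / n.factorial) := by
            gcongr
            · exact hM R hR s hs'
            · exact ih s hs'
        _ = _ := by rw [mul_pow (‖z‖ * M)]; ring
    calc _ ≤ ‖z‖ * ∫ s in (0 : ℝ)..R, M * (B * (‖z‖ * M) ^ n / n.factorial) * s ^ n := by gcongr
      _ = _ := by
        rw [intervalIntegral.integral_const_mul, integral_pow, Nat.factorial_succ]
        push_cast
        have : (n.factorial : ℝ) ≠ 0 := by positivity
        have h3 : (n : ℝ) + 1 ≠ 0 := by positivity
        field_simp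
        ring

lemma main_sum (p : ℕ) {F : ℂ → ℂ} (hF : DifferentiableOn ℂ F Om) (y : ℝ → ℂ) (z : ℂ) (R B : ℝ) (hR : 0 < R)
    (hyc : Continuous y)
    (hy : ∀ R : ℝ, y R = (R : ℂ) ^ p * F ((R : ℂ) ^ 2) - z * ∫ s in (0 : ℝ)..R, GG R s * y s)
    (hbd : ∀ n, ‖gg p F n ((R : ℂ) ^ 2)‖ ≤ KK n * B) :
    Summable (fun j : ℕ => ‖((R : ℂ) ^ 2 * z) ^ (j + 1) * gg p F (j + 1) ((R : ℂ) ^ 2)‖) ∧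
    HasSum (fun j : ℕ => (R : ℂ) ^ p * (((R : ℂ) ^ 2 * z) ^ (j + 1) * gg p F (j + 1) ((R : ℂ) ^ 2)))
      (y R - (R : ℂ) ^ p * F ((R : ℂ) ^ 2)) := by
  have hs0 : Summable (fun j : ℕ => ‖((R : ℂ) ^ 2 * z) ^ j * gg p F j ((R : ℂ) ^ 2)‖) := by
    refine Summable.of_nonneg_of_le (fun _ => norm_nonneg _) (fun j => ?_)
      ((Real.summable_pow_div_factorial (‖(R : ℂ) ^ 2 * z‖ * 2048)).mul_left (32 * B))
    rw [norm_mul, norm_pow]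
    calc _ ≤ ‖(R : ℂ) ^ 2 * z‖ ^ j * (KK j * B) := by gcongr; exact hbd j
      _ = _ := by unfold KK; rw [mul_pow]; ring
  refine ⟨(summable_nat_add_iff 1).2 hs0, ?_⟩
  obtain ⟨M, hM⟩ := (isCompact_Icc.prod isCompact_Icc : IsCompact (Set.Icc 0 R ×ˢ Set.Icc 0 R)).exists_bound_of_continuousOn
    GG_cont.continuousOn
  obtain ⟨B', hB'⟩ := (isCompact_Icc : IsCompact (Set.Icc 0 R)).exists_bound_of_continuousOn hyc.continuousOn
  have hrem := remainder GG (fun n s => (s : ℂ) ^ (2 * n + p) * gg p F n ((s : ℂ) ^ 2)) y z R M B' GG_cont'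
    (fun n => by have := cont_sq (gg_diff p hF n); fun_prop) hyc
    (fun r hr s hs => hM (r, s) ⟨hr, hs⟩) hB' (by simpa [gg] using hy) (volterra_gg p hF)
  have hsum : Summable (fun j : ℕ => ‖(R : ℂ) ^ p * (((R : ℂ) ^ 2 * z) ^ j * gg p F j ((R : ℂ) ^ 2))‖) := by
    simp only [norm_mul ((R : ℂ) ^ p)]
    exact hs0.mul_left _
  have hall : HasSum (fun j : ℕ => (R : ℂ) ^ p * (((R : ℂ) ^ 2 * z) ^ j * gg p F j ((R : ℂ) ^ 2))) (y R) := by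
    rw [hasSum_iff_tendsto_nat_of_summable_norm hsum]
    rw [tendsto_iff_norm_sub_tendsto_zero]
    have hlim : Tendsto (fun n : ℕ => B' * (‖z‖ * M * R) ^ n / n.factorial) atTop (𝓝 0) := by
      have := (FloorSemiring.tendsto_pow_div_factorial_atTop (‖z‖ * M * R)).const_mul B'
      simpa [mul_div_assoc] using this
    refine squeeze_zero (fun _ => norm_nonneg _) (fun n => ?_) hlim
    rw [norm_sub_rev]
    have e : ∑ j ∈ Finset.range n, (R : ℂ) ^ p * (((R : ℂ) ^ 2 * z) ^ j * gg p F j ((R : ℂ) ^ 2))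
        = ∑ j ∈ Finset.range n, z ^ j * ((R : ℂ) ^ (2 * j + p) * gg p F j ((R : ℂ) ^ 2)) :=
      Finset.sum_congr rfl fun j _ => by rw [mul_pow]; ring
    rw [e]
    exact hrem n R ⟨hR.le, le_rfl⟩
  have := (hasSum_nat_add_iff' 1).2 hall
  simpa [gg] using this

lemma cq_ofReal {u : ℝ} (hu : 0 ≤ u) : cq (u : ℂ) = (((1 + u / 3) ^ (-(3 : ℝ) / 2) : ℝ) : ℂ) := by
  unfold cq
  rw [Complex.ofReal_cpow (by positivity)]
  push_cast
  rfl

lemma phi0_eq (R : ℝ) : (φ₀ R : ℂ) = (R : ℂ) ^ 1 * ca ((R : ℂ) ^ 2) := by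
  have := cq_ofReal (sq_nonneg R)
  rw [Complex.ofReal_pow] at this
  unfold φ₀ ca
  rw [this]
  push_cast
  ring

lemma theta0_eq (R : ℝ) : (θ₀ R : ℂ) = (R : ℂ) ^ 0 * cb ((R : ℂ) ^ 2) := by
  have := cq_ofReal (sq_nonneg R)
  rw [Complex.ofReal_pow] at this
  unfold θ₀ cb
  rw [this]
  push_cast
  ring

lemma gamma_lim : Tendsto (fun u : ℝ => u * Real.sqrt u * (1 + u / 3) ^ (-(3 : ℝ) / 2)) atTop (𝓝 (3 * Real.sqrt 3)) := by
  have h1 : Tendsto (fun u : ℝ => (u⁻¹ + 1 / 3)⁻¹) atTop (𝓝 3) := by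
    have := (tendsto_inv_atTop_zero (𝕜 := ℝ)).add_const (1 / 3)
    have := this.inv₀ (by norm_num)
    convert this using 2
    norm_num
  have h2 : Tendsto (fun u : ℝ => (u⁻¹ + 1 / 3)⁻¹ * Real.sqrt ((u⁻¹ + 1 / 3)⁻¹)) atTop (𝓝 (3 * Real.sqrt 3)) :=
    h1.mul ((Real.continuous_sqrt.tendsto 3).comp h1)
  refine h2.congr' ?_
  filter_upwards [eventually_gt_atTop 0] with u hu
  have e : (u⁻¹ + 1 / 3)⁻¹ = u / (1 + u / 3) := by field_simp
  have hp : 0 < 1 + u / 3 := by positivity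
  rw [e, Real.sqrt_div hu.le]
  have e2 : (1 + u / 3) ^ (-(3 : ℝ) / 2) = ((1 + u / 3) * Real.sqrt (1 + u / 3))⁻¹ := by
    rw [neg_div, Real.rpow_neg hp.le, show (3 : ℝ) / 2 = 1 + 1 / 2 by norm_num, Real.rpow_add hp, Real.rpow_one,
      Real.sqrt_eq_rpow]
  rw [e2]
  have : 0 < Real.sqrt (1 + u / 3) := Real.sqrt_pos.2 hp
  field_simp

lemma alpha_lim : Tendsto (fun u : ℝ => (Real.sqrt u : ℂ) * ca (u : ℂ)) atTop (𝓝 ((-Real.sqrt 3 : ℝ) : ℂ)) := by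
  have h1 : Tendsto (fun u : ℝ => (u⁻¹ - 1 / 3) * (u * Real.sqrt u * (1 + u / 3) ^ (-(3 : ℝ) / 2))) atTop
      (𝓝 (-Real.sqrt 3)) := by
    have := ((tendsto_inv_atTop_zero (𝕜 := ℝ)).sub_const (1 / 3)).mul gamma_lim
    convert this using 2
    ring
  refine ((Complex.continuous_ofReal.tendsto _).comp h1).congr' ?_
  filter_upwards [eventually_gt_atTop 0] with u hu
  unfold ca
  rw [cq_ofReal hu.le]
  simp only [Function.comp]
  push_cast
  have : (u : ℂ) ≠ 0 := by exact_mod_cast hu.ne'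
  field_simp

lemma beta_lim : Tendsto (fun u : ℝ => cb (u : ℂ) / (Real.sqrt u : ℂ)) atTop (𝓝 ((Real.sqrt 3 / 3 : ℝ) : ℂ)) := by
  have h1 : Tendsto (fun u : ℝ => (u⁻¹ * u⁻¹ - 2 * u⁻¹ + 1 / 9) * (u * Real.sqrt u * (1 + u / 3) ^ (-(3 : ℝ) / 2))) atTop
      (𝓝 (Real.sqrt 3 / 3)) := by
    have h0 := tendsto_inv_atTop_zero (𝕜 := ℝ)
    have := (((h0.mul h0).sub (h0.const_mul 2)).add_const (1 / 9)).mul gamma_lim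
    convert this using 2
    ring
  refine ((Complex.continuous_ofReal.tendsto _).comp h1).congr' ?_
  filter_upwards [eventually_gt_atTop 0] with u hu
  unfold cb
  rw [cq_ofReal hu.le]
  simp only [Function.comp]
  have hs : (Real.sqrt u : ℂ) ≠ 0 := by exact_mod_cast (Real.sqrt_pos.2 hu).ne'
  have hs2 : (Real.sqrt u : ℂ) ^ 2 = u := by exact_mod_cast Real.sq_sqrt hu.le
  push_cast
  have : (u : ℂ) ≠ 0 := by exact_mod_cast hu.ne'
  rw [eq_div_iff hs]
  field_simp
  rw [hs2]
  ring

lemma tsq_atTop {t : ℝ} (ht : 0 < t) : Tendsto (fun u : ℝ => t ^ 2 * u) atTop atTop :=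
  tendsto_id.const_mul_atTop (by positivity)

lemma J1_lim : Tendsto (fun u : ℝ => JJ 1 (fun v => cb v * ca v) (u : ℂ)) atTop (𝓝 (-1 / 2)) := by
  have h3 : (Real.sqrt 3 : ℂ) ^ 2 = 3 := by exact_mod_cast Real.sq_sqrt (by norm_num : (0 : ℝ) ≤ 3)
  have key : Tendsto (fun u : ℝ => JJ 1 (fun v => cb v * ca v) (u : ℂ)) atTop
      (𝓝 (∫ t in (0 : ℝ)..1, (t : ℂ) * (-1))) := by
    unfold JJ
    refine intervalIntegral.tendsto_integral_filter_of_dominated_convergence (fun _ => (1024 : ℝ)) ?_ ?_ (by simp) ?_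
    · filter_upwards [eventually_ge_atTop 0] with u hu
      exact meas_aux 1 (cb_diff.mul ca_diff).continuousOn (Om_ofReal hu)
    · filter_upwards [eventually_ge_atTop 0] with u hu
      refine Eventually.of_forall fun t ht => ?_
      rw [Set.uIoc_of_le zero_le_one] at ht
      have hv := Om_star (Om_ofReal hu) (t := t) ⟨ht.1.le, ht.2⟩
      have hw := ww_pos ((t : ℂ) ^ 2 * u)
      rw [norm_mul, norm_mul, norm_pow, Complex.norm_real, Real.norm_of_nonneg ht.1.le, pow_one]
      calc _ ≤ 1 * ((32 * ww ((t : ℂ) ^ 2 * u)) * (32 / ww ((t : ℂ) ^ 2 * u))) := by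
            gcongr
            · exact ht.2
            · exact cb_bound hv
            · exact ca_bound hv
        _ = _ := by field_simp; norm_num
    · refine Eventually.of_forall fun t ht => ?_
      rw [Set.uIoc_of_le zero_le_one] at ht
      have h := ((alpha_lim.mul beta_lim).comp (tsq_atTop ht.1)).const_mul (t : ℂ)
      have e : ((-Real.sqrt 3 : ℝ) : ℂ) * ((Real.sqrt 3 / 3 : ℝ) : ℂ) = -1 := by
        push_cast
        linear_combination (-1 / 3) * h3
      rw [e] at h
      refine h.congr' ?_
      filter_upwards [eventually_gt_atTop 0] with u hu
      have hpos : 0 < t ^ 2 * u := by have := ht.1; positivity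
      have hs : (Real.sqrt (t ^ 2 * u) : ℂ) ≠ 0 := by exact_mod_cast (Real.sqrt_pos.2 hpos).ne'
      simp only [Function.comp, pow_one]
      have e2 : ((t ^ 2 * u : ℝ) : ℂ) = (t : ℂ) ^ 2 * u := by push_cast; rfl
      rw [e2]
      field_simp
  convert key using 2
  rw [intervalIntegral.integral_mul_const, intervalIntegral.integral_ofReal, integral_id]
  push_cast
  norm_num

lemma J2_lim : Tendsto (fun u : ℝ => (u : ℂ) * JJ 2 (fun v => ca v * ca v) (u : ℂ)) atTop (𝓝 3) := by
  have h3 : (Real.sqrt 3 : ℂ) ^ 2 = 3 := by exact_mod_cast Real.sq_sqrt (by norm_num : (0 : ℝ) ≤ 3)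
  have key : Tendsto (fun u : ℝ => (u : ℂ) * JJ 2 (fun v => ca v * ca v) (u : ℂ)) atTop
      (𝓝 (∫ t in (0 : ℝ)..1, (3 : ℂ))) := by
    unfold JJ
    simp only [← intervalIntegral.integral_const_mul]
    refine intervalIntegral.tendsto_integral_filter_of_dominated_convergence (fun _ => (1024 : ℝ)) ?_ ?_ (by simp) ?_
    · filter_upwards [eventually_ge_atTop 0] with u hu
      exact (meas_aux 2 (ca_diff.mul ca_diff).continuousOn (Om_ofReal hu)).const_mul _
    · filter_upwards [eventually_ge_atTop 0] with u hu
      refine Eventually.of_forall fun t ht => ?_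
      rw [Set.uIoc_of_le zero_le_one] at ht
      have hv := Om_star (Om_ofReal hu) (t := t) ⟨ht.1.le, ht.2⟩
      have hw := ww_pos ((t : ℂ) ^ 2 * u)
      have hw2 := ww_sq ((t : ℂ) ^ 2 * u)
      rw [norm_mul, norm_pow, Complex.norm_real, Complex.norm_real, Real.norm_of_nonneg ht.1.le,
        Real.norm_of_nonneg hu] at hw2
      rw [norm_mul, norm_mul, norm_mul, norm_pow, Complex.norm_real, Complex.norm_real, Real.norm_of_nonneg ht.1.le,
        Real.norm_of_nonneg hu]
      calc _ ≤ u * (t ^ 2 * ((32 / ww ((t : ℂ) ^ 2 * u)) * (32 / ww ((t : ℂ) ^ 2 * u)))) := by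
            gcongr
            · exact ca_bound hv
            · exact ca_bound hv
        _ = 1024 * ((t ^ 2 * u) / ww ((t : ℂ) ^ 2 * u) ^ 2) := by field_simp; norm_num
        _ ≤ 1024 * 1 := by
            gcongr
            rw [div_le_one (by positivity), hw2]
            linarith
        _ = _ := by norm_num
    · refine Eventually.of_forall fun t ht => ?_
      rw [Set.uIoc_of_le zero_le_one] at ht
      have h := ((alpha_lim.mul alpha_lim).comp (tsq_atTop ht.1))
      have e : ((-Real.sqrt 3 : ℝ) : ℂ) * ((-Real.sqrt 3 : ℝ) : ℂ) = 3 := by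
        push_cast
        linear_combination h3
      rw [e] at h
      refine h.congr' ?_
      filter_upwards [eventually_gt_atTop 0] with u hu
      have hpos : 0 < t ^ 2 * u := by have := ht.1; positivity
      have hs : (Real.sqrt (t ^ 2 * u) : ℂ) ^ 2 = (t : ℂ) ^ 2 * u := by exact_mod_cast Real.sq_sqrt hpos.le
      simp only [Function.comp]
      have e2 : ((t ^ 2 * u : ℝ) : ℂ) = (t : ℂ) ^ 2 * u := by push_cast; rfl
      rw [e2]
      linear_combination (ca ((t : ℂ) ^ 2 * u)) ^ 2 * hs
  convert key using 2
  simp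

lemma asym_inf : Tendsto (fun u : ℝ => ((u : ℂ) * gg 1 ca 1 (u : ℂ)) / ((Real.sqrt 3 / 2 * Real.sqrt u : ℝ) : ℂ))
        atTop (𝓝 1) := by
  have h3 : (Real.sqrt 3 : ℂ) ^ 2 = 3 := by exact_mod_cast Real.sq_sqrt (by norm_num : (0 : ℝ) ≤ 3)
  have h30 : (Real.sqrt 3 : ℂ) ≠ 0 := by
    exact_mod_cast (Real.sqrt_pos.2 (by norm_num : (0 : ℝ) < 3)).ne'
  have h := ((alpha_lim.mul J1_lim).sub (beta_lim.mul J2_lim)).const_mul (-(2 / (Real.sqrt 3 : ℂ)))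
  have e : -(2 / (Real.sqrt 3 : ℂ)) * (((-Real.sqrt 3 : ℝ) : ℂ) * (-1 / 2) - ((Real.sqrt 3 / 3 : ℝ) : ℂ) * 3) = 1 := by
    push_cast
    field_simp
    norm_num
  rw [e] at h
  refine h.congr' ?_
  filter_upwards [eventually_gt_atTop 0] with u hu
  have hs : (Real.sqrt u : ℂ) ≠ 0 := by exact_mod_cast (Real.sqrt_pos.2 hu).ne'
  have hs2 : (Real.sqrt u : ℂ) ^ 2 = u := by exact_mod_cast Real.sq_sqrt hu.le
  simp only [gg, mul_zero, zero_add]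
  push_cast
  rw [← hs2]
  field_simp

lemma asym_zero : Tendsto (fun u : ℝ => ((u : ℂ) * gg 1 ca 1 (u : ℂ)) / (-(u : ℂ) / 6)) (𝓝[>] (0 : ℝ)) (𝓝 1) := by
  have h0 : (0 : ℂ) ∈ Om := by simpa using Om_ofReal le_rfl
  have hc : ContinuousAt (gg 1 ca 1) ((0 : ℝ) : ℂ) := by
    rw [Complex.ofReal_zero]
    exact (gg_diff 1 ca_diff 1).continuousOn.continuousAt (Om_open.mem_nhds h0)
  have h1 : Tendsto (fun u : ℝ => gg 1 ca 1 (u : ℂ)) (𝓝[>] (0 : ℝ)) (𝓝 (gg 1 ca 1 ((0 : ℝ) : ℂ))) :=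
    (hc.tendsto.comp (Complex.continuous_ofReal.tendsto 0)).mono_left nhdsWithin_le_nhds
  have ea : ca 0 = 1 := by simp [ca, cq]
  have eb : cb 0 = 1 := by simp [cb, cq]
  have i1 : ∫ t in (0 : ℝ)..1, (t : ℂ) = 1 / 2 := by
    rw [intervalIntegral.integral_ofReal, integral_id]; push_cast; norm_num
  have i2 : ∫ t in (0 : ℝ)..1, (t : ℂ) ^ 2 = 1 / 3 := by
    have : ∀ t : ℝ, (t : ℂ) ^ 2 = ((t ^ 2 : ℝ) : ℂ) := fun t => by push_cast; rfl
    simp only [this]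
    rw [intervalIntegral.integral_ofReal, integral_pow]; push_cast; norm_num
  have e : gg 1 ca 1 ((0 : ℝ) : ℂ) = -1 / 6 := by
    simp only [gg, JJ, Complex.ofReal_zero, mul_zero, ea, eb, zero_add, mul_one, one_mul, pow_one, one_add_one_eq_two]
    rw [i1, i2]
    norm_num
  rw [e] at h1
  have h2 := h1.const_mul (-6)
  rw [show (-6 : ℂ) * (-1 / 6) = 1 by norm_num] at h2
  refine h2.congr' ?_
  filter_upwards [self_mem_nhdsWithin] with u hu
  have : (u : ℂ) ≠ 0 := by exact_mod_cast (ne_of_gt hu)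
  field_simp

/-- Absolutely convergent expansions of the fundamental system `φ(R,z)`, `θ(R,z)` of
`𝓛 y = z y`:
`φ(R,z) = φ₀(R) + R⁻¹ Σ_{j≥1} (R²z)^j φ_j(R²)` and
`θ(R,z) = θ₀(R) + Σ_{j≥1} (R²z)^j θ_j(R²)`, with `φ_j, θ_j` holomorphic on
`Ω = {Re u > -1/2}` obeying `|φ_j(u)| ≤ C^j/(j-1)! |u|(1+|u|)^{-1/2}` and
`|θ_j(u)| ≤ C^j/(j-1)! (1+|u|)^{1/2}`, and with
`φ₁(u) = -(u/6)(1+o(1))` as `u → 0` and `φ₁(u) = (√3/2)u^{1/2}(1+o(1))` as `u → +∞`. -/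
theorem fundamental_system_expansion
    (φ θ : ℂ → ℝ → ℂ)
    (hφ0 : ∀ z, φ z 0 = 0) (hφ0' : ∀ z, deriv (φ z) 0 = 1)
    (hθ0 : ∀ z, θ z 0 = 1) (hθ0' : ∀ z, deriv (θ z) 0 = 0)
    (hφd : ∀ z R, HasDerivAt (φ z) (deriv (φ z) R) R)
    (hφdd : ∀ z R, HasDerivAt (deriv (φ z)) (deriv (deriv (φ z)) R) R)
    (hφeq : ∀ z, ∀ R : ℝ,
      - deriv (deriv (φ z)) R - (5 / (1 + (R : ℂ) ^ 2 / 3) ^ 2) * φ z R = z * φ z R)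
    (hθd : ∀ z R, HasDerivAt (θ z) (deriv (θ z) R) R)
    (hθdd : ∀ z R, HasDerivAt (deriv (θ z)) (deriv (deriv (θ z)) R) R)
    (hθeq : ∀ z, ∀ R : ℝ,
      - deriv (deriv (θ z)) R - (5 / (1 + (R : ℂ) ^ 2 / 3) ^ 2) * θ z R = z * θ z R) :
    ∃ (C : ℝ) (φj θj : ℕ → ℂ → ℂ), 0 < C ∧
      -- holomorphy on Ω = {Re u > -1/2}
      (∀ j : ℕ, DifferentiableOn ℂ (φj (j + 1)) {u : ℂ | -(1 : ℝ) / 2 < u.re} ∧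
                DifferentiableOn ℂ (θj (j + 1)) {u : ℂ | -(1 : ℝ) / 2 < u.re}) ∧
      -- the bounds on the coefficients
      (∀ j : ℕ, ∀ u : ℂ, -(1 : ℝ) / 2 < u.re →
        ‖φj (j + 1) u‖ ≤ C ^ (j + 1) / (Nat.factorial j) * ‖u‖ / Real.sqrt (1 + ‖u‖) ∧
        ‖θj (j + 1) u‖ ≤ C ^ (j + 1) / (Nat.factorial j) * Real.sqrt (1 + ‖u‖)) ∧
      -- the absolutely convergent expansions, for every z ∈ ℂ and R > 0
      (∀ z : ℂ, ∀ R : ℝ, 0 < R →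
        Summable (fun j : ℕ => ‖((R : ℂ) ^ 2 * z) ^ (j + 1) * φj (j + 1) ((R : ℂ) ^ 2)‖) ∧
        HasSum (fun j : ℕ => ((R : ℂ) ^ 2 * z) ^ (j + 1) * φj (j + 1) ((R : ℂ) ^ 2))
          ((R : ℂ) * (φ z R - (φ₀ R : ℂ))) ∧
        Summable (fun j : ℕ => ‖((R : ℂ) ^ 2 * z) ^ (j + 1) * θj (j + 1) ((R : ℂ) ^ 2)‖) ∧
        HasSum (fun j : ℕ => ((R : ℂ) ^ 2 * z) ^ (j + 1) * θj (j + 1) ((R : ℂ) ^ 2))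
          (θ z R - (θ₀ R : ℂ))) ∧
      -- asymptotics of φ₁
      Tendsto (fun u : ℝ => φj 1 (u : ℂ) / (-(u : ℂ) / 6)) (𝓝[>] (0 : ℝ)) (𝓝 1) ∧
      Tendsto (fun u : ℝ => φj 1 (u : ℂ) / ((Real.sqrt 3 / 2 * Real.sqrt u : ℝ) : ℂ))
        atTop (𝓝 1) := by
  refine ⟨65536, fun j u => u * gg 1 ca j u, fun j u => gg 0 cb j u, by norm_num, ?_, ?_, ?_, asym_zero, asym_inf⟩
  · intro j
    exact ⟨differentiableOn_id.mul (gg_diff 1 ca_diff (j + 1)), gg_diff 0 cb_diff (j + 1)⟩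
  · intro j u hu
    have hw := ww_pos u
    have hK := KK_le j
    constructor
    · rw [norm_mul]
      calc ‖u‖ * ‖gg 1 ca (j + 1) u‖ ≤ ‖u‖ * (65536 ^ (j + 1) / (j.factorial : ℝ) / ww u) := by
            gcongr
            exact (ga_bound (j + 1) u hu).trans (by gcongr)
        _ = 65536 ^ (j + 1) / (j.factorial : ℝ) * ‖u‖ / ww u := by ring
    · exact (gb_bound (j + 1) u hu).trans (by
        show KK (j + 1) * ww u ≤ 65536 ^ (j + 1) / (j.factorial : ℝ) * ww u
        gcongr)
  · intro z R hR
    have hφ := main_sum 1 ca_diff (φ z) z R (1 / ww ((R : ℂ) ^ 2)) hR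
      (continuous_iff_continuousAt.2 fun R => (hφd z R).continuousAt)
      (fun R => by
        have := volterra (φ z) z (hφd z) (hφdd z) (hφeq z) R
        rw [hφ0', hφ0] at this
        simpa using this)
      (fun n => by
        have := ga_bound n _ (sq_Om R)
        rwa [div_eq_mul_one_div] at this)
    have hθ := main_sum 0 cb_diff (θ z) z R (ww ((R : ℂ) ^ 2)) hR
      (continuous_iff_continuousAt.2 fun R => (hθd z R).continuousAt)
      (fun R => by
        have := volterra (θ z) z (hθd z) (hθdd z) (hθeq z) R
        rw [hθ0', hθ0] at this
        simpa using this)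
      (fun n => gb_bound n _ (sq_Om R))
    have e : ∀ j : ℕ, ((R : ℂ) ^ 2 * z) ^ (j + 1) * ((R : ℂ) ^ 2 * gg 1 ca (j + 1) ((R : ℂ) ^ 2))
        = R * ((R : ℂ) ^ 1 * (((R : ℂ) ^ 2 * z) ^ (j + 1) * gg 1 ca (j + 1) ((R : ℂ) ^ 2))) := fun j => by ring
    refine ⟨?_, ?_, hθ.1, ?_⟩
    · have := (hφ.1.mul_left ‖(R : ℂ) ^ 2‖)
      refine this.congr fun j => ?_
      rw [← norm_mul]
      congr 1
      ring
    · simp only [e]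
      rw [phi0_eq]
      exact hφ.2.mul_left _
    · rw [theta0_eq]
      simpa using hθ.2

end SmallEnergyExpansion
end
end

section
/- Let φ(·,ξ) be the solution of −φ'' − 5(1+R²/3)^{−2} φ = ξφ with φ(0,ξ)=0, ∂_Rφ(0,ξ)=1, and let f₊(·,ξ) be the Jost solution, f₋ := conj(f₊). Then for every ξ > 0: (i) the Wronskian W(f₊(·,ξ), f₋(·,ξ)) = f₊ ∂_R f₋ − (∂_R f₊) f₋ equals −2i√ξ; (ii) with a(ξ) := W(φ(·,ξ), f₋(·,ξ)) / (−2i√ξ) one has a(ξ) ≠ 0 and the connection formula φ(R,ξ) = a(ξ) f₊(R,ξ) + conj(a(ξ)) f₋(R,ξ) for all R > 0; (iii) there are constants 0 < c ≤ C such that c ≤ |a(ξ)| ≤ C for 0 < ξ ≤ 1 and c ξ^{−1/2} ≤ |a(ξ)| ≤ C ξ^{−1/2} for ξ ≥ 1; consequently the spectral density ρ(ξ) := (4π √ξ |a(ξ)|²)^{−1} satisfies ρ(ξ) ≍ ξ^{−1/2} as ξ → 0 and ρ(ξ) ≍ ξ^{1/2} as ξ → ∞. -/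
open Filter Topology ComplexConjugate

noncomputable section

namespace ConnectionCoefficient

/-- two-sided Gronwall -/
lemma gron {E E' Q Q' : ℝ → ℝ} {a b : ℝ} (hab : a ≤ b)
    (hE : ∀ x ∈ Set.Icc a b, HasDerivAt E (E' x) x)
    (hQ : ∀ x ∈ Set.Icc a b, HasDerivAt Q (Q' x) x)
    (h : ∀ x ∈ Set.Icc a b, |E' x| ≤ Q' x * E x) :
    E b ≤ E a * Real.exp (Q b - Q a) ∧ E a ≤ E b * Real.exp (Q b - Q a) := by
  have hA : AntitoneOn (fun x => E x * Real.exp (-Q x)) (Set.Icc a b) := by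
    have hd : ∀ x ∈ Set.Icc a b, HasDerivAt (fun x => E x * Real.exp (-Q x))
        (E' x * Real.exp (-Q x) + E x * (Real.exp (-Q x) * (-Q' x))) x := fun x hx =>
      (hE x hx).mul (hQ x hx).neg.exp
    refine antitoneOn_of_deriv_nonpos (convex_Icc a b)
      (fun x hx => (hd x hx).continuousAt.continuousWithinAt)
      (fun x hx => (hd x (interior_subset hx)).differentiableAt.differentiableWithinAt) ?_
    intro x hx
    rw [(hd x (interior_subset hx)).deriv]
    have h1 := (abs_le.1 (h x (interior_subset hx))).2
    nlinarith [Real.exp_pos (-Q x)]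
  have hM : MonotoneOn (fun x => E x * Real.exp (Q x)) (Set.Icc a b) := by
    have hd : ∀ x ∈ Set.Icc a b, HasDerivAt (fun x => E x * Real.exp (Q x))
        (E' x * Real.exp (Q x) + E x * (Real.exp (Q x) * (Q' x))) x := fun x hx =>
      (hE x hx).mul (hQ x hx).exp
    refine monotoneOn_of_deriv_nonneg (convex_Icc a b)
      (fun x hx => (hd x hx).continuousAt.continuousWithinAt)
      (fun x hx => (hd x (interior_subset hx)).differentiableAt.differentiableWithinAt) ?_
    intro x hx
    rw [(hd x (interior_subset hx)).deriv]
    have h1 := (abs_le.1 (h x (interior_subset hx))).1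
    nlinarith [Real.exp_pos (Q x)]
  have ha : a ∈ Set.Icc a b := ⟨le_rfl, hab⟩
  have hb : b ∈ Set.Icc a b := ⟨hab, le_rfl⟩
  have h1 := hA ha hb hab
  have h2 := hM ha hb hab
  simp only at h1 h2
  constructor
  · have := mul_le_mul_of_nonneg_right h1 (Real.exp_pos (Q b)).le
    rw [mul_assoc, mul_assoc, ← Real.exp_add, ← Real.exp_add] at this
    simpa [sub_eq_neg_add] using this
  · have := mul_le_mul_of_nonneg_right h2 (Real.exp_pos (-Q a)).le
    rw [mul_assoc, mul_assoc, ← Real.exp_add, ← Real.exp_add] at this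
    simpa [sub_eq_add_neg] using this

lemma wronsk {u u' v v' : ℝ → ℂ} {p : ℝ → ℂ}
    (hu : ∀ R, 0 < R → HasDerivAt u (u' R) R) (hu' : ∀ R, 0 < R → HasDerivAt u' (-(p R * u R)) R)
    (hv : ∀ R, 0 < R → HasDerivAt v (v' R) R) (hv' : ∀ R, 0 < R → HasDerivAt v' (-(p R * v R)) R)
    {x y : ℝ} (hx : 0 < x) (hy : 0 < y) :
    u x * v' x - u' x * v x = u y * v' y - u' y * v y := by
  have hd : ∀ R ∈ Set.Ioi (0:ℝ), HasDerivAt (fun R => u R * v' R - u' R * v R) 0 R := by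
    intro R hR
    have := ((hu R hR).mul (hv' R hR)).sub ((hu' R hR).mul (hv R hR))
    refine HasDerivAt.congr_deriv (this) ?_
    ring
  exact isOpen_Ioi.is_const_of_deriv_eq_zero isPreconnected_Ioi
    (fun R hR => (hd R hR).differentiableAt.differentiableWithinAt)
    (fun R hR => (hd R hR).deriv) hx hy

/-- if `F → l`, `F' = D`, `(D + cF)' → 0` then `D → 0` -/
lemma landau {F D P' : ℝ → ℂ} {l c : ℂ}
    (hF : ∀ R, 0 < R → HasDerivAt F (D R) R)
    (hP : ∀ R, 0 < R → HasDerivAt (fun R => D R + c * F R) (P' R) R)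
    (hl : Tendsto F atTop (𝓝 l)) (hP0 : Tendsto P' atTop (𝓝 0)) : Tendsto D atTop (𝓝 0) := by
  rw [Metric.tendsto_atTop]
  intro ε' hε'
  set ε := ε' / (4 + 2 * ‖c‖) with hε_def
  have hcn := norm_nonneg c
  have hε : 0 < ε := by positivity
  obtain ⟨T1, h1⟩ := Metric.tendsto_atTop.1 hl ε hε
  obtain ⟨T2, h2⟩ := Metric.tendsto_atTop.1 hP0 ε hε
  refine ⟨max 1 (max T1 T2), fun R hR => ?_⟩
  have hR1 : 1 ≤ R := le_trans (le_max_left _ _) hR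
  have hR2 : T1 ≤ R := le_trans (le_trans (le_max_left _ _) (le_max_right _ _)) hR
  have hR3 : T2 ≤ R := le_trans (le_trans (le_max_right _ _) (le_max_right _ _)) hR
  have hFF : ∀ t, R ≤ t → ‖F t - F R‖ ≤ 2 * ε := by
    intro t ht
    have a1 := h1 t (hR2.trans ht)
    have a2 := h1 R hR2
    rw [← dist_eq_norm]
    have := dist_triangle_right (F t) (F R) l
    linarith
  have hmem : R ∈ Set.Icc R (R+1) := ⟨le_rfl, by linarith⟩
  have hPP : ∀ t ∈ Set.Icc R (R+1), ‖(D t + c * F t) - (D R + c * F R)‖ ≤ ε := by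
    intro t ht
    have := (convex_Icc R (R+1)).norm_image_sub_le_of_norm_hasDerivWithin_le (C := ε)
      (f := fun R => D R + c * F R) (f' := P')
      (fun x hx => (hP x (by linarith [hx.1])).hasDerivWithinAt)
      (fun x hx => by
        have := h2 x (hR3.trans hx.1)
        rw [dist_zero_right] at this; exact this.le) hmem ht
    refine this.trans ?_
    rw [Real.norm_eq_abs, abs_of_nonneg (by linarith [ht.1])]
    nlinarith [ht.2]
  have hDD : ∀ t ∈ Set.Icc R (R+1), ‖D t - D R‖ ≤ ε + ‖c‖ * (2 * ε) := by
    intro t ht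
    have e : D t - D R = ((D t + c * F t) - (D R + c * F R)) - c * (F t - F R) := by ring
    rw [e]
    refine (norm_sub_le _ _).trans (add_le_add (hPP t ht) ?_)
    rw [norm_mul]
    exact mul_le_mul_of_nonneg_left (hFF t ht.1) hcn
  have hfin := (convex_Icc R (R+1)).norm_image_sub_le_of_norm_hasDerivWithin_le
      (C := ε + ‖c‖ * (2 * ε))
      (f := fun t => F t - (t:ℂ) * D R) (f' := fun t => D t - D R)
      (fun x hx => by
        have := ((hF x (by linarith [hx.1])).sub
          (((hasDerivAt_id x).ofReal_comp).mul_const (D R))).hasDerivWithinAt (s := Set.Icc R (R+1))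
        simp only [id, Complex.ofReal_one, one_mul] at this
        exact this)
      (fun x hx => hDD x hx) hmem (y := R+1) ⟨by linarith, le_rfl⟩
  rw [dist_zero_right]
  have e : D R = (F (R+1) - F R) - ((F (R+1) - ((R+1:ℝ):ℂ) * D R) - (F R - (R:ℂ) * D R)) := by
    push_cast; ring
  have e2 : ‖D R‖ ≤ 2 * ε + (ε + ‖c‖ * (2 * ε)) := by
    rw [e]
    refine (norm_sub_le _ _).trans (add_le_add (hFF _ (by linarith)) ?_)
    refine hfin.trans ?_
    simp
  have e3 : ε * (4 + 2 * ‖c‖) = ε' := by rw [hε_def]; field_simp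
  nlinarith

lemma expnorm (k R : ℝ) : ‖Complex.exp (-Complex.I * (R:ℂ) * (k:ℂ))‖ = 1 := by
  rw [Complex.norm_exp]; simp

lemma jost {f f' : ℝ → ℂ} {k : ℝ} {q : ℝ → ℂ} 
    (hf : ∀ R, 0 < R → HasDerivAt f (f' R) R)
    (hf' : ∀ R, 0 < R → HasDerivAt f' (-(((k:ℂ)^2 + q R) * f R)) R)
    (hq : Tendsto q atTop (𝓝 0))
    (hl : Tendsto (fun R : ℝ => f R * Complex.exp (-Complex.I * (R : ℂ) * (k : ℂ))) atTop (𝓝 1)) :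
    Tendsto (fun R : ℝ => (f' R - Complex.I * k * f R) *
      Complex.exp (-Complex.I * (R : ℂ) * (k : ℂ))) atTop (𝓝 0) := by
  have hexp : ∀ R : ℝ, HasDerivAt (fun R : ℝ => Complex.exp (-Complex.I * (R : ℂ) * (k : ℂ)))
      (Complex.exp (-Complex.I * (R : ℂ) * (k : ℂ)) * (-Complex.I * k)) R := by
    intro R
    have := ((((hasDerivAt_id R).ofReal_comp).const_mul (-Complex.I)).mul_const (k:ℂ)).cexp
    simpa using this
  refine landau (l := 1) (c := 2 * Complex.I * k)
    (P' := fun R => - (q R * (f R * Complex.exp (-Complex.I * (R : ℂ) * (k : ℂ))))) ?_ ?_ hl ?_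
  · intro R hR
    refine HasDerivAt.congr_deriv ((hf R hR).mul (hexp R)) ?_
    ring
  · intro R hR
    have h1 := ((hf' R hR).sub ((hf R hR).const_mul (Complex.I * k))).mul (hexp R)
    have h2 := ((hf R hR).mul (hexp R)).const_mul (2 * Complex.I * k)
    refine HasDerivAt.congr_deriv (h1.add h2) ?_
    simp only [Pi.sub_apply]
    linear_combination (-(k:ℂ)^2 * f R * Complex.exp (-Complex.I * (R : ℂ) * (k : ℂ))) * Complex.I_sq
  · simpa using (hq.mul hl).neg

/-- zero-energy solutions -/
def rr (R : ℝ) : ℝ := Real.sqrt (1 + R^2/3)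
def p0 (R : ℝ) : ℝ := R * (1 - R^2/3) / rr R ^ 3
def p0' (R : ℝ) : ℝ := (1 - 5 * R^2/3) / rr R ^ 5
def t0 (R : ℝ) : ℝ := (1 - 2 * R^2 + R^4/9) / rr R ^ 3
def t0' (R : ℝ) : ℝ := R * (-5 + 10 * R^2/9 + R^4/27) / rr R ^ 5

lemma rr_pos (R : ℝ) : 0 < rr R := Real.sqrt_pos.2 (by positivity)
lemma rr_sq (R : ℝ) : rr R ^ 2 = 1 + R^2/3 := Real.sq_sqrt (by positivity)
lemma rr_deriv (R : ℝ) : HasDerivAt rr (R / (3 * rr R)) R := by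
  have h : HasDerivAt (fun R : ℝ => 1 + R^2/3) (2 * R / 3) R := by
    simpa using ((hasDerivAt_pow 2 R).div_const 3).const_add 1
  have := h.sqrt (by positivity)
  refine HasDerivAt.congr_deriv (this) ?_
  have := rr_pos R
  change _ / (2 * rr R) = _
  field_simp

lemma quo_deriv {n : ℝ → ℝ} {n' R : ℝ} (m : ℕ) (hn : HasDerivAt n n' R) :
    HasDerivAt (fun x => n x / rr x ^ m)
      ((n' * (1 + R^2/3) - m * n R * (R/3)) / rr R ^ (m+2)) R := by
  have hp := rr_pos R
  have := hn.div ((rr_deriv R).pow m) (pow_pos hp m).ne'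
  refine HasDerivAt.congr_deriv (this) ?_
  simp only [Pi.pow_apply]
  rw [← rr_sq R]
  rcases m with _ | m
  · simp; field_simp
  · simp only [Nat.add_sub_cancel]
    field_simp
    ring

lemma p0_d (R : ℝ) : HasDerivAt p0 (p0' R) R := by
  have hn : HasDerivAt (fun R : ℝ => R * (1 - R^2/3)) (1 - R^2) R := by
    have := (hasDerivAt_id R).mul (((hasDerivAt_pow 2 R).div_const 3).const_sub 1)
    refine HasDerivAt.congr_deriv (this) ?_
    simp; ring
  refine HasDerivAt.congr_deriv (quo_deriv 3 hn) ?_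
  simp only [p0']; congr 1; push_cast; ring

lemma t0_d (R : ℝ) : HasDerivAt t0 (t0' R) R := by
  have hn : HasDerivAt (fun R : ℝ => 1 - 2 * R^2 + R^4/9) (-4 * R + 4 * R^3/9) R := by
    have := (((hasDerivAt_pow 2 R).const_mul 2).const_sub 1).add ((hasDerivAt_pow 4 R).div_const 9)
    refine HasDerivAt.congr_deriv (this) ?_
    simp; ring
  refine HasDerivAt.congr_deriv (quo_deriv 3 hn) ?_
  simp only [t0']; congr 1; push_cast; ring

lemma p0'_d (R : ℝ) : HasDerivAt p0' (-(5 / (1 + R^2/3)^2 * p0 R)) R := by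
  have hn : HasDerivAt (fun R : ℝ => 1 - 5 * R^2/3) (-10 * R / 3) R := by
    have := (((hasDerivAt_pow 2 R).const_mul 5).div_const 3).const_sub 1
    refine HasDerivAt.congr_deriv (this) ?_
    simp; ring
  refine HasDerivAt.congr_deriv (quo_deriv 5 hn) ?_
  have hp := rr_pos R
  simp only [p0]; rw [← rr_sq R]; field_simp; rw [rr_sq R]; push_cast; ring

lemma t0'_d (R : ℝ) : HasDerivAt t0' (-(5 / (1 + R^2/3)^2 * t0 R)) R := by
  have hn : HasDerivAt (fun R : ℝ => R * (-5 + 10 * R^2/9 + R^4/27))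
      (-5 + 10 * R^2/3 + 5 * R^4/27) R := by
    have := (hasDerivAt_id R).mul (((((hasDerivAt_pow 2 R).const_mul 10).div_const 9).const_add (-5)).add
      ((hasDerivAt_pow 4 R).div_const 27))
    refine HasDerivAt.congr_deriv (this) ?_
    simp; ring
  refine HasDerivAt.congr_deriv (quo_deriv 5 hn) ?_
  have hp := rr_pos R
  simp only [t0]; rw [← rr_sq R]; field_simp; rw [rr_sq R]; push_cast; ring

lemma wr0 (R : ℝ) : p0' R * t0 R - p0 R * t0' R = 1 := by
  have hp := rr_pos R
  have h8 : rr R ^ 8 = (1 + R^2/3)^4 := by rw [← rr_sq]; ring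
  simp only [p0, p0', t0, t0']
  field_simp
  ring_nf
  rw [h8]; ring

lemma rr_ge (R : ℝ) : 1 ≤ rr R := by
  have := rr_sq R
  nlinarith [rr_pos R, sq_nonneg R]

lemma le_rr {R : ℝ} (hR : 0 ≤ R) : R ≤ 2 * rr R := by
  refine abs_le_of_sq_le_sq' ?_ (by linarith [rr_pos R]) |>.2
  have := rr_sq R
  nlinarith [sq_nonneg R]
lemma rr_le {R L : ℝ} (hR : 0 ≤ R) (hRL : R ≤ L) (hL : 1 ≤ L) : rr R ≤ 2 * L := by
  refine abs_le_of_sq_le_sq' ?_ (by linarith) |>.2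
  have := rr_sq R
  nlinarith

lemma p0_b {R : ℝ} (hR : 0 ≤ R) : |p0 R| ≤ 18 := by
  have hp := rr_pos R
  rw [p0, abs_div, abs_of_pos (pow_pos hp 3), div_le_iff₀ (by positivity), abs_mul, abs_of_nonneg hR]
  have h1 : |1 - R^2/3| ≤ rr R ^ 2 := by
    rw [rr_sq, abs_le]; constructor <;> nlinarith [sq_nonneg R]
  calc R * |1 - R^2/3| ≤ (2 * rr R) * rr R ^ 2 := by
        gcongr; exact le_rr hR
    _ ≤ 18 * rr R ^ 3 := by nlinarith [pow_pos hp 3]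

lemma t0_b {R L : ℝ} (hR : 0 ≤ R) (hRL : R ≤ L) (hL : 1 ≤ L) : |t0 R| ≤ 18 * L := by
  have hp := rr_pos R
  have hg := rr_ge R
  rw [t0, abs_div, abs_of_pos (pow_pos hp 3), div_le_iff₀ (by positivity)]
  have h1 : |1 - 2 * R^2 + R^4/9| ≤ 9 * rr R ^ 4 := by
    have : rr R ^ 4 = (1 + R^2/3)^2 := by rw [← rr_sq]; ring
    rw [this, abs_le]; constructor <;> nlinarith [sq_nonneg R, sq_nonneg (R^2)]
  have h2 := rr_le hR hRL hL
  calc _ ≤ 9 * rr R ^ 4 := h1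
    _ = 9 * rr R * rr R ^ 3 := by ring
    _ ≤ 9 * (2 * L) * rr R ^ 3 := by gcongr
    _ = _ := by ring

lemma p0'_b {R : ℝ} (hR : 0 ≤ R) : |R * p0' R| ≤ 18 := by
  have hp := rr_pos R
  have hg := rr_ge R
  rw [p0', abs_mul, abs_of_nonneg hR, abs_div, abs_of_pos (pow_pos hp 5), mul_div_assoc',
    div_le_iff₀ (by positivity)]
  have h1 : |1 - 5 * R^2/3| ≤ 5 * rr R ^ 2 := by
    rw [rr_sq, abs_le]; constructor <;> nlinarith [sq_nonneg R]
  calc R * |1 - 5 * R^2/3| ≤ (2 * rr R) * (5 * rr R ^ 2) := by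
        gcongr; exact le_rr hR
    _ = 10 * rr R ^ 3 := by ring
    _ ≤ 10 * rr R ^ 5 := by gcongr; simp
    _ ≤ 18 * rr R ^ 5 := by nlinarith [pow_pos hp 5]

lemma t0'_b {R : ℝ} (hR : 0 ≤ R) : |t0' R| ≤ 18 := by
  have hp := rr_pos R
  rw [t0', abs_div, abs_of_pos (pow_pos hp 5), div_le_iff₀ (by positivity), abs_mul, abs_of_nonneg hR]
  have h1 : |-5 + 10 * R^2/9 + R^4/27| ≤ 5 * rr R ^ 4 := by
    have : rr R ^ 4 = (1 + R^2/3)^2 := by rw [← rr_sq]; ring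
    rw [this, abs_le]; constructor <;> nlinarith [sq_nonneg R, sq_nonneg (R^2)]
  calc _ ≤ (2 * rr R) * (5 * rr R ^ 4) := by
        gcongr; exact le_rr hR
    _ ≤ 18 * rr R ^ 5 := by nlinarith [pow_pos hp 5]

lemma lin_b {a b x y c : ℝ} (ha : |a| ≤ c) (hb : |b| ≤ c) :
    (a * x + b * y)^2 ≤ 2 * c^2 * (x^2 + y^2) := by
  have h1 : a^2 ≤ c^2 := sq_le_sq' (abs_le.1 ha).1 (abs_le.1 ha).2
  have h2 : b^2 ≤ c^2 := sq_le_sq' (abs_le.1 hb).1 (abs_le.1 hb).2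
  nlinarith [sq_nonneg (a * y - b * x), mul_le_mul_of_nonneg_right h1 (sq_nonneg x),
    mul_le_mul_of_nonneg_right h1 (sq_nonneg y), mul_le_mul_of_nonneg_right h2 (sq_nonneg x),
    mul_le_mul_of_nonneg_right h2 (sq_nonneg y)]

set_option maxHeartbeats 2000000 in
/-- inner region, `0 < k ≤ 1`, `L = 1/k` -/
lemma inner_region {u u' : ℝ → ℝ} {k L : ℝ} (hL : 1 ≤ L) (hkL : k * L = 1)
    (h0 : u 0 = 0) (h1 : u' 0 = 1)
    (hu : ∀ R, HasDerivAt u (u' R) R)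
    (hu' : ∀ R, HasDerivAt u' (-((k^2 + 5 / (1 + R^2/3)^2) * u R)) R) :
    u L ^ 2 + (L * u' L)^2 ≤ 1296 * Real.exp 1296 ∧
    1 ≤ (1296 * (u L ^ 2 + (L * u' L)^2)) * Real.exp 1296 := by
  have hL0 : 0 < L := by linarith
  have hk : k = 1 / L := by field_simp; linarith
  set A : ℝ → ℝ := fun R => u' R * t0 R - u R * t0' R with hA
  set B : ℝ → ℝ := fun R => u R * p0' R - u' R * p0 R with hB
  have hAd : ∀ R, HasDerivAt A (-(k^2 * u R * t0 R)) R := by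
    intro R
    refine HasDerivAt.congr_deriv (((hu' R).mul (t0_d R)).sub ((hu R).mul (t0'_d R))) ?_
    ring
  have hBd : ∀ R, HasDerivAt B (k^2 * u R * p0 R) R := by
    intro R
    refine HasDerivAt.congr_deriv (((hu R).mul (p0'_d R)).sub ((hu' R).mul (p0_d R))) ?_
    ring
  have hu_eq : ∀ R, u R = A R * p0 R + B R * t0 R := by
    intro R; simp only [hA, hB]; linear_combination (-u R) * wr0 R
  have hu'_eq : ∀ R, u' R = A R * p0' R + B R * t0' R := by
    intro R; simp only [hA, hB]; linear_combination (-u' R) * wr0 R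
  have hA0 : A 0 = 1 := by
    simp [hA, h0, h1, t0, rr]
  have hB0 : B 0 = 0 := by
    simp [hB, h0, h1, p0]
  have key := gron (E := fun R => A R ^ 2 + (L * B R)^2)
    (E' := fun R => 2 * A R * (-(k^2 * u R * t0 R)) + 2 * (L * B R) * (L * (k^2 * u R * p0 R)))
    (Q := fun R => 1296 / L * R) (Q' := fun R => 1296 / L) hL0.le
    (fun R _ => by
      have := ((hAd R).pow 2).add (((hBd R).const_mul L).pow 2)
      refine HasDerivAt.congr_deriv (this) ?_
      simp)
    (fun R _ => by simpa using (hasDerivAt_id R).const_mul (1296 / L))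
    (fun R hR => by
      have b1 := p0_b hR.1
      have b2 : |t0 R / L| ≤ 18 := by
        rw [abs_div, abs_of_pos hL0, div_le_iff₀ hL0]; exact t0_b hR.1 hR.2 hL
      have l1 := lin_b (x := A R) (y := L * B R) b1 b2
      have l2 := lin_b (x := - L * B R) (y := A R) b1 b2
      set X := p0 R * A R + t0 R / L * (L * B R) with hX
      set Y := p0 R * (-L * B R) + t0 R / L * A R with hY
      have e : 2 * A R * (-(k^2 * u R * t0 R)) + 2 * (L * B R) * (L * (k^2 * u R * p0 R))
          = - (2 * X * Y) / L := by
        rw [hX, hY, hu_eq R, hk]; field_simp; ring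
      rw [e, abs_div, abs_of_pos hL0, div_le_iff₀ hL0]
      have : 1296 / L * (A R ^ 2 + (L * B R)^2) * L = 1296 * (A R ^ 2 + (L * B R)^2) := by
        field_simp
      rw [this, abs_le]
      constructor <;> nlinarith [sq_nonneg (X - Y), sq_nonneg (X + Y)])
  have hexp : 1296 / L * L - 1296 / L * 0 = 1296 := by field_simp; ring
  simp only [hA0, hB0, hexp] at key
  have b1 := p0_b hL0.le
  have b2 : |t0 L / L| ≤ 18 := by
    rw [abs_div, abs_of_pos hL0, div_le_iff₀ hL0]; exact t0_b hL0.le le_rfl hL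
  have b3 := p0'_b hL0.le
  have b4 := t0'_b hL0.le
  have l1 := lin_b (x := A L) (y := L * B L) b1 b2
  have l2 := lin_b (x := A L) (y := L * B L) b3 b4
  have l3 := lin_b (x := L * u' L) (y := - u L) b2 b4
  have l4 := lin_b (x := - L * u' L) (y := u L) b1 b3
  have e1 : p0 L * A L + t0 L / L * (L * B L) = u L := by rw [hu_eq L]; field_simp
  have e2 : L * p0' L * A L + t0' L * (L * B L) = L * u' L := by rw [hu'_eq L]; ring
  have e3 : t0 L / L * (L * u' L) + t0' L * (- u L) = A L := by simp only [hA]; field_simp; ring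
  have e4 : p0 L * (- L * u' L) + L * p0' L * u L = L * B L := by simp only [hB]; ring
  rw [e1] at l1; rw [e2] at l2; rw [e3] at l3; rw [e4] at l4
  have hx := Real.exp_pos 1296
  constructor
  · nlinarith [key.1]
  · have := key.2
    have h5 : A L ^ 2 + (L * B L)^2 ≤ 1296 * (u L ^ 2 + (L * u' L)^2) := by nlinarith
    have := mul_le_mul_of_nonneg_right h5 hx.le
    linarith

lemma energy_step {u u' Q Q' : ℝ → ℝ} {k a b : ℝ} (hk : 0 < k) (hab : a ≤ b)
    (hu : ∀ R, HasDerivAt u (u' R) R)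
    (hu' : ∀ R, HasDerivAt u' (-((k^2 + 5 / (1 + R^2/3)^2) * u R)) R)
    (hQ : ∀ x ∈ Set.Icc a b, HasDerivAt Q (Q' x) x)
    (hq : ∀ x ∈ Set.Icc a b, 5 / (1 + x^2/3)^2 / k ≤ Q' x) :
    let E := fun R => u' R ^ 2 + k^2 * u R ^ 2
    E b ≤ E a * Real.exp (Q b - Q a) ∧ E a ≤ E b * Real.exp (Q b - Q a) := by
  intro E
  refine gron (E := E) (E' := fun R => - (2 * (5 / (1 + R^2/3)^2) * (u R * u' R))) hab ?_ hQ ?_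
  · intro R _
    refine HasDerivAt.congr_deriv (((hu' R).pow 2).add (((hu R).pow 2).const_mul (k^2))) ?_
    simp; ring
  · intro R hR
    refine le_trans ?_ (mul_le_mul_of_nonneg_right (hq R hR) (by positivity))
    set q := 5 / (1 + R^2/3)^2 with hqd
    have hq0 : 0 < q := by positivity
    rw [abs_neg, abs_mul, abs_of_pos (by positivity), div_mul_eq_mul_div, le_div_iff₀ hk]
    have : 2 * k * |u R * u' R| ≤ u' R ^ 2 + k^2 * u R ^ 2 := by
      rw [abs_mul, ← sq_abs (u R), ← sq_abs (u' R)]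
      nlinarith [sq_nonneg (k * |u R| - |u' R|)]
    nlinarith [mul_le_mul_of_nonneg_left this hq0.le]

lemma lim_b {E : ℝ → ℝ} {l e K a : ℝ} (hl : Tendsto E atTop (𝓝 l))
    (h : ∀ b, a ≤ b → E b ≤ e * K ∧ e ≤ E b * K) : l ≤ e * K ∧ e ≤ l * K :=
  ⟨le_of_tendsto hl (eventually_atTop.2 ⟨a, fun b hb => (h b hb).1⟩),
   ge_of_tendsto (hl.mul_const K) (eventually_atTop.2 ⟨a, fun b hb => (h b hb).2⟩)⟩

lemma high {u u' : ℝ → ℝ} {k l : ℝ} (hk : 1 ≤ k)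
    (h0 : u 0 = 0) (h1 : u' 0 = 1)
    (hu : ∀ R, HasDerivAt u (u' R) R)
    (hu' : ∀ R, HasDerivAt u' (-((k^2 + 5 / (1 + R^2/3)^2) * u R)) R)
    (hl : Tendsto (fun R => u' R ^ 2 + k^2 * u R ^ 2) atTop (𝓝 l)) :
    l ≤ Real.exp 30 ∧ 1 ≤ l * Real.exp 30 := by
  have := lim_b (a := 0) (e := 1) (K := Real.exp 30) hl (fun b hb => by
    have key := energy_step (a := 0) (b := b) (Q := fun x => 15 * Real.arctan x)
      (Q' := fun x => 15 * (1 / (1 + x^2))) (k := k) (by linarith) hb hu hu'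
      (fun x _ => (Real.hasDerivAt_arctan x).const_mul 15)
      (fun x _ => by
        rw [div_div, mul_one_div, div_le_div_iff₀ (by positivity) (by positivity)]
        have : (1 + x^2/3)^2 ≤ (1 + x^2/3)^2 * k := le_mul_of_one_le_right (by positivity) hk
        nlinarith [sq_nonneg x, sq_nonneg (x^2)])
    simp only [h0, h1, Real.arctan_zero] at key
    have hx : Real.exp (15 * Real.arctan b - 15 * 0) ≤ Real.exp 30 := by
      apply Real.exp_le_exp.2
      linarith [Real.arctan_lt_pi_div_two b, Real.pi_lt_four]
    have hE : 0 ≤ u' b ^ 2 + k^2 * u b ^ 2 := by positivity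
    constructor
    · refine key.1.trans ?_
      norm_num at hx ⊢; linarith
    · have := mul_le_mul_of_nonneg_left hx hE
      norm_num at key this ⊢; linarith [key.2])
  simpa using this

lemma low {u u' : ℝ → ℝ} {k l : ℝ} (hk0 : 0 < k) (hk : k ≤ 1)
    (h0 : u 0 = 0) (h1 : u' 0 = 1)
    (hu : ∀ R, HasDerivAt u (u' R) R)
    (hu' : ∀ R, HasDerivAt u' (-((k^2 + 5 / (1 + R^2/3)^2) * u R)) R)
    (hl : Tendsto (fun R => u' R ^ 2 + k^2 * u R ^ 2) atTop (𝓝 l)) :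
    l ≤ k^2 * (1296 * Real.exp 1296 * Real.exp 15) ∧
    k^2 ≤ l * (1296 * Real.exp 1296 * Real.exp 15) := by
  obtain ⟨i1, i2⟩ := inner_region (L := 1 / k) (k := k) (by rw [le_div_iff₀ hk0]; linarith)
    (by field_simp) h0 h1 hu hu'
  set L := 1 / k with hL
  have hL0 : 0 < L := by positivity
  have hkL : k * L = 1 := by rw [hL]; field_simp
  have eE : u' L ^ 2 + k^2 * u L ^ 2 = k^2 * (u L ^ 2 + (L * u' L)^2) := by
    linear_combination (-(u' L)^2 * (k * L + 1)) * hkL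
  have := lim_b (a := L) (e := u' L ^ 2 + k^2 * u L ^ 2) (K := Real.exp 15) hl (fun b hb => by
    have key := energy_step (a := L) (b := b) (Q := fun x => -(15 / k) * (x^3)⁻¹)
      (Q' := fun x => (45 / k) * (1 / x ^ 4)) (k := k) hk0 hb hu hu'
      (fun x hx => by
        have hx0 : x ≠ 0 := by linarith [hx.1] |> fun (h : 0 < x) => h.ne'
        have := ((hasDerivAt_pow 3 x).inv (by positivity)).const_mul (-(15 / k))
        refine HasDerivAt.congr_deriv (this) ?_
        field_simp; norm_num; ring)
      (fun x hx => by
        have hx0 : 0 < x := by linarith [hx.1]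
        have : 5 / (1 + x^2/3)^2 ≤ 45 * (1 / x^4) := by
          rw [mul_one_div, div_le_div_iff₀ (by positivity) (by positivity)]
          nlinarith [sq_nonneg x]
        calc _ ≤ 45 * (1 / x^4) / k := by gcongr
          _ = _ := by ring)
    have hb0 : 0 < b := by linarith
    have hx : Real.exp (-(15 / k) * (b^3)⁻¹ - -(15 / k) * (L^3)⁻¹) ≤ Real.exp 15 := by
      apply Real.exp_le_exp.2
      have e1 : -(15 / k) * (L^3)⁻¹ = - (15 * k^2) := by rw [hL]; field_simp
      have e2 : 0 ≤ (15 / k) * (b^3)⁻¹ := by positivity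
      rw [e1]
      nlinarith
    have hE : 0 ≤ u' b ^ 2 + k^2 * u b ^ 2 := by positivity
    have hE2 : 0 ≤ u' L ^ 2 + k^2 * u L ^ 2 := by positivity
    exact ⟨key.1.trans (mul_le_mul_of_nonneg_left hx hE2),
      key.2.trans (mul_le_mul_of_nonneg_left hx hE)⟩)
  rw [eE] at this
  have hk2 : 0 < k^2 := by positivity
  constructor
  · refine this.1.trans ?_
    have := mul_le_mul_of_nonneg_right (mul_le_mul_of_nonneg_left i1 hk2.le) (Real.exp_pos 15).le
    linarith
  · have h2 := mul_le_mul_of_nonneg_left i2 hk2.le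
    have h3 := mul_le_mul_of_nonneg_right this.2 (by positivity : 0 ≤ 1296 * Real.exp 1296)
    linarith

lemma hq0 : Tendsto (fun R : ℝ => (5 / (1 + (R:ℂ)^2/3)^2 : ℂ)) atTop (𝓝 0) := by
  have h : Tendsto (fun R : ℝ => (5 / (1 + R^2/3)^2 : ℝ)) atTop (𝓝 0) := by
    apply Tendsto.const_div_atTop
    refine tendsto_atTop_mono' _ ?_ tendsto_id
    filter_upwards [eventually_ge_atTop 0] with R hR
    simp only [id]
    nlinarith [sq_nonneg (R - 1), sq_nonneg (R^2)]
  have := (Complex.continuous_ofReal.tendsto 0).comp h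
  rw [Complex.ofReal_zero] at this
  refine this.congr fun R => ?_
  simp

lemma per_k {u u' : ℝ → ℝ} {f f' : ℝ → ℂ} {k : ℝ} (hk : 0 < k)
    (h0 : u 0 = 0) (h1 : u' 0 = 1)
    (hu : ∀ R, HasDerivAt u (u' R) R)
    (hu' : ∀ R, HasDerivAt u' (-((k^2 + 5 / (1 + R^2/3)^2) * u R)) R)
    (hf : ∀ R, 0 < R → HasDerivAt f (f' R) R)
    (hf' : ∀ R : ℝ, 0 < R → HasDerivAt f' (-(((k:ℂ)^2 + 5 / (1 + (R:ℂ)^2/3)^2) * f R)) R)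
    (hl : Tendsto (fun R : ℝ => f R * Complex.exp (-Complex.I * (R : ℂ) * (k : ℂ))) atTop (𝓝 1)) :
    (∀ R, 0 < R → f R * conj (f' R) - f' R * conj (f R) = -2 * Complex.I * (k:ℂ)) ∧
    ∃ a : ℂ, a ≠ 0 ∧
      (∀ R, 0 < R → (u R : ℂ) * conj (f' R) - (u' R : ℂ) * conj (f R)
        = (-2 * Complex.I * (k:ℂ)) * a) ∧
      (∀ R, 0 < R → (u R : ℂ) = a * f R + conj a * conj (f R)) ∧
      Tendsto (fun R => u' R ^ 2 + k^2 * u R ^ 2) atTop (𝓝 (4 * k^2 * ‖a‖^2)) := by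
  have hD := jost hf hf' hq0 hl
  set p : ℝ → ℂ := fun R => (k:ℂ)^2 + 5 / (1 + (R:ℂ)^2/3)^2 with hp
  have hpr : ∀ R, conj (p R) = p R := by
    intro R; simp [hp, map_ofNat]
  have hg : ∀ R, 0 < R → HasDerivAt (fun R => conj (f R)) (conj (f' R)) R := fun R hR =>
    Complex.conjCLE.toContinuousLinearMap.hasFDerivAt.comp_hasDerivAt R (hf R hR)
  have hg' : ∀ R, 0 < R → HasDerivAt (fun R => conj (f' R)) (-(p R * conj (f R))) R := by
    intro R hR
    refine HasDerivAt.congr_deriv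
      (Complex.conjCLE.toContinuousLinearMap.hasFDerivAt.comp_hasDerivAt R (hf' R hR)) ?_
    change conj (-(p R * f R)) = _
    rw [map_neg, map_mul, hpr]
  have hv : ∀ R, 0 < R → HasDerivAt (fun R => (u R : ℂ)) (u' R : ℂ) R := fun R _ =>
    (hu R).ofReal_comp
  have hv' : ∀ R, 0 < R → HasDerivAt (fun R => (u' R : ℂ)) (-(p R * (u R : ℂ))) R := by
    intro R hR
    refine HasDerivAt.congr_deriv ((hu' R).ofReal_comp) ?_
    simp [hp]
  have hk' : (k:ℂ) ≠ 0 := by exact_mod_cast hk.ne'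
  have hI : Complex.I ≠ 0 := Complex.I_ne_zero
  -- (i)
  have hW : ∀ R, 0 < R → f R * conj (f' R) - f' R * conj (f R) = -2 * Complex.I * (k:ℂ) := by
    intro R hR
    have hlim : Tendsto (fun R => f R * conj (f' R) - f' R * conj (f R)) atTop
        (𝓝 (-2 * Complex.I * (k:ℂ))) := by
      have c1 := (Complex.continuous_conj.tendsto _).comp hl
      have c2 := (Complex.continuous_conj.tendsto _).comp hD
      have c3 := hD.add (hl.const_mul (Complex.I * k))
      have c4 := (Complex.continuous_conj.tendsto _).comp c3
      have := (hl.mul c4).sub (c3.mul c1)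
      have e : (1 * conj (0 + Complex.I * (k:ℂ) * 1) - (0 + Complex.I * k * 1) * conj 1 : ℂ)
          = -2 * Complex.I * k := by
        simp; ring
      rw [e] at this
      refine this.congr fun R => ?_
      have he : Complex.exp (-Complex.I * (R : ℂ) * (k : ℂ)) *
          conj (Complex.exp (-Complex.I * (R : ℂ) * (k : ℂ))) = 1 := by
        rw [Complex.mul_conj, Complex.normSq_eq_norm_sq, expnorm]; simp
      simp only [Function.comp, map_mul, map_add, map_sub, Complex.conj_I, Complex.conj_ofReal] 
      generalize Complex.exp (-Complex.I * (R : ℂ) * (k : ℂ)) = z at he ⊢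
      linear_combination (f R * conj (f' R) - f' R * conj (f R)) * he
    refine tendsto_nhds_unique (tendsto_const_nhds.congr' ?_) hlim
    filter_upwards [eventually_gt_atTop 0] with x hx
    exact wronsk hf hf' hg hg' hR hx
  refine ⟨hW, ?_⟩
  set a : ℂ := ((u 1 : ℂ) * conj (f' 1) - (u' 1 : ℂ) * conj (f 1)) / (-2 * Complex.I * (k:ℂ)) with ha
  have haW : ∀ R, 0 < R → (u R : ℂ) * conj (f' R) - (u' R : ℂ) * conj (f R)
        = (-2 * Complex.I * (k:ℂ)) * a := by
    intro R hR
    rw [ha, mul_div_cancel₀ _ (by simp [hk'])]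
    exact wronsk hv hv' hg hg' hR one_pos
  have hcW : ∀ R, 0 < R → (u R : ℂ) * f' R - (u' R : ℂ) * f R
        = (2 * Complex.I * (k:ℂ)) * conj a := by
    intro R hR
    have := congrArg conj (haW R hR)
    simpa [map_ofNat] using this
  have hne : (-2 * Complex.I * (k:ℂ)) ≠ 0 := by simp [hk']
  have hconn : ∀ R, 0 < R → (u R : ℂ) = a * f R + conj a * conj (f R) := by
    intro R hR
    apply mul_left_cancel₀ hne
    linear_combination (-(u R : ℂ)) * hW R hR + f R * haW R hR - conj (f R) * hcW R hR
  have hconn' : ∀ R, 0 < R → (u' R : ℂ) = a * f' R + conj a * conj (f' R) := by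
    intro R hR
    apply mul_left_cancel₀ hne
    linear_combination (-(u' R : ℂ)) * hW R hR + f' R * haW R hR - conj (f' R) * hcW R hR
  have hlim : Tendsto (fun R => u' R ^ 2 + k^2 * u R ^ 2) atTop (𝓝 (4 * k^2 * ‖a‖^2)) := by
    have hN : Tendsto (fun R => ‖(u' R : ℂ) + Complex.I * k * u R‖) atTop (𝓝 (2 * k * ‖a‖)) := by
      have t1 : Tendsto (fun R : ℝ => 2 * k * ‖a‖ *
          ‖f R * Complex.exp (-Complex.I * (R : ℂ) * (k : ℂ))‖) atTop (𝓝 (2 * k * ‖a‖)) := by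
        simpa using hl.norm.const_mul (2 * k * ‖a‖)
      have t2 : Tendsto (fun R : ℝ => ‖(u' R : ℂ) + Complex.I * k * u R‖ - 2 * k * ‖a‖ *
          ‖f R * Complex.exp (-Complex.I * (R : ℂ) * (k : ℂ))‖) atTop (𝓝 0) := by
        have t3 : Tendsto (fun R : ℝ => 2 * ‖a‖ * ‖(f' R - Complex.I * k * f R) *
            Complex.exp (-Complex.I * (R : ℂ) * (k : ℂ))‖) atTop (𝓝 0) := by
          simpa using hD.norm.const_mul (2 * ‖a‖)
        refine squeeze_zero_norm' ?_ t3
        filter_upwards [eventually_gt_atTop 0] with R hR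
        rw [norm_mul, norm_mul, expnorm, mul_one, mul_one]
        have e : (u' R : ℂ) + Complex.I * k * u R = 2 * Complex.I * k * a * f R +
            (a * (f' R - Complex.I * k * f R) + conj (a * (f' R - Complex.I * k * f R))) := by
          rw [hconn R hR, hconn' R hR]; simp; ring
        have e2 : 2 * k * ‖a‖ * ‖f R‖ = ‖2 * Complex.I * k * a * f R‖ := by
          simp [abs_of_pos hk]
        rw [e2, e]
        refine (abs_norm_sub_norm_le _ _).trans ?_
        rw [add_sub_cancel_left]
        refine (norm_add_le _ _).trans ?_
        rw [RCLike.norm_conj, norm_mul]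
        linarith
      simpa using t2.add t1
    have := hN.pow 2
    have e : (2 * k * ‖a‖)^2 = 4 * k^2 * ‖a‖^2 := by ring
    rw [e] at this
    refine this.congr fun R => ?_
    rw [← Complex.normSq_eq_norm_sq, Complex.normSq_apply]
    simp; ring
  refine ⟨a, ?_, haW, hconn, hlim⟩
  intro h
  have hz : ∀ R, 0 < R → u R = 0 := by
    intro R hR
    have := hconn R hR
    rw [h] at this
    simpa using this
  have hd : HasDerivWithinAt u 0 (Set.Ici 0) 0 := by
    refine (hasDerivWithinAt_const (0:ℝ) (Set.Ici 0) (0:ℝ)).congr ?_ h0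
    intro x hx
    rcases (Set.mem_Ici.1 hx).eq_or_lt with h | h
    · rw [← h, h0]
    · exact hz x h
  have := (uniqueDiffWithinAt_Ici (0:ℝ)).eq_deriv _ hd (hu 0).hasDerivWithinAt
  rw [h1] at this
  exact zero_ne_one this

lemma a_bounds {x M y : ℝ} (hx : 0 < x) (hM : 1 ≤ M) (hy : 0 < y)
    (h1 : (2 * y * x)^2 ≤ M) (h2 : 1 ≤ (2 * y * x)^2 * M) : 
    (4 * M)⁻¹ ≤ y * x ∧ y * x ≤ M ∧ (4 * Real.pi * (y * x)^2)⁻¹ ≤ M ∧ 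
      (16 * M)⁻¹ ≤ (4 * Real.pi * (y * x)^2)⁻¹ := by
  set z := y * x with hz
  have hz0 : 0 < z := by positivity
  have hM0 : 0 < M := by linarith
  have e : (2 * y * x)^2 = 4 * z^2 := by rw [hz]; ring
  rw [e] at h1 h2
  have hpi := Real.pi_gt_three
  have hpi4 := Real.pi_lt_four
  refine ⟨?_, ?_, ?_, ?_⟩
  · rw [inv_le_iff_one_le_mul₀ (by positivity)]
    by_contra hc
    push Not at hc
    nlinarith [mul_pos hz0 hM0]
  · nlinarith
  · rw [inv_le_iff_one_le_mul₀ (by positivity)]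
    nlinarith [mul_pos (pow_pos hz0 2) hM0]
  · apply inv_anti₀ (by positivity)
    nlinarith [pow_pos hz0 2]

lemma exists_M : ∃ M : ℝ, 1 ≤ M ∧ Real.exp 30 ≤ M ∧ 1296 * Real.exp 1296 * Real.exp 15 ≤ M :=
  ⟨max 1 (max (Real.exp 30) (1296 * Real.exp 1296 * Real.exp 15)), le_max_left _ _,
    (le_max_left _ _).trans (le_max_right _ _), (le_max_right _ _).trans (le_max_right _ _)⟩

/-- Wronskian relations, the connection coefficient `a(ξ)`, its size, and the size of the
spectral density `ρ(ξ) = (4π√ξ|a(ξ)|²)⁻¹`. -/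
theorem connection_coefficient
    (φ : ℝ → ℝ → ℝ) (fp : ℝ → ℝ → ℂ)
    -- φ(·,ξ) is the regular solution: φ(0,ξ)=0, ∂_Rφ(0,ξ)=1
    (hφ : ∀ ξ : ℝ, 0 < ξ →
      φ ξ 0 = 0 ∧ deriv (φ ξ) 0 = 1 ∧
      (∀ R : ℝ, HasDerivAt (φ ξ) (deriv (φ ξ) R) R) ∧
      (∀ R : ℝ, HasDerivAt (deriv (φ ξ)) (deriv (deriv (φ ξ)) R) R) ∧
      (∀ R : ℝ, - deriv (deriv (φ ξ)) R - (5 / (1 + R ^ 2 / 3) ^ 2) * φ ξ R = ξ * φ ξ R))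
    -- fp(·,ξ) is the Jost solution: solves the equation on (0,∞) with e^{iR√ξ} asymptotics
    (hfp : ∀ ξ : ℝ, 0 < ξ →
      (∀ R ∈ Set.Ioi (0 : ℝ), HasDerivAt (fp ξ) (deriv (fp ξ) R) R) ∧
      (∀ R ∈ Set.Ioi (0 : ℝ), HasDerivAt (deriv (fp ξ)) (deriv (deriv (fp ξ)) R) R) ∧
      (∀ R ∈ Set.Ioi (0 : ℝ),
        - deriv (deriv (fp ξ)) R - (5 / (1 + (R : ℂ) ^ 2 / 3) ^ 2) * fp ξ R
          = (ξ : ℂ) * fp ξ R) ∧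
      Tendsto (fun R : ℝ =>
        fp ξ R * Complex.exp (-Complex.I * (R : ℂ) * (Real.sqrt ξ : ℂ))) atTop (𝓝 1)) :
    -- (i) W(f₊, f₋) = -2i√ξ
    (∀ ξ : ℝ, 0 < ξ → ∀ R : ℝ, 0 < R →
      fp ξ R * conj (deriv (fp ξ) R) - deriv (fp ξ) R * conj (fp ξ R)
        = -2 * Complex.I * (Real.sqrt ξ : ℂ)) ∧
    -- (ii), (iii)
    (∃ a : ℝ → ℂ,
      (∀ ξ : ℝ, 0 < ξ →
        a ξ ≠ 0 ∧
        -- a(ξ) = W(φ(·,ξ), f₋(·,ξ)) / (-2i√ξ), the Wronskian being constant in R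
        (∀ R : ℝ, 0 < R →
          (φ ξ R : ℂ) * conj (deriv (fp ξ) R) - ((deriv (φ ξ) R : ℝ) : ℂ) * conj (fp ξ R)
            = (-2 * Complex.I * (Real.sqrt ξ : ℂ)) * a ξ) ∧
        -- the connection formula φ = a f₊ + conj(a) f₋
        (∀ R : ℝ, 0 < R →
          (φ ξ R : ℂ) = a ξ * fp ξ R + conj (a ξ) * conj (fp ξ R))) ∧
      -- size of a(ξ) and of the spectral density ρ(ξ) = (4π√ξ|a(ξ)|²)⁻¹
      ∃ c C : ℝ, 0 < c ∧ c ≤ C ∧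
        (∀ ξ : ℝ, 0 < ξ → ξ ≤ 1 → c ≤ ‖a ξ‖ ∧ ‖a ξ‖ ≤ C) ∧
        (∀ ξ : ℝ, 1 ≤ ξ → c / Real.sqrt ξ ≤ ‖a ξ‖ ∧ ‖a ξ‖ ≤ C / Real.sqrt ξ) ∧
        (∀ ξ : ℝ, 0 < ξ → ξ ≤ 1 →
          c / Real.sqrt ξ ≤ (4 * Real.pi * Real.sqrt ξ * ‖a ξ‖ ^ 2)⁻¹ ∧
          (4 * Real.pi * Real.sqrt ξ * ‖a ξ‖ ^ 2)⁻¹ ≤ C / Real.sqrt ξ) ∧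
        (∀ ξ : ℝ, 1 ≤ ξ →
          c * Real.sqrt ξ ≤ (4 * Real.pi * Real.sqrt ξ * ‖a ξ‖ ^ 2)⁻¹ ∧
          (4 * Real.pi * Real.sqrt ξ * ‖a ξ‖ ^ 2)⁻¹ ≤ C * Real.sqrt ξ)) := by
  obtain ⟨M, hM1, hM2, hM3⟩ := exists_M
  have hM0 : 0 < M := by linarith
  have main : ∀ ξ : ℝ, 0 < ξ → 
      (∀ R : ℝ, 0 < R → fp ξ R * conj (deriv (fp ξ) R) - deriv (fp ξ) R * conj (fp ξ R)
        = -2 * Complex.I * (Real.sqrt ξ : ℂ)) ∧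
      ∃ a : ℂ, a ≠ 0 ∧
        (∀ R : ℝ, 0 < R →
          (φ ξ R : ℂ) * conj (deriv (fp ξ) R) - ((deriv (φ ξ) R : ℝ) : ℂ) * conj (fp ξ R)
            = (-2 * Complex.I * (Real.sqrt ξ : ℂ)) * a) ∧
        (∀ R : ℝ, 0 < R → (φ ξ R : ℂ) = a * fp ξ R + conj a * conj (fp ξ R)) ∧
        (ξ ≤ 1 → (2 * 1 * ‖a‖)^2 ≤ M ∧ 1 ≤ (2 * 1 * ‖a‖)^2 * M) ∧
        (1 ≤ ξ → (2 * Real.sqrt ξ * ‖a‖)^2 ≤ M ∧ 1 ≤ (2 * Real.sqrt ξ * ‖a‖)^2 * M) := by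
    intro ξ hξ
    obtain ⟨h0, h1, hu, hu2, hode⟩ := hφ ξ hξ
    obtain ⟨hf, hf2, hfode, hl⟩ := hfp ξ hξ
    have hk : 0 < Real.sqrt ξ := Real.sqrt_pos.2 hξ
    have hk2 : Real.sqrt ξ ^ 2 = ξ := Real.sq_sqrt hξ.le
    set k := Real.sqrt ξ with hkd
    have hk2c : (k:ℂ)^2 = (ξ:ℂ) := by rw [← hk2]; push_cast; ring
    have hu' : ∀ R, HasDerivAt (deriv (φ ξ)) (-((k^2 + 5 / (1 + R^2/3)^2) * φ ξ R)) R := fun R =>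
      (hu2 R).congr_deriv (by rw [hk2]; linear_combination - hode R)
    have hf' : ∀ R : ℝ, 0 < R → HasDerivAt (deriv (fp ξ))
        (-(((k:ℂ)^2 + 5 / (1 + (R:ℂ)^2/3)^2) * fp ξ R)) R := fun R hR =>
      (hf2 R hR).congr_deriv (by rw [hk2c]; linear_combination - hfode R hR)
    obtain ⟨hW, a, ha, haW, hconn, hlim⟩ := per_k hk h0 h1 hu hu' hf hf' hl
    refine ⟨hW, a, ha, haW, hconn, ?_, ?_⟩
    · intro hξ1
      have hk1 : k ≤ 1 := Real.sqrt_le_one.2 hξ1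
      obtain ⟨l1, l2⟩ := low hk hk1 h0 h1 hu hu' hlim
      have hkk : 0 < k^2 := by positivity
      have m1 := mul_le_mul_of_nonneg_left hM3 hkk.le
      have m2 := mul_le_mul_of_nonneg_left hM3 (by positivity : 0 ≤ 4 * k^2 * ‖a‖^2)
      constructor
      · refine le_of_mul_le_mul_left ?_ hkk
        calc k^2 * (2 * 1 * ‖a‖)^2 = 4 * k^2 * ‖a‖^2 := by ring
          _ ≤ _ := l1.trans m1
      · refine le_of_mul_le_mul_left ?_ hkk
        calc k^2 * 1 = k^2 := by ring
          _ ≤ _ := l2.trans m2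
          _ = _ := by ring
    · intro hξ1
      have hk1 : 1 ≤ k := Real.one_le_sqrt.2 hξ1
      obtain ⟨l1, l2⟩ := high hk1 h0 h1 hu hu' hlim
      have m2 := mul_le_mul_of_nonneg_left hM2 (by positivity : 0 ≤ 4 * k^2 * ‖a‖^2)
      have e : (2 * k * ‖a‖)^2 = 4 * k^2 * ‖a‖^2 := by ring
      rw [e]
      exact ⟨l1.trans hM2, l2.trans m2⟩
  refine ⟨fun ξ hξ => (main ξ hξ).1, ?_⟩
  have main2 : ∀ ξ : ℝ, ∃ a : ℂ, 0 < ξ → a ≠ 0 ∧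
        (∀ R : ℝ, 0 < R →
          (φ ξ R : ℂ) * conj (deriv (fp ξ) R) - ((deriv (φ ξ) R : ℝ) : ℂ) * conj (fp ξ R)
            = (-2 * Complex.I * (Real.sqrt ξ : ℂ)) * a) ∧
        (∀ R : ℝ, 0 < R → (φ ξ R : ℂ) = a * fp ξ R + conj a * conj (fp ξ R)) ∧
        (ξ ≤ 1 → (2 * 1 * ‖a‖)^2 ≤ M ∧ 1 ≤ (2 * 1 * ‖a‖)^2 * M) ∧
        (1 ≤ ξ → (2 * Real.sqrt ξ * ‖a‖)^2 ≤ M ∧ 1 ≤ (2 * Real.sqrt ξ * ‖a‖)^2 * M) := by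
    intro ξ
    by_cases hξ : 0 < ξ
    · obtain ⟨a, ha⟩ := (main ξ hξ).2
      exact ⟨a, fun _ => ha⟩
    · exact ⟨0, fun h => absurd h hξ⟩
  choose a ha using main2
  have hc4 : (16 * M)⁻¹ ≤ (4 * M)⁻¹ := inv_anti₀ (by positivity) (by linarith)
  refine ⟨a, fun ξ hξ => ⟨(ha ξ hξ).1, (ha ξ hξ).2.1, (ha ξ hξ).2.2.1⟩, (16 * M)⁻¹, M,
    by positivity, ?_, ?_, ?_, ?_, ?_⟩
  · rw [inv_le_iff_one_le_mul₀ (by positivity)]; nlinarith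
  · intro ξ hξ hξ1
    have h := ha ξ hξ
    obtain ⟨b1, b2⟩ := h.2.2.2.1 hξ1
    obtain ⟨c1, c2, -, -⟩ := a_bounds (norm_pos_iff.2 h.1) hM1 one_pos b1 b2
    rw [one_mul] at c1 c2
    exact ⟨hc4.trans c1, c2⟩
  · intro ξ hξ1
    have hξ : 0 < ξ := by linarith
    have h := ha ξ hξ
    have hk : 0 < Real.sqrt ξ := Real.sqrt_pos.2 hξ
    obtain ⟨b1, b2⟩ := h.2.2.2.2 hξ1
    obtain ⟨c1, c2, -, -⟩ := a_bounds (norm_pos_iff.2 h.1) hM1 hk b1 b2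
    rw [div_le_iff₀ hk, le_div_iff₀ hk, mul_comm ‖a ξ‖]
    exact ⟨hc4.trans c1, c2⟩
  · intro ξ hξ hξ1
    have h := ha ξ hξ
    have hk : 0 < Real.sqrt ξ := Real.sqrt_pos.2 hξ
    obtain ⟨b1, b2⟩ := h.2.2.2.1 hξ1
    obtain ⟨-, -, c3, c4⟩ := a_bounds (norm_pos_iff.2 h.1) hM1 one_pos b1 b2
    rw [one_mul] at c3 c4
    have hn : 0 < ‖a ξ‖ := norm_pos_iff.2 h.1
    have e : (4 * Real.pi * Real.sqrt ξ * ‖a ξ‖ ^ 2)⁻¹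
        = (4 * Real.pi * ‖a ξ‖ ^ 2)⁻¹ / Real.sqrt ξ := by
      field_simp
    rw [e]
    exact ⟨div_le_div_of_nonneg_right c4 hk.le, div_le_div_of_nonneg_right c3 hk.le⟩
  · intro ξ hξ1
    have hξ : 0 < ξ := by linarith
    have h := ha ξ hξ
    have hk : 0 < Real.sqrt ξ := Real.sqrt_pos.2 hξ
    obtain ⟨b1, b2⟩ := h.2.2.2.2 hξ1
    obtain ⟨-, -, c3, c4⟩ := a_bounds (norm_pos_iff.2 h.1) hM1 hk b1 b2
    have hn : 0 < ‖a ξ‖ := norm_pos_iff.2 h.1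
    have e : (4 * Real.pi * Real.sqrt ξ * ‖a ξ‖ ^ 2)⁻¹
        = (4 * Real.pi * (Real.sqrt ξ * ‖a ξ‖) ^ 2)⁻¹ * Real.sqrt ξ := by
      field_simp
    rw [e]
    exact ⟨mul_le_mul_of_nonneg_right c4 hk.le, mul_le_mul_of_nonneg_right c3 hk.le⟩

end ConnectionCoefficient
end
end
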